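/- Let f = Σ_{λ∈Λ} Σ_n p_n(λ) δ_λ^{(n)} be a tempered distribution on ℝ, where δ_λ^{(n)} is the n-th derivative of the Dirac delta at λ, such that Λ = supp f and Γ = supp f̂ are uniformly discrete. Then there exist a lattice L = αℤ with α > 0, a finite set of quadruples (τ, ω, l, n) with τ, ω real numbers and l, n nonnegative integers, and complex numbers c(τ,ω,l,n), such that f = Σ_{(τ,ω,l,n)} c(τ,ω,l,n) Σ_{λ∈L} λ^l e^{2πiλω} δ_{λ+τ}^{(n)}. -/

import Mathlib

open MeasureTheory SchwartzMap Metric Set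
open scoped Pointwise ENNReal NNReal

noncomputable section

/-- The space `S*(ℝ)` of tempered distributions on the real line. -/
abbrev TemperedDistR : Type := SchwartzMap ℝ ℂ →L[ℂ] ℂ

/-- The Fourier transform of a tempered distribution on `ℝ`: `f̂(φ) = f(φ̂)`. -/
def fourierTDR (f : TemperedDistR) : TemperedDistR :=
  f.comp (fourierTransformCLM ℂ)

/-- The support of a tempered distribution on `ℝ`. -/
def tdSupportR (f : TemperedDistR) : Set ℝ :=
  {x | ∀ U : Set ℝ, IsOpen U → x ∈ U →
    ∃ φ : SchwartzMap ℝ ℂ, HasCompactSupport (⇑φ) ∧ tsupport (⇑φ) ⊆ U ∧ f φ ≠ 0}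

/-- A set in `ℝ` is locally finite if its intersection with every ball is finite. -/
def LocFiniteR (A : Set ℝ) : Prop :=
  ∀ (x : ℝ) (r : ℝ), (A ∩ Metric.ball x r).Finite

/-- A set in `ℝ` is uniformly discrete if distances between distinct points
are bounded below by a positive constant. -/
def UniformlyDiscreteR (A : Set ℝ) : Prop :=
  ∃ η > (0:ℝ), ∀ x ∈ A, ∀ y ∈ A, x ≠ y → η ≤ dist x y

/-- The exponential `e^{2πixw}`. -/
def e2piR (x w : ℝ) : ℂ :=
  Complex.exp (((2 * Real.pi * (x * w) : ℝ) : ℂ) * Complex.I)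

/-- A trigonometric polynomial on `ℝ`: a finite sum `Σ c_ω e^{2πixω}`. -/
def IsTrigPolyR (P : ℝ → ℂ) : Prop :=
  ∃ (n : ℕ) (cc : Fin n → ℂ) (w : Fin n → ℝ),
    ∀ x, P x = ∑ i, cc i * e2piR x (w i)

/-- The pure point measure `μ = Σ_λ a(λ) δ_λ` on `ℝ` belongs to `S*(ℝ)` and is
represented there by the tempered distribution `f`. -/
def RepMeasureR (a : ℝ → ℂ) (f : TemperedDistR) : Prop :=
  {x | a x ≠ 0}.Countable ∧
  (∀ φ : SchwartzMap ℝ ℂ, Summable fun lam => ‖a lam‖ * ‖φ lam‖) ∧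
  (∀ φ : SchwartzMap ℝ ℂ, f φ = ∑' lam, a lam * φ lam)
section qcsec
open Filter Topology
open scoped FourierTransform ContDiff

/-- bundled iterated derivative -/
def qcD (n : ℕ) (φ : SchwartzMap ℝ ℂ) : SchwartzMap ℝ ℂ := (derivCLM ℂ ℂ)^[n] φ

lemma qcD_coe (n : ℕ) (φ : SchwartzMap ℝ ℂ) : ⇑(qcD n φ) = iteratedDeriv n φ := by
  induction n with
  | zero => simp [qcD]
  | succ k ih =>
    ext x
    have : qcD (k+1) φ = derivCLM ℂ ℂ (qcD k φ) := by
      simp only [qcD, Function.iterate_succ_apply']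
    rw [this, derivCLM_apply, ih, iteratedDeriv_succ]

lemma qcD_apply (n : ℕ) (φ : SchwartzMap ℝ ℂ) (x : ℝ) : qcD n φ x = iteratedDeriv n φ x := by
  rw [qcD_coe]

lemma qc_cd (φ : SchwartzMap ℝ ℂ) (n : ℕ) : ContDiff ℝ n φ := φ.smooth n

lemma qc_decay (φ : SchwartzMap ℝ ℂ) (A B : ℕ) : ∃ M > (0:ℝ), ∀ l ≤ A, ∀ x : ℝ,
    (1 + |x|) ^ B * ‖iteratedDeriv l φ x‖ ≤ M := by
  refine ⟨2 ^ B * ((Finset.Iic (B, A)).sup fun m => SchwartzMap.seminorm ℂ m.1 m.2) φ + 1, by positivity, ?_⟩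
  intro l hl x
  have := one_add_le_sup_seminorm_apply (𝕜 := ℂ) (m := (B, A)) (k := B) (n := l) le_rfl hl φ x
  rw [norm_iteratedFDeriv_eq_norm_iteratedDeriv, Real.norm_eq_abs] at this
  exact this.trans (by simp)


lemma qc_bound (f : TemperedDistR) : ∃ C ≥ (0:ℝ), ∃ A : ℕ, ∀ (φ : SchwartzMap ℝ ℂ) (M : ℝ),
    (∀ l ≤ A, ∀ x : ℝ, (1 + |x|) ^ A * ‖iteratedDeriv l φ x‖ ≤ M) → ‖f φ‖ ≤ C * M := by
  let q : Seminorm ℂ (SchwartzMap ℝ ℂ) := (normSeminorm ℂ ℂ).comp f.toLinearMap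
  have hq : Continuous q := continuous_norm.comp f.continuous
  obtain ⟨s, C, -, hC⟩ := Seminorm.bound_of_continuous (schwartz_withSeminorms ℂ ℝ ℂ) q hq
  let A := s.sup (fun m => max m.1 m.2)
  refine ⟨C, C.2, A, ?_⟩
  intro φ M hM
  have h0 : 0 ≤ M := le_trans (by positivity) (hM 0 (Nat.zero_le _) 0)
  have h1 : ‖f φ‖ ≤ C * (s.sup (schwartzSeminormFamily ℂ ℝ ℂ)) φ := hC φ
  refine h1.trans (mul_le_mul_of_nonneg_left ?_ C.2)
  refine Seminorm.finset_sup_apply_le h0 ?_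
  intro m hm
  have hmA : max m.1 m.2 ≤ A := Finset.le_sup (f := fun m : ℕ × ℕ => max m.1 m.2) hm
  refine seminorm_le_bound' ℂ m.1 m.2 φ h0 ?_
  intro x
  refine le_trans ?_ (hM m.2 (le_trans (le_max_right _ _) hmA) x)
  refine mul_le_mul_of_nonneg_right ?_ (norm_nonneg _)
  calc |x| ^ m.1 ≤ (1 + |x|) ^ m.1 := by gcongr; linarith
    _ ≤ (1 + |x|) ^ A := pow_le_pow_right₀ (by linarith [abs_nonneg x]) (le_trans (le_max_left _ _) hmA)

/-- product of Schwartz functions -/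
def qcP (φ ψ : SchwartzMap ℝ ℂ) : SchwartzMap ℝ ℂ := smulLeftCLM ℂ φ ψ

lemma qcP_apply (φ ψ : SchwartzMap ℝ ℂ) (x : ℝ) : qcP φ ψ x = φ x * ψ x := by
  simp [qcP, smulLeftCLM_apply_apply φ.hasTemperateGrowth]

lemma qcP_coe (φ ψ : SchwartzMap ℝ ℂ) : ⇑(qcP φ ψ) = fun x => φ x * ψ x :=
  funext (qcP_apply φ ψ)

lemma qcP_deriv (φ ψ : SchwartzMap ℝ ℂ) (n : ℕ) (x : ℝ) : iteratedDeriv n (qcP φ ψ) x =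
    ∑ i ∈ Finset.range (n + 1), (n.choose i : ℂ) * iteratedDeriv i φ x * iteratedDeriv (n - i) ψ x := by
  rw [qcP_coe]
  exact iteratedDeriv_fun_mul (qc_cd φ n).contDiffAt (qc_cd ψ n).contDiffAt

/-- multiplication by temperate function -/
lemma qcM_apply (g : ℝ → ℂ) (hg : g.HasTemperateGrowth) (ψ : SchwartzMap ℝ ℂ) (x : ℝ) :
    smulLeftCLM ℂ g ψ x = g x * ψ x := by
  simp [smulLeftCLM_apply_apply hg]

/-- affine change of variables `x ↦ φ (a (x - s))` -/
def qcS (a : ℝˣ) (s : ℝ) : SchwartzMap ℝ ℂ →L[ℂ] SchwartzMap ℝ ℂ :=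
  (compSubConstCLM ℂ s).comp
    (compCLMOfContinuousLinearEquiv ℂ (ContinuousLinearEquiv.unitsEquivAut ℝ a))

lemma qcS_apply (a : ℝˣ) (s : ℝ) (φ : SchwartzMap ℝ ℂ) (x : ℝ) :
    qcS a s φ x = φ (a * (x - s)) := by
  simp [qcS, compSubConstCLM_apply, mul_comm]

lemma qc_iter_aff (φ : SchwartzMap ℝ ℂ) (a s : ℝ) (n : ℕ) :
    iteratedDeriv n (fun x => φ (a * (x - s))) = fun x => (a:ℂ) ^ n * iteratedDeriv n φ (a * (x - s)) := by
  induction n with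
  | zero => simp
  | succ k ih =>
    ext x
    rw [iteratedDeriv_succ, ih]
    have h1 : HasDerivAt (iteratedDeriv k φ) (iteratedDeriv (k+1) φ (a * (x - s))) (a * (x - s)) := by
      rw [← qcD_coe, iteratedDeriv_succ, ← qcD_coe]
      exact (qcD k φ).hasDerivAt _
    have h2 : HasDerivAt (fun x => a * (x - s)) a x := by
      simpa using ((hasDerivAt_id x).sub_const s).const_mul a
    have h3 := (h1.scomp x h2).const_mul ((a:ℂ)^k)
    rw [show (fun x => (a:ℂ)^k * iteratedDeriv k φ (a * (x - s))) =
      fun x => (a:ℂ)^k * (iteratedDeriv k φ ∘ fun x => a * (x - s)) x from rfl, h3.deriv]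
    simp only [Complex.real_smul]; ring

lemma qcS_deriv (a : ℝˣ) (s : ℝ) (φ : SchwartzMap ℝ ℂ) (n : ℕ) (x : ℝ) :
    iteratedDeriv n (qcS a s φ) x = ((a:ℝ):ℂ) ^ n * iteratedDeriv n φ (a * (x - s)) := by
  rw [show ⇑(qcS a s φ) = fun x => φ (a * (x - s)) from funext (qcS_apply a s φ), qc_iter_aff]

lemma qc_exists_bump : ∃ χ : SchwartzMap ℝ ℂ, (∀ x, |x| ≤ 1 → χ x = 1) ∧ (∀ x, 2 ≤ |x| → χ x = 0) := by
  let b : ContDiffBump (0:ℝ) := ⟨1, 2, by norm_num, by norm_num⟩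
  have hcs : HasCompactSupport (fun x => ((b x : ℝ) : ℂ)) := by
    refine b.hasCompactSupport.comp_left (g := fun x : ℝ => (x : ℂ)) ?_
    simp
  have hsm : ContDiff ℝ ∞ (fun x => ((b x : ℝ) : ℂ)) := Complex.ofRealCLM.contDiff.comp b.contDiff
  refine ⟨hcs.toSchwartzMap hsm, ?_, ?_⟩
  · intro x hx
    have : b x = 1 := b.one_of_mem_closedBall (by simpa using hx)
    change ((b x : ℝ) : ℂ) = 1
    simp [this]
  · intro x hx
    have : b x = 0 := b.zero_of_le_dist (by simpa [Real.dist_eq] using hx)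
    change ((b x : ℝ) : ℂ) = 0
    simp [this]

lemma qc_S0 (f : TemperedDistR) (φ : SchwartzMap ℝ ℂ) (hc : HasCompactSupport φ)
    (hd : Disjoint (tsupport φ) (tdSupportR f)) : f φ = 0 := by
  have hx : ∀ x : tsupport φ, ∃ U : Set ℝ, IsOpen U ∧ (x:ℝ) ∈ U ∧
      ∀ ψ : SchwartzMap ℝ ℂ, HasCompactSupport ψ → tsupport ψ ⊆ U → f ψ = 0 := by
    intro x
    have := Set.disjoint_left.1 hd x.2
    simp only [tdSupportR, Set.mem_ofPred_eq, not_forall, not_exists, not_and, not_not] at this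
    obtain ⟨U, hU, hxU, h⟩ := this
    exact ⟨U, hU, hxU, h⟩
  choose U hU hxU hv using hx
  obtain ⟨ρ, hρ⟩ := SmoothPartitionOfUnity.exists_isSubordinate (modelWithCornersSelf ℝ ℝ)
    (isClosed_tsupport φ) U hU (fun x hx => Set.mem_iUnion.2 ⟨⟨x, hx⟩, hxU ⟨x, hx⟩⟩)
  have hfin : {i | (Function.support (ρ i) ∩ tsupport φ).Nonempty}.Finite :=
    ρ.locallyFinite.finite_nonempty_inter_compact hc
  have hsm : ∀ i, ContDiff ℝ ∞ (fun x => ((ρ i x : ℝ) : ℂ)) := fun i =>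
    Complex.ofRealCLM.contDiff.comp ((ρ i).contMDiff.contDiff)
  have hsm2 : ∀ i, ContDiff ℝ ∞ (fun x => ((ρ i x : ℝ) : ℂ) * φ x) := fun i =>
    (hsm i).mul (φ.smooth ⊤)
  have hcs : ∀ i, HasCompactSupport (fun x => ((ρ i x : ℝ) : ℂ) * φ x) := fun i => hc.mul_left
  let ψ : tsupport φ → SchwartzMap ℝ ℂ := fun i => (hcs i).toSchwartzMap (hsm2 i)
  have hψc : ∀ i, ⇑(ψ i) = fun x => ((ρ i x : ℝ) : ℂ) * φ x := fun i => rfl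
  have hψ : ∀ i, f (ψ i) = 0 := by
    intro i
    refine hv i (ψ i) (by rw [hψc]; exact hcs i) ?_
    refine subset_trans ?_ (hρ i)
    rw [hψc]
    refine (tsupport_mul_subset_left (f := fun x => ((ρ i x : ℝ) : ℂ))).trans ?_
    refine closure_mono ?_
    intro x hx
    simpa using hx
  have hsum : φ = ∑ i ∈ hfin.toFinset, ψ i := by
    ext x
    have e1 : (∑ i ∈ hfin.toFinset, ψ i) x = ∑ i ∈ hfin.toFinset, ((ρ i x : ℝ) : ℂ) * φ x := by
      rw [sum_apply]; exact Finset.sum_congr rfl fun i _ => congrFun (hψc i) x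
    rw [e1, ← Finset.sum_mul]
    by_cases h : x ∈ tsupport φ
    · have h1 : ∑ i ∈ hfin.toFinset, ρ i x = 1 := by
        rw [← ρ.sum_eq_one h]
        refine (finsum_eq_sum_of_support_subset _ ?_).symm
        intro i hi
        simp only [Set.Finite.coe_toFinset, Set.mem_ofPred_eq]
        exact ⟨x, hi, h⟩
      rw [← Complex.ofReal_sum, h1]; simp
    · rw [image_eq_zero_of_notMem_tsupport h]; simp
  rw [hsum, map_sum]
  exact Finset.sum_eq_zero fun i _ => hψ i


def qcSep (η : ℝ) (A : Set ℝ) : Prop := 0 < η ∧ ∀ x ∈ A, ∀ y ∈ A, x ≠ y → η ≤ |x - y|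

lemma qc_hasDeriv (φ : SchwartzMap ℝ ℂ) (k : ℕ) (x : ℝ) :
    HasDerivAt (iteratedDeriv k φ) (iteratedDeriv (k+1) φ x) x := by
  rw [← qcD_coe, iteratedDeriv_succ, ← qcD_coe]
  exact (qcD k φ).hasDerivAt _

lemma qc_taylor (φ : SchwartzMap ℝ ℂ) (A : ℕ) (s : ℝ) (hj : ∀ l ≤ A, iteratedDeriv l φ s = 0) :
    ∃ C > (0:ℝ), ∀ k j, j + k = A + 1 → ∀ x, ‖iteratedDeriv j φ x‖ ≤ C * |x - s| ^ k := by
  obtain ⟨C, hC, hM⟩ := qc_decay φ (A+1) 0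
  refine ⟨C, hC, ?_⟩
  intro k
  induction k with
  | zero =>
    intro j hjk x
    have := hM j (by omega) x
    simpa using this
  | succ k ih =>
    intro j hjk x
    have h1 : ∀ y ∈ uIcc s x, ‖iteratedDeriv (j+1) φ y‖ ≤ C * |x - s| ^ k := by
      intro y hy
      refine (ih (j+1) (by omega) y).trans ?_
      have := abs_sub_left_of_mem_uIcc hy
      gcongr
    have h2 := (convex_uIcc s x).norm_image_sub_le_of_norm_hasDerivWithin_le
      (fun y _ => (qc_hasDeriv φ j y).hasDerivWithinAt) h1 left_mem_uIcc right_mem_uIcc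
    rw [hj j (by omega), sub_zero, Real.norm_eq_abs] at h2
    rw [pow_succ, ← mul_assoc]; exact h2

lemma qc_iter_zero_of_ev (φ : ℝ → ℂ) (x : ℝ) (h : φ =ᶠ[𝓝 x] 0) (n : ℕ) : iteratedDeriv n φ x = 0 := by
  have h1 : φ =ᶠ[𝓝 x] fun _ => (0:ℂ) := h
  rw [h1.iteratedDeriv_eq, iteratedDeriv_const]; simp

lemma qc_bump_small (f : TemperedDistR) (C : ℝ) (hC : 0 ≤ C) (A : ℕ)
    (hb : ∀ (φ : SchwartzMap ℝ ℂ) (M : ℝ),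
    (∀ l ≤ A, ∀ x : ℝ, (1 + |x|) ^ A * ‖iteratedDeriv l φ x‖ ≤ M) → ‖f φ‖ ≤ C * M)
    (χ : SchwartzMap ℝ ℂ) (hχ2 : ∀ x, 2 ≤ |x| → χ x = 0)
    (φ : SchwartzMap ℝ ℂ) (s : ℝ) (hj : ∀ l ≤ A, iteratedDeriv l φ s = 0) :
    ∃ M : ℝ, ∀ ε : ℝˣ, 0 < (ε:ℝ) → (ε:ℝ) ≤ 1 → ‖f (qcP (qcS ε⁻¹ s χ) φ)‖ ≤ M * ε := by
  obtain ⟨D, hD, hT⟩ := qc_taylor φ A s hj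
  obtain ⟨X, hX, hXb⟩ := qc_decay χ A 0
  refine ⟨C * ((1 + (|s| + 2)) ^ A * ∑ i ∈ Finset.range (A+1), 2 ^ A * X * (D * 2 ^ (A + 1))), ?_⟩
  intro ε h0 h1
  have h2 : ‖f (qcP (qcS ε⁻¹ s χ) φ)‖ ≤ C * ((1 + (|s| + 2)) ^ A * (∑ i ∈ Finset.range (A+1), 2 ^ A * X * (D * 2 ^ (A + 1))) * ε) := by
    apply hb
    intro l hl x
    by_cases hx : |x - s| ≤ 2 * ε
    · have hxs : |x| ≤ |s| + 2 := by
        have : |x| ≤ |x - s| + |s| := by simpa using abs_add_le (x - s) s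
        linarith
      rw [mul_assoc]
      gcongr
      rw [qcP_deriv, Finset.sum_mul]
      refine (norm_sum_le _ _).trans ?_
      refine (Finset.sum_le_sum_of_subset_of_nonneg (t := Finset.range (A+1)) (f := fun i =>
        2 ^ A * X * (D * 2 ^ (A + 1)) * ε) ?_ ?_).trans' (Finset.sum_le_sum ?_)
      · intro i; simp only [Finset.mem_range]; omega
      · intros; positivity
      · intro i hi
        have hil : i ≤ l := by simpa [Nat.lt_succ_iff] using hi
        rw [norm_mul, norm_mul, qcS_deriv]
        have e1 : ‖((l.choose i : ℕ) : ℂ)‖ ≤ 2 ^ A := by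
          rw [Complex.norm_natCast]
          have : l.choose i ≤ 2 ^ l := Nat.choose_le_two_pow l i
          have h3 : (2:ℕ) ^ l ≤ 2 ^ A := Nat.pow_le_pow_right (by norm_num) hl
          exact_mod_cast this.trans h3
        have e2 : ‖(((ε⁻¹ : ℝˣ) : ℝ) : ℂ) ^ i * iteratedDeriv i χ ((ε⁻¹ : ℝˣ) * (x - s))‖ ≤ (ε:ℝ)⁻¹ ^ i * X := by
          rw [norm_mul, norm_pow]
          have := hXb i (by omega) ((ε⁻¹ : ℝˣ) * (x - s))
          simp only [pow_zero, one_mul] at this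
          have h4 : ‖(((ε⁻¹ : ℝˣ) : ℝ) : ℂ)‖ = (ε:ℝ)⁻¹ := by
            simp [abs_of_pos h0]
          rw [h4]; gcongr
        have e3 : ‖iteratedDeriv (l - i) φ x‖ ≤ D * (2 ^ (A+1) * ((ε:ℝ) * ε ^ i)) := by
          refine (hT (A + 1 - (l - i)) (l - i) (by omega) x).trans ?_
          gcongr
          calc |x - s| ^ (A + 1 - (l - i)) ≤ (2 * ε) ^ (A + 1 - (l - i)) := by gcongr
            _ = 2 ^ (A + 1 - (l - i)) * (ε:ℝ) ^ (A + 1 - (l - i)) := by rw [mul_pow]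
            _ ≤ 2 ^ (A + 1) * (ε:ℝ) ^ (i + 1) := by
              refine mul_le_mul ?_ ?_ (by positivity) (by positivity)
              · exact pow_le_pow_right₀ (by norm_num) (by omega)
              · exact pow_le_pow_of_le_one h0.le h1 (by omega)
            _ = _ := by ring
        calc _ ≤ 2 ^ A * ((ε:ℝ)⁻¹ ^ i * X) * (D * (2 ^ (A+1) * ((ε:ℝ) * ε ^ i))) := by gcongr
          _ = 2 ^ A * X * (D * 2 ^ (A + 1)) * ε * ((ε:ℝ)⁻¹ ^ i * ε ^ i) := by ring
          _ = _ := by rw [← mul_pow, inv_mul_cancel₀ h0.ne', one_pow, mul_one]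
    · have : iteratedDeriv l (qcP (qcS ε⁻¹ s χ) φ) x = 0 := by
        apply qc_iter_zero_of_ev
        have : ∀ᶠ y in 𝓝 x, 2 * (ε:ℝ) < |y - s| := by
          have hcont : Continuous fun y : ℝ => |y - s| := by fun_prop
          exact hcont.continuousAt.eventually (lt_mem_nhds (not_le.1 hx))
        filter_upwards [this] with y hy
        rw [qcP_apply, qcS_apply, hχ2, zero_mul]; rfl
        rw [abs_mul, Units.val_inv_eq_inv_val, abs_of_pos (inv_pos.2 h0), ← div_eq_inv_mul, le_div_iff₀ h0]
        exact hy.le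
      rw [this]; simp; positivity
  rw [← mul_assoc] at h2
  exact h2

lemma qc_fin_of_sep {η : ℝ} {Λ : Set ℝ} (h : qcSep η Λ) (a b : ℝ) : (Λ ∩ Icc a b).Finite := by
  have hinj : Set.InjOn (fun x : ℝ => ⌊x / η⌋) (Λ ∩ Icc a b) := by
    intro x hx y hy hxy
    by_contra hne
    have h1 := h.2 x hx.1 y hy.1 hne
    have h2 := Int.abs_sub_lt_one_of_floor_eq_floor hxy
    rw [← sub_div, abs_div, abs_of_pos h.1, div_lt_one h.1] at h2
    linarith
  refine Set.Finite.of_finite_image ((Set.finite_Icc ⌊a / η⌋ ⌊b / η⌋).subset ?_) hinj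
  rintro _ ⟨x, hx, rfl⟩
  have := h.1
  exact ⟨Int.floor_le_floor (by gcongr; exact hx.2.1), Int.floor_le_floor (by gcongr; exact hx.2.2)⟩


lemma qc_S1 (f : TemperedDistR) (C : ℝ) (hC : 0 ≤ C) (A : ℕ)
    (hb : ∀ (φ : SchwartzMap ℝ ℂ) (M : ℝ),
    (∀ l ≤ A, ∀ x : ℝ, (1 + |x|) ^ A * ‖iteratedDeriv l φ x‖ ≤ M) → ‖f φ‖ ≤ C * M)
    {η : ℝ} (hs : qcSep η (tdSupportR f)) (φ : SchwartzMap ℝ ℂ) (hc : HasCompactSupport φ)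
    (hj : ∀ s ∈ tdSupportR f, ∀ l ≤ A, iteratedDeriv l φ s = 0) : f φ = 0 := by
  obtain ⟨χ, hχ1, hχ2⟩ := qc_exists_bump
  have hη := hs.1
  have hfin : (tdSupportR f ∩ tsupport φ).Finite := by
    obtain ⟨r, hr⟩ := hc.isBounded.subset_closedBall 0
    rw [Real.closedBall_eq_Icc] at hr
    exact (qc_fin_of_sep hs _ _).subset (Set.inter_subset_inter_right _ hr)
  set T := hfin.toFinset with hTdef
  have hT : ∀ s ∈ T, s ∈ tdSupportR f ∧ s ∈ tsupport φ := fun s hs => by simpa [hTdef] using hs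
  choose! M hM using fun s (hs : s ∈ T) => qc_bump_small f C hC A hb χ hχ2 φ s (hj s (hT s hs).1)
  have key : ∀ ε : ℝˣ, 0 < (ε:ℝ) → (ε:ℝ) ≤ 1 → (ε:ℝ) < η / 4 → ‖f φ‖ ≤ (∑ s ∈ T, M s) * ε := by
    intro ε h0 h1 h4
    have hz : f (φ - ∑ s ∈ T, qcP (qcS ε⁻¹ s χ) φ) = 0 := by
      have hval : ∀ y, (φ - ∑ s ∈ T, qcP (qcS ε⁻¹ s χ) φ) y =
          φ y * (1 - ∑ s ∈ T, χ ((ε:ℝ)⁻¹ * (y - s))) := by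
        intro y
        rw [sub_apply, sum_apply, mul_sub, mul_one, Finset.mul_sum]
        congr 1
        refine Finset.sum_congr rfl fun s _ => ?_
        rw [qcP_apply, qcS_apply, mul_comm, Units.val_inv_eq_inv_val]
      have hss : tsupport (φ - ∑ s ∈ T, qcP (qcS ε⁻¹ s χ) φ) ⊆ tsupport φ := by
        refine closure_mono ?_
        intro y hy hy0
        apply hy
        rw [hval, hy0, zero_mul]
      apply qc_S0
      · exact hc.of_isClosed_subset (isClosed_tsupport _) hss
      · rw [Set.disjoint_left]
        intro s0 hs0 hs0'
        have hsT : s0 ∈ T := by simp [hTdef, hs0', hss hs0]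
        revert hs0
        rw [imp_false, notMem_tsupport_iff_eventuallyEq]
        filter_upwards [Metric.ball_mem_nhds s0 h0] with y hy
        rw [Metric.mem_ball, Real.dist_eq] at hy
        rw [hval]
        have hsum : ∑ s ∈ T, χ ((ε:ℝ)⁻¹ * (y - s)) = 1 := by
          rw [Finset.sum_eq_single_of_mem s0 hsT]
          · apply hχ1
            rw [abs_mul, abs_of_pos (inv_pos.2 h0), ← div_eq_inv_mul, div_le_one h0]
            exact hy.le
          · intro s hsT' hne
            apply hχ2
            rw [abs_mul, abs_of_pos (inv_pos.2 h0), ← div_eq_inv_mul, le_div_iff₀ h0]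
            have := hs.2 s (hT s hsT').1 s0 hs0' hne
            have h5 : |s - s0| ≤ |y - s| + |y - s0| := by
              have := abs_sub_le s y s0
              rwa [abs_sub_comm s y] at this
            linarith
        rw [hsum]; simp
    rw [map_sub, sub_eq_zero] at hz
    rw [hz, map_sum, Finset.sum_mul]
    refine (norm_sum_le _ _).trans (Finset.sum_le_sum fun s hs => hM s hs ε h0 h1)
  rw [← norm_le_zero_iff]
  have hlim : Tendsto (fun x : ℝ => (∑ s ∈ T, M s) * x) (𝓝[>] 0) (𝓝 0) := by
    have : Tendsto (fun x : ℝ => (∑ s ∈ T, M s) * x) (𝓝 0) (𝓝 ((∑ s ∈ T, M s) * 0)) :=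
      (continuous_const.mul continuous_id).tendsto 0
    rw [mul_zero] at this
    exact this.mono_left nhdsWithin_le_nhds
  refine ge_of_tendsto hlim ?_
  have hev : ∀ᶠ x : ℝ in 𝓝[>] 0, x ∈ Ioo 0 (min 1 (η/4)) :=
    Ioo_mem_nhdsGT (by positivity)
  filter_upwards [hev] with x hx
  have h1 := lt_of_lt_of_le hx.2 (min_le_left _ _)
  have h2 := lt_of_lt_of_le hx.2 (min_le_right _ _)
  exact key (Units.mk0 x hx.1.ne') hx.1 h1.le h2

lemma qc_iter_pow (s : ℝ) (n l : ℕ) :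
    iteratedDeriv l (fun x : ℝ => ((x:ℂ) - s) ^ n) = fun x : ℝ => (n.descFactorial l : ℂ) * ((x:ℂ) - s) ^ (n - l) := by
  induction l with
  | zero => simp
  | succ k ih =>
    rw [iteratedDeriv_succ, ih]
    ext x
    have h1 : HasDerivAt (fun x : ℝ => (x:ℂ) - s) 1 x := by
      simpa using (Complex.ofRealCLM.hasDerivAt (x := x)).sub_const (s:ℂ)
    have h2 := ((h1.fun_pow (n - k)).const_mul (n.descFactorial k : ℂ)).deriv
    rw [h2, Nat.descFactorial_succ]
    push_cast
    rw [show n - k - 1 = n - (k+1) by omega]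
    ring

lemma qc_powtg (s : ℝ) (n : ℕ) : (fun x : ℝ => ((x:ℂ) - s) ^ n).HasTemperateGrowth := by
  have h1 : (fun x : ℝ => (x:ℂ)).HasTemperateGrowth := Function.Complex.hasTemperateGrowth_ofReal
  exact (h1.sub (Function.HasTemperateGrowth.const (s:ℂ))).pow n

lemma qc_powcd (s : ℝ) (n : ℕ) (m : ℕ): ContDiff ℝ m (fun x : ℝ => ((x:ℂ) - s) ^ n) := by
  have := (qc_powtg s n).1
  exact this.of_le (by exact_mod_cast le_top)

/-- jets functions: compactly supported in (-η/2, η/2) with jets delta at 0 -/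
lemma qc_jet (η : ℝ) (hη : 0 < η) (n : ℕ) : ∃ e : SchwartzMap ℝ ℂ, (∀ x, η / 2 ≤ |x| → e x = 0) ∧
    ∀ l, iteratedDeriv l e 0 = if l = n then 1 else 0 := by
  obtain ⟨χ, hχ1, hχ2⟩ := qc_exists_bump
  let a : ℝˣ := Units.mk0 (4 / η) (by positivity)
  have ha : ((a:ℝˣ):ℝ) = 4 / η := rfl
  let e : SchwartzMap ℝ ℂ := ((n.factorial : ℂ)⁻¹) • smulLeftCLM ℂ (fun x : ℝ => ((x:ℂ) - (0:ℝ)) ^ n) (qcS a 0 χ)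
  have he : ∀ x, e x = (n.factorial : ℂ)⁻¹ * (((x:ℂ) - (0:ℝ)) ^ n * χ (4 / η * x)) := by
    intro x
    simp only [e, smul_apply, smul_eq_mul]
    rw [qcM_apply _ (qc_powtg 0 n), qcS_apply, ha, sub_zero]
  refine ⟨e, ?_, ?_⟩
  · intro x hx
    rw [he, hχ2]; simp
    rw [abs_mul, abs_of_pos (by positivity)]
    calc 2 = 4 / η * (η / 2) := by field_simp; norm_num
      _ ≤ _ := by gcongr
  · intro l
    have h1 : ⇑e =ᶠ[𝓝 0] fun x => (n.factorial : ℂ)⁻¹ * (((x:ℂ) - (0:ℝ)) ^ n) := by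
      filter_upwards [Metric.ball_mem_nhds (0:ℝ) (show 0 < η / 4 by positivity)] with x hx
      rw [he, hχ1, mul_one]
      rw [abs_mul, abs_of_pos (by positivity)]
      rw [Metric.mem_ball, Real.dist_eq, sub_zero] at hx
      calc 4 / η * |x| ≤ 4 / η * (η / 4) := by gcongr
        _ = 1 := by field_simp
    rw [h1.iteratedDeriv_eq, iteratedDeriv_const_mul_field, qc_iter_pow]
    simp only [sub_self, Complex.ofReal_zero]
    split_ifs with h
    · subst h
      simp [Nat.descFactorial_self, Nat.factorial_ne_zero]
    · rcases lt_or_gt_of_ne h with h | h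
      · rw [zero_pow (by omega)]; simp
      · rw [Nat.descFactorial_of_lt h]; simp


/-- representation of a distribution by jets on `Λ` -/
structure qcRep (f : TemperedDistR) (K : ℕ) (p : ℕ → ℝ → ℂ) (Λ : Set ℝ) : Prop where
  supp : ∀ n x, p n x ≠ 0 → x ∈ Λ
  top : ∀ n x, K < n → p n x = 0
  growth : ∃ C ≥ (0:ℝ), ∃ A : ℕ, ∀ n x, ‖p n x‖ ≤ C * (1 + |x|) ^ A
  sum : ∀ φ : SchwartzMap ℝ ℂ, HasSum (fun x : ℝ => ∑ n ∈ Finset.range (K + 1),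
    p n x * iteratedDeriv n φ x) (f φ)

lemma qc_summable_sep {η : ℝ} {Λ : Set ℝ} (h : qcSep η Λ) :
    Summable (Λ.indicator fun x : ℝ => ((1 + |x|) ^ 2)⁻¹) := by
  rw [← summable_subtype_iff_indicator]
  have hη := h.1
  have hinj : Function.Injective (fun x : Λ => ⌊(x:ℝ) / η⌋) := by
    intro x y hxy
    by_contra hne
    have h1 := h.2 x x.2 y y.2 (fun h => hne (Subtype.ext h))
    have h2 := Int.abs_sub_lt_one_of_floor_eq_floor hxy
    rw [← sub_div, abs_div, abs_of_pos h.1, div_lt_one h.1] at h2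
    linarith
  have hs : Summable (fun m : ℤ => (1 + η⁻¹) ^ 2 * (((1:ℝ) + |(m:ℝ)|) ^ 2)⁻¹ * 4) := by
    refine Summable.mul_right _ (Summable.mul_left _ ?_)
    have h1 : Summable (fun m : ℤ => (1:ℝ) / (m:ℝ) ^ 2) := Real.summable_one_div_int_pow.2 (by norm_num)
    refine Summable.of_norm_bounded_eventually h1 ?_
    rw [Filter.eventually_cofinite]
    refine (Set.finite_singleton (0:ℤ)).subset ?_
    intro m hm
    by_contra h0
    apply hm
    have hm0 : (m:ℝ) ≠ 0 := by exact_mod_cast h0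
    rw [Real.norm_of_nonneg (by positivity), one_div]
    have : 0 < (m:ℝ)^2 := by positivity
    refine inv_anti₀ this ?_
    rw [← sq_abs (m:ℝ)]
    gcongr; linarith
  refine Summable.of_nonneg_of_le (fun x => by simp only [Function.comp]; positivity) ?_ (hs.comp_injective hinj)
  intro x
  simp only [Function.comp]
  have hm : |((⌊(x:ℝ) / η⌋ : ℤ) : ℝ)| ≤ |(x:ℝ)| / η + 1 := by
    have a1 := Int.floor_le ((x:ℝ)/η)
    have a2 := Int.lt_floor_add_one ((x:ℝ)/η)
    have a3 : |(x:ℝ)| / η = |(x:ℝ)/η| := by rw [abs_div, abs_of_pos hη]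
    rw [a3, abs_le]
    have := neg_abs_le ((x:ℝ)/η); have := le_abs_self ((x:ℝ)/η)
    constructor <;> linarith
  have hle : (1:ℝ) + |((⌊(x:ℝ) / η⌋ : ℤ) : ℝ)| ≤ (1 + η⁻¹) * (1 + |(x:ℝ)|) * 2 := by
    have hm : |((⌊(x:ℝ) / η⌋ : ℤ) : ℝ)| ≤ |(x:ℝ)| * η⁻¹ + 1 := by rw [← div_eq_mul_inv |(x:ℝ)|]; exact hm
    have : 0 < η⁻¹ := by positivity
    have : 0 ≤ |(x:ℝ)| := abs_nonneg _
    nlinarith [mul_nonneg (abs_nonneg (x:ℝ)) (inv_pos.2 hη).le]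
  rw [mul_right_comm, ← div_eq_mul_inv, le_div_iff₀ (by positivity), ← div_eq_inv_mul, div_le_iff₀ (by positivity)]
  calc (1 + |((⌊(x:ℝ) / η⌋ : ℤ) : ℝ)|) ^ 2 ≤ ((1 + η⁻¹) * (1 + |(x:ℝ)|) * 2) ^ 2 := by gcongr
    _ = _ := by ring

lemma qc_trunc (φ : SchwartzMap ℝ ℂ) (A B : ℕ) : ∃ M > (0:ℝ), ∃ Φ : ℕ → SchwartzMap ℝ ℂ,
    (∀ L, HasCompactSupport (Φ L)) ∧
    (∀ L l, l ≤ A → ∀ x : ℝ, (1 + |x|) ^ B * ‖iteratedDeriv l (Φ L) x‖ ≤ M) ∧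
    (∀ (L : ℕ) l (x : ℝ), |x| < L → iteratedDeriv l (Φ L) x = iteratedDeriv l φ x) := by
  obtain ⟨χ, hχ1, hχ2⟩ := qc_exists_bump
  obtain ⟨M1, hM1, h1⟩ := qc_decay φ A B
  obtain ⟨M2, hM2, h2⟩ := qc_decay χ A 0
  have hu : ∀ L : ℕ, ((L:ℝ) + 1) ≠ 0 := fun L => by positivity
  let a : ℕ → ℝˣ := fun L => (Units.mk0 ((L:ℝ) + 1) (hu L))⁻¹
  have ha : ∀ L, ((a L : ℝˣ) : ℝ) = ((L:ℝ) + 1)⁻¹ := fun L => rfl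
  refine ⟨∑ i ∈ Finset.range (A + 1), 2 ^ A * M2 * M1, Finset.sum_pos (fun _ _ => by positivity) (by simp),
    fun L => qcP (qcS (a L) 0 χ) φ, ?_, ?_, ?_⟩
  · intro L
    refine HasCompactSupport.intro (isCompact_closedBall (0:ℝ) (2 * ((L:ℝ) + 1))) ?_
    intro x hx
    rw [Metric.mem_closedBall, Real.dist_eq, sub_zero, not_le] at hx
    rw [qcP_apply, qcS_apply, hχ2, zero_mul]
    rw [sub_zero, ha, abs_mul, abs_of_pos (by positivity), ← div_eq_inv_mul, le_div_iff₀ (by positivity)]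
    exact hx.le
  · intro L l hl x
    rw [qcP_deriv]
    calc _ ≤ (1 + |x|) ^ B * ∑ i ∈ Finset.range (l + 1), 2 ^ A * M2 * ‖iteratedDeriv (l - i) φ x‖ := by
          gcongr
          refine (norm_sum_le _ _).trans (Finset.sum_le_sum fun i hi => ?_)
          have hil : i ≤ l := by simpa [Nat.lt_succ_iff] using hi
          rw [norm_mul, norm_mul, qcS_deriv]
          have e1 : ‖((l.choose i : ℕ) : ℂ)‖ ≤ 2 ^ A := by
            rw [Complex.norm_natCast]
            have : l.choose i ≤ 2 ^ l := Nat.choose_le_two_pow l i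
            have h3 : (2:ℕ) ^ l ≤ 2 ^ A := Nat.pow_le_pow_right (by norm_num) hl
            exact_mod_cast this.trans h3
          have e2 : ‖((a L : ℝ) : ℂ) ^ i * iteratedDeriv i χ (a L * (x - 0))‖ ≤ M2 := by
            rw [norm_mul, norm_pow, Complex.norm_real, ha, Real.norm_of_nonneg (by positivity)]
            have := h2 i (by omega) (((L:ℝ) + 1)⁻¹ * (x - 0))
            simp only [pow_zero, one_mul] at this
            calc _ ≤ 1 * M2 := by
                  gcongr
                  refine pow_le_one₀ (by positivity) (inv_le_one_of_one_le₀ ?_)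
                  have : (0:ℝ) ≤ L := by positivity
                  linarith
              _ = M2 := one_mul _
          gcongr
      _ = ∑ i ∈ Finset.range (l + 1), 2 ^ A * M2 * ((1 + |x|) ^ B * ‖iteratedDeriv (l - i) φ x‖) := by
          rw [Finset.mul_sum]; refine Finset.sum_congr rfl fun i _ => by ring
      _ ≤ ∑ i ∈ Finset.range (l + 1), 2 ^ A * M2 * M1 := by
          refine Finset.sum_le_sum fun i hi => ?_
          have := h1 (l - i) (by omega) x
          gcongr
      _ ≤ _ := Finset.sum_le_sum_of_subset_of_nonneg (by intro i; simp only [Finset.mem_range]; omega)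
          (by intros; positivity)
  · intro L l x hx
    apply Filter.EventuallyEq.iteratedDeriv_eq
    have : ∀ᶠ y in 𝓝 x, |y| < (L:ℝ) := continuous_abs.continuousAt.eventually (gt_mem_nhds hx)
    filter_upwards [this] with y hy
    rw [qcP_apply, qcS_apply, hχ1, one_mul]
    rw [sub_zero, ha, abs_mul, abs_of_pos (by positivity), ← div_eq_inv_mul, div_le_one (by positivity)]
    linarith

lemma qc_S_tr (φ : SchwartzMap ℝ ℂ) (s : ℝ) (n : ℕ) (x : ℝ) :
    iteratedDeriv n (qcS 1 s φ) x = iteratedDeriv n φ (x - s) := by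
  rw [qcS_deriv]; simp

theorem qc_structure (f : TemperedDistR) {η : ℝ} (hs : qcSep η (tdSupportR f)) :
    ∃ K p, qcRep f K p (tdSupportR f) := by
  classical
  obtain ⟨C, hC, A, hb⟩ := qc_bound f
  have hη := hs.1
  choose e he0 hej using qc_jet η hη
  set Λ := tdSupportR f with hΛ
  let p : ℕ → ℝ → ℂ := fun n x => if n ≤ A ∧ x ∈ Λ then f (qcS 1 x (e n)) else 0
  have hpn : ∀ n x, p n x ≠ 0 → n ≤ A ∧ x ∈ Λ := by
    intro n x h; by_contra h'; exact h (if_neg h')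
  have hgr : ∃ C' ≥ (0:ℝ), ∀ n x, ‖p n x‖ ≤ C' * (1 + |x|) ^ A := by
    choose M hM hMb using fun n => qc_decay (e n) A A
    refine ⟨C * ∑ n ∈ Finset.range (A+1), M n, mul_nonneg hC (Finset.sum_nonneg fun n _ => (hM n).le), ?_⟩
    intro n x
    by_cases h : n ≤ A ∧ x ∈ Λ
    · have e1 : p n x = f (qcS 1 x (e n)) := if_pos h
      rw [e1]
      have : ‖f (qcS 1 x (e n))‖ ≤ C * (M n * (1 + |x|) ^ A) := by
        apply hb
        intro l hl y
        rw [qc_S_tr]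
        have h1 := hMb n l hl (y - x)
        have h2 : 1 + |y| ≤ (1 + |y - x|) * (1 + |x|) := by
          have : |y| ≤ |y - x| + |x| := by simpa using abs_add_le (y - x) x
          nlinarith [abs_nonneg (y-x), abs_nonneg x]
        calc (1 + |y|) ^ A * ‖iteratedDeriv l (e n) (y - x)‖
            ≤ ((1 + |y - x|) * (1 + |x|)) ^ A * ‖iteratedDeriv l (e n) (y - x)‖ := by gcongr
          _ = ((1 + |y - x|) ^ A * ‖iteratedDeriv l (e n) (y - x)‖) * (1 + |x|) ^ A := by rw [mul_pow]; ring
          _ ≤ _ := by gcongr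
      refine this.trans ?_
      rw [← mul_assoc]
      gcongr
      exact Finset.single_le_sum (fun n _ => (hM n).le) (by simp; omega)
    · have e1 : p n x = 0 := if_neg h
      rw [e1, norm_zero]
      have := Finset.sum_nonneg (s := Finset.range (A+1)) fun n _ => (hM n).le
      positivity
  obtain ⟨C', hC', hg⟩ := hgr
  have hcomp : ∀ φ : SchwartzMap ℝ ℂ, HasCompactSupport φ →
      HasSum (fun x : ℝ => ∑ n ∈ Finset.range (A + 1), p n x * iteratedDeriv n φ x) (f φ) := by
    intro φ hc
    have hfin : (Λ ∩ tsupport φ).Finite := by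
      obtain ⟨r, hr⟩ := hc.isBounded.subset_closedBall 0
      rw [Real.closedBall_eq_Icc] at hr
      exact (qc_fin_of_sep hs _ _).subset (Set.inter_subset_inter_right _ hr)
    set T := hfin.toFinset with hTdef
    have hT : ∀ s ∈ T, s ∈ Λ ∧ s ∈ tsupport φ := fun s hs => by simpa [hTdef] using hs
    have hcs : ∀ n s, HasCompactSupport (qcS 1 s (e n)) := by
      intro n s
      refine HasCompactSupport.intro (isCompact_closedBall s (η/2)) ?_
      intro x hx
      rw [Metric.mem_closedBall, Real.dist_eq, not_le] at hx
      rw [qcS_apply, he0]; simpa using hx.le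
    have hev : ∀ n s t l, s ∈ Λ → t ∈ Λ → s ≠ t → iteratedDeriv l (qcS 1 s (e n)) t = 0 := by
      intro n s t l hs' ht hne
      apply qc_iter_zero_of_ev
      have h1 := hs.2 s hs' t ht hne
      filter_upwards [Metric.ball_mem_nhds t (show 0 < η/2 by positivity)] with y hy
      rw [Metric.mem_ball, Real.dist_eq] at hy
      rw [qcS_apply, he0]; rfl
      have h5 : |s - t| ≤ |y - s| + |y - t| := by
        have := abs_sub_le s y t
        rwa [abs_sub_comm s y] at this
      rw [Units.val_one, one_mul]; linarith
    let R : SchwartzMap ℝ ℂ := ∑ s ∈ T, ∑ n ∈ Finset.range (A+1), iteratedDeriv n φ s • qcS 1 s (e n)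
    have hRd : ∀ l t, iteratedDeriv l R t = ∑ s ∈ T, ∑ n ∈ Finset.range (A+1),
        iteratedDeriv n φ s * iteratedDeriv l (qcS 1 s (e n)) t := by
      intro l t
      rw [← qcD_apply]
      have : qcD l R = ∑ s ∈ T, ∑ n ∈ Finset.range (A+1), iteratedDeriv n φ s • qcD l (qcS 1 s (e n)) := by
        have hpow : ∀ ψ, qcD l ψ = ((derivCLM ℂ ℂ : SchwartzMap ℝ ℂ →L[ℂ] SchwartzMap ℝ ℂ) ^ l) ψ := by
          intro ψ; rw [qcD, FunLike.coe_pow_eq_iterate]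
        simp only [hpow, R, map_sum, map_smul]
      rw [this]
      simp only [sum_apply, smul_apply, smul_eq_mul, qcD_apply]
    have hz : f (φ - R) = 0 := by
      apply qc_S1 f C hC A hb hs
      · refine HasCompactSupport.sub hc ?_
        have : HasCompactSupport (∑ s ∈ T, ∑ n ∈ Finset.range (A+1), iteratedDeriv n φ s • qcS 1 s (e n) : SchwartzMap ℝ ℂ) := by
          have h0 : HasCompactSupport ((0 : SchwartzMap ℝ ℂ)) := HasCompactSupport.zero
          refine Finset.sum_induction _ (fun ψ : SchwartzMap ℝ ℂ => HasCompactSupport ψ)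
            (fun a b ha hb => HasCompactSupport.add ha hb) h0 fun s _ => ?_
          refine Finset.sum_induction _ (fun ψ : SchwartzMap ℝ ℂ => HasCompactSupport ψ)
            (fun a b ha hb => HasCompactSupport.add ha hb) h0 fun n _ => ?_
          exact (hcs n s).smul_left (f := fun _ => iteratedDeriv n φ s)
        exact this
      · intro t ht l hl
        have : iteratedDeriv l (φ - R : SchwartzMap ℝ ℂ) t = iteratedDeriv l φ t - iteratedDeriv l R t :=
          iteratedDeriv_sub (qc_cd φ l).contDiffAt (qc_cd R l).contDiffAt
        rw [this, hRd, sub_eq_zero]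
        by_cases htT : t ∈ T
        · rw [Finset.sum_eq_single_of_mem t htT]
          · rw [Finset.sum_eq_single_of_mem l (by simp; omega)]
            · rw [qc_S_tr, sub_self, hej]; simp
            · intro n _ hne
              rw [qc_S_tr, sub_self, hej, if_neg (Ne.symm hne), mul_zero]
          · intro s hsT hne
            refine Finset.sum_eq_zero fun n _ => ?_
            rw [hev n s t l (hT s hsT).1 ht hne, mul_zero]
        · have hnt : t ∉ tsupport φ := fun h => htT (by simp [hTdef, (show t ∈ Λ from ht), h])
          rw [qc_iter_zero_of_ev _ _ (notMem_tsupport_iff_eventuallyEq.1 hnt)]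
          symm
          refine Finset.sum_eq_zero fun s hsT => Finset.sum_eq_zero fun n _ => ?_
          rw [hev n s t l (hT s hsT).1 ht (fun h => htT (h ▸ hsT)), mul_zero]
    rw [map_sub, sub_eq_zero] at hz
    have hfR : f R = ∑ x ∈ T, ∑ n ∈ Finset.range (A + 1), p n x * iteratedDeriv n φ x := by
      simp only [R, map_sum, map_smul, smul_eq_mul]
      refine Finset.sum_congr rfl fun s hsT => Finset.sum_congr rfl fun n hn => ?_
      have : p n s = f (qcS 1 s (e n)) := if_pos ⟨by simpa [Nat.lt_succ_iff] using hn, (hT s hsT).1⟩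
      rw [this, mul_comm]
    rw [hz, hfR]
    apply hasSum_sum_of_ne_finset_zero
    intro x hx
    refine Finset.sum_eq_zero fun n _ => ?_
    by_cases hp : p n x = 0
    · rw [hp, zero_mul]
    · have hnt : x ∉ tsupport φ := fun h => hx (by simp [hTdef, (hpn n x hp).2, h])
      rw [qc_iter_zero_of_ev _ _ (notMem_tsupport_iff_eventuallyEq.1 hnt), mul_zero]
  refine ⟨A, p, fun n x h => (hpn n x h).2, fun n x h => if_neg (by omega), ⟨C', hC', A, hg⟩, ?_⟩
  intro φ
  obtain ⟨M, hM, Φ, hΦc, hΦb, hΦe⟩ := qc_trunc φ A (A+2)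
  obtain ⟨M0, hM0, hφb⟩ := qc_decay φ A (A+2)
  let bd : ℝ → ℝ := fun x => ((A+1) * (C' * (M + M0))) * Λ.indicator (fun x : ℝ => ((1 + |x|) ^ 2)⁻¹) x
  have hbs : Summable bd := (qc_summable_sep hs).mul_left _
  have hterm : ∀ (ψ : SchwartzMap ℝ ℂ), (∀ l ≤ A, ∀ x : ℝ, (1 + |x|) ^ (A+2) * ‖iteratedDeriv l ψ x‖ ≤ M + M0) →
      ∀ x, ‖∑ n ∈ Finset.range (A + 1), p n x * iteratedDeriv n ψ x‖ ≤ bd x := by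
    intro ψ hψ x
    simp only [bd]
    by_cases hx : x ∈ Λ
    · rw [Set.indicator_of_mem hx]
      refine (norm_sum_le _ _).trans ?_
      have : ∀ n ∈ Finset.range (A+1), ‖p n x * iteratedDeriv n ψ x‖ ≤ C' * (M + M0) * ((1 + |x|) ^ 2)⁻¹ := by
        intro n hn
        rw [norm_mul, ← div_eq_mul_inv, le_div_iff₀ (by positivity)]
        have h1 := hψ n (by simpa [Nat.lt_succ_iff] using hn) x
        calc _ ≤ C' * (1 + |x|) ^ A * ‖iteratedDeriv n ψ x‖ * (1 + |x|) ^ 2 := by gcongr; exact hg n x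
          _ = C' * ((1 + |x|) ^ (A+2) * ‖iteratedDeriv n ψ x‖) := by ring
          _ ≤ _ := by gcongr
      refine (Finset.sum_le_sum this).trans (le_of_eq ?_)
      simp; ring
    · rw [Set.indicator_of_notMem hx, mul_zero, norm_le_zero_iff]
      refine Finset.sum_eq_zero fun n _ => ?_
      have : p n x = 0 := if_neg (fun h => hx h.2)
      rw [this, zero_mul]
  have hsum : Summable (fun x : ℝ => ∑ n ∈ Finset.range (A + 1), p n x * iteratedDeriv n φ x) :=
    Summable.of_norm_bounded hbs (hterm φ fun l hl x => (hφb l hl x).trans (by linarith))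
  have hlim1 : Tendsto (fun L => f (Φ L)) atTop (𝓝 (∑' x : ℝ, ∑ n ∈ Finset.range (A + 1), p n x * iteratedDeriv n φ x)) := by
    have : (fun L => f (Φ L)) = fun L => ∑' x : ℝ, ∑ n ∈ Finset.range (A + 1), p n x * iteratedDeriv n (Φ L) x :=
      funext fun L => (hcomp _ (hΦc L)).tsum_eq.symm
    rw [this]
    refine tendsto_tsum_of_dominated_convergence hbs ?_ ?_
    · intro x
      refine tendsto_const_nhds.congr' ?_
      filter_upwards [eventually_gt_atTop (⌈|x|⌉₊)] with L hL
      refine Finset.sum_congr rfl fun n _ => ?_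
      rw [hΦe L n x ((Nat.le_ceil _).trans_lt (by exact_mod_cast hL))]
    · exact Eventually.of_forall fun L => hterm (Φ L) fun l hl x => (hΦb L l hl x).trans (by linarith)
  have hlim2 : Tendsto (fun L => f (Φ L)) atTop (𝓝 (f φ)) := by
    rw [tendsto_iff_norm_sub_tendsto_zero]
    have hz : Tendsto (fun L : ℕ => C * ((M + M0) / ((L:ℝ) + 1))) atTop (𝓝 0) := by
      have := (tendsto_one_div_add_atTop_nhds_zero_nat (𝕜 := ℝ)).const_mul (C * (M + M0))
      rw [mul_zero] at this
      refine this.congr fun L => by ring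
    refine squeeze_zero (fun _ => norm_nonneg _) ?_ hz
    intro L
    rw [← map_sub]
    apply hb
    intro l hl x
    have : iteratedDeriv l (Φ L - φ : SchwartzMap ℝ ℂ) x = iteratedDeriv l (Φ L) x - iteratedDeriv l φ x :=
      iteratedDeriv_sub (qc_cd _ l).contDiffAt (qc_cd _ l).contDiffAt
    rw [this]
    by_cases hx : |x| < L
    · rw [hΦe L l x hx]; simp; positivity
    · rw [le_div_iff₀ (by positivity)]
      push Not at hx
      have h1 := hΦb L l hl x
      have h2 := hφb l hl x
      calc (1 + |x|) ^ A * ‖iteratedDeriv l (Φ L) x - iteratedDeriv l φ x‖ * (L + 1)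
          ≤ (1 + |x|) ^ A * (‖iteratedDeriv l (Φ L) x‖ + ‖iteratedDeriv l φ x‖) * (1 + |x|) ^ 2 := by
            gcongr
            · exact norm_sub_le _ _
            · nlinarith [abs_nonneg x]
        _ = (1 + |x|) ^ (A+2) * ‖iteratedDeriv l (Φ L) x‖ + (1 + |x|) ^ (A+2) * ‖iteratedDeriv l φ x‖ := by ring
        _ ≤ _ := by linarith
  rw [tendsto_nhds_unique hlim2 hlim1]
  exact hsum.hasSum


lemma qe_add (x y w : ℝ) : e2piR (x + y) w = e2piR x w * e2piR y w := by
  simp only [e2piR]; rw [← Complex.exp_add]; congr 1; push_cast; ring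

lemma qe_add' (x v w : ℝ) : e2piR x (v + w) = e2piR x v * e2piR x w := by
  simp only [e2piR]; rw [← Complex.exp_add]; congr 1; push_cast; ring

lemma qe_zero (w : ℝ) : e2piR 0 w = 1 := by simp [e2piR]
lemma qe_zero' (x : ℝ) : e2piR x 0 = 1 := by simp [e2piR]

lemma qe_norm (x w : ℝ) : ‖e2piR x w‖ = 1 := by
  simp only [e2piR]; exact Complex.norm_exp_ofReal_mul_I _

lemma qe_comm (x w : ℝ) : e2piR x w = e2piR w x := by simp only [e2piR, mul_comm x w]

lemma qe_ne (x w : ℝ) : e2piR x w ≠ 0 := by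
  simp only [e2piR]; exact Complex.exp_ne_zero _

lemma qe_iter (w : ℝ) (n : ℕ) : iteratedDeriv n (fun x => e2piR x w) =
    fun x => (2 * Real.pi * w * Complex.I) ^ n * e2piR x w := by
  induction n with
  | zero => simp
  | succ k ih =>
    rw [iteratedDeriv_succ, ih]
    ext x
    have h1 : HasDerivAt (fun x : ℝ => ((2 * Real.pi * (x * w) : ℝ) : ℂ) * Complex.I)
        (2 * Real.pi * w * Complex.I) x := by
      have h0 : HasDerivAt (fun x : ℝ => (x : ℂ)) 1 x := Complex.ofRealCLM.hasDerivAt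
      have := h0.mul_const (2 * Real.pi * w * Complex.I : ℂ)
      rw [one_mul] at this
      refine this.congr_of_eventuallyEq (Eventually.of_forall fun y => ?_)
      push_cast; ring
    have h2 : HasDerivAt (fun x : ℝ => e2piR x w) (e2piR x w * (2 * Real.pi * w * Complex.I)) x := h1.cexp
    have := (h2.const_mul ((2 * Real.pi * w * Complex.I : ℂ) ^ k)).deriv
    rw [this]; ring

lemma qe_cd (w : ℝ) (n : WithTop ℕ∞) : ContDiff ℝ n (fun x => e2piR x w) := by
  simp only [e2piR]
  refine ContDiff.cexp (ContDiff.mul ?_ contDiff_const)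
  refine Complex.ofRealCLM.contDiff.comp ?_
  exact contDiff_const.mul (contDiff_id.mul contDiff_const)

lemma qe_tg (w : ℝ) : (fun x => e2piR x w).HasTemperateGrowth := by
  refine ⟨qe_cd w _, fun n => ⟨0, ‖(2 * Real.pi * w * Complex.I : ℂ)‖ ^ n, fun x => ?_⟩⟩
  rw [norm_iteratedFDeriv_eq_norm_iteratedDeriv, qe_iter, norm_mul, qe_norm, norm_pow]
  simp

/-- modulation -/
def qcE (w : ℝ) : SchwartzMap ℝ ℂ →L[ℂ] SchwartzMap ℝ ℂ := smulLeftCLM ℂ (fun x => e2piR x w)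

lemma qcE_apply (w : ℝ) (φ : SchwartzMap ℝ ℂ) (x : ℝ) : qcE w φ x = e2piR x w * φ x :=
  qcM_apply _ (qe_tg w) φ x

/-- multiplication by `x - s` -/
def qcX (s : ℝ) : SchwartzMap ℝ ℂ →L[ℂ] SchwartzMap ℝ ℂ := smulLeftCLM ℂ (fun x : ℝ => ((x:ℂ) - s) ^ 1)

lemma qcX_apply (s : ℝ) (φ : SchwartzMap ℝ ℂ) (x : ℝ) : qcX s φ x = ((x:ℂ) - s) * φ x := by
  rw [qcX, qcM_apply _ (qc_powtg s 1), pow_one]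

lemma qc_finv (φ : SchwartzMap ℝ ℂ) (t : ℝ) : 𝓕⁻ φ t = ∫ x, e2piR x t * φ x := by
  rw [fourierInv_coe, Real.fourierInv_eq']
  refine integral_congr_ae (Eventually.of_forall fun x => ?_)
  simp only [e2piR, smul_eq_mul, RCLike.inner_apply, conj_trivial]
  rw [mul_comm t x]

lemma qc_finv_X (φ : SchwartzMap ℝ ℂ) (t : ℝ) :
    (2 * Real.pi * Complex.I) * 𝓕⁻ (qcX 0 φ) t = deriv (𝓕⁻ φ : SchwartzMap ℝ ℂ) t := by
  have h := lineDerivOp_fourierInv_eq φ (1:ℝ)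
  have h2 := DFunLike.congr_fun h t
  rw [FourierTransform.fourierInv_smul, smul_apply, smul_eq_mul] at h2
  have h3 : smulLeftCLM ℂ (fun x : ℝ => inner ℝ x (1:ℝ)) φ = qcX 0 φ := by
    ext x
    rw [qcX_apply, smulLeftCLM_apply_apply]
    · simp
    · fun_prop
  rw [h3] at h2
  rw [← h2, lineDerivOp_apply_eq_fderiv, fderiv_eq_smul_deriv, one_smul]

/-- band limited functions -/
def qcBL (c r : ℝ) (φ : SchwartzMap ℝ ℂ) : Prop := ∀ t, r < |t - c| → 𝓕⁻ φ t = 0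

lemma qcBL_X {c r : ℝ} {φ : SchwartzMap ℝ ℂ} (h : qcBL c r φ) (s : ℝ) : qcBL c r (qcX s φ) := by
  intro t ht
  have e1 : qcX s φ = qcX 0 φ + (-(s:ℂ)) • φ := by
    ext x; simp only [qcX_apply, add_apply, smul_apply, smul_eq_mul]; push_cast; ring
  have h1 : 𝓕⁻ (qcX 0 φ) t = 0 := by
    have h2 := qc_finv_X φ t
    have : deriv (𝓕⁻ φ : SchwartzMap ℝ ℂ) t = 0 := by
      have hev : (𝓕⁻ φ : SchwartzMap ℝ ℂ) =ᶠ[𝓝 t] fun _ => (0:ℂ) := by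
        have : ∀ᶠ y in 𝓝 t, r < |y - c| := by
          have hc : Continuous fun y : ℝ => |y - c| := by fun_prop
          exact hc.continuousAt.eventually (lt_mem_nhds ht)
        filter_upwards [this] with y hy using h y hy
      rw [hev.deriv_eq]; simp
    rw [this] at h2
    have : (2 * Real.pi * Complex.I : ℂ) ≠ 0 := by simp [Real.pi_ne_zero]
    exact (mul_eq_zero.1 h2).resolve_left this
  rw [e1, FourierTransform.fourierInv_add, FourierTransform.fourierInv_smul, add_apply, smul_apply, h1, h t ht]; simp

lemma qcBL_E {c r : ℝ} {φ : SchwartzMap ℝ ℂ} (h : qcBL c r φ) (w : ℝ) : qcBL (c - w) r (qcE w φ) := by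
  intro t ht
  have : 𝓕⁻ (qcE w φ) t = 𝓕⁻ φ (t + w) := by
    rw [qc_finv, qc_finv]
    refine integral_congr_ae (Eventually.of_forall fun x => ?_)
    simp only [qcE_apply, qe_add', mul_assoc]
  rw [this]; apply h
  convert ht using 2; ring

lemma qc_finv_S (a : ℝˣ) (s : ℝ) (φ : SchwartzMap ℝ ℂ) (t : ℝ) :
    𝓕⁻ (qcS a s φ) t = (|(a:ℝ)⁻¹| : ℝ) • (e2piR s t * 𝓕⁻ φ (t / a)) := by
  rw [qc_finv, qc_finv]
  have h1 := Measure.integral_comp_mul_left (fun u : ℝ => e2piR s t * (e2piR u (t / a) * φ u)) (a:ℝ)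
  rw [integral_const_mul (e2piR s t) (fun u : ℝ => e2piR u (t / a) * φ u)] at h1
  rw [← h1, ← integral_sub_right_eq_self (fun x : ℝ => e2piR s t * (e2piR (a * x) (t / a) * φ (a * x))) s]
  refine integral_congr_ae (Eventually.of_forall fun x => ?_)
  simp only [qcS_apply]
  rw [← mul_assoc]
  congr 1
  simp only [e2piR]; rw [← Complex.exp_add]; congr 1
  have : ((a:ℝ):ℂ) ≠ 0 := by exact_mod_cast a.ne_zero
  push_cast; field_simp; ring

lemma qcBL_S {r : ℝ} {φ : SchwartzMap ℝ ℂ} (h : qcBL 0 r φ) (a : ℝˣ) (ha : 0 < (a:ℝ)) (s : ℝ) :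
    qcBL 0 (a * r) (qcS a s φ) := by
  intro t ht
  rw [qc_finv_S, h, mul_zero, smul_zero]
  rw [sub_zero, abs_div, abs_of_pos ha, lt_div_iff₀ ha]
  rw [sub_zero] at ht; linarith

lemma qcBL_P {c c' r r' : ℝ} {φ ψ : SchwartzMap ℝ ℂ} (h : qcBL c r φ) (h' : qcBL c' r' ψ) :
    qcBL (c + c') (r + r') (qcP φ ψ) := by
  intro t ht
  have h1 := fourier_convolution (ContinuousLinearMap.mul ℂ ℂ) (𝓕⁻ φ) (𝓕⁻ ψ)
  have h2 : qcP φ ψ = pairing (ContinuousLinearMap.mul ℂ ℂ) (𝓕 (𝓕⁻ φ)) (𝓕 (𝓕⁻ ψ)) := by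
    ext x; rw [qcP_apply]; simp
  rw [h2, ← h1, FourierTransform.fourierInv_fourier_eq, convolution_apply, MeasureTheory.convolution]
  refine integral_eq_zero_of_ae (Eventually.of_forall fun y => ?_)
  simp only [ContinuousLinearMap.mul_apply', Pi.zero_apply]
  by_cases hy : r < |y - c|
  · rw [h y hy, zero_mul]
  · rw [h' (t - y), mul_zero]
    push Not at hy
    by_contra h3
    push Not at h3
    have : |t - (c + c')| ≤ |y - c| + |t - y - c'| := by
      have := abs_add_le (y - c) (t - y - c'); ring_nf at this ⊢; exact this
    linarith

lemma qcBL_smul {c r : ℝ} {φ : SchwartzMap ℝ ℂ} (h : qcBL c r φ) (a : ℂ) : qcBL c r (a • φ) := by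
  intro t ht
  rw [FourierTransform.fourierInv_smul, smul_apply, h t ht, smul_zero]

lemma qcBL_mono {c r r' : ℝ} {φ : SchwartzMap ℝ ℂ} (h : qcBL c r φ) (hr : r ≤ r') : qcBL c r' φ :=
  fun t ht => h t (hr.trans_lt ht)

/-- the basic band limited function -/
lemma qc_g0 (K : ℕ) : ∃ g : SchwartzMap ℝ ℂ, ∃ C : ℝ, 1 ≤ C ∧ qcBL 0 1 g ∧ g 0 = 1 ∧
    ∀ j ≤ K, ∀ y : ℝ, |y| * ‖iteratedDeriv j g y‖ ≤ C := by
  obtain ⟨g, hg1, hg0⟩ : ∃ g : SchwartzMap ℝ ℂ, qcBL 0 1 g ∧ g 0 ≠ 0 := by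
    by_contra hcon
    push Not at hcon
    obtain ⟨χ, hχ1, hχ2⟩ := qc_exists_bump
    -- all translates
    have hv : ∀ x, 𝓕 (qcS (Units.mk0 2 (by norm_num)) 0 χ) x = 0 := by
      intro x
      have hb : qcBL 0 1 (𝓕 (qcS (Units.mk0 (2:ℝ) (by norm_num)) 0 χ)) := by
        intro t ht
        rw [FourierTransform.fourierInv_fourier_eq, qcS_apply]
        apply hχ2
        simp only [sub_zero, Units.val_mk0] at ht ⊢
        rw [abs_mul]; norm_num; exact ht.le
      have h1 := qcBL_S hb 1 (by simp) (-x)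
      have h2 := hcon (qcS 1 (-x) (𝓕 (qcS (Units.mk0 (2:ℝ) (by norm_num)) 0 χ))) (by simpa using h1)
      rw [qcS_apply] at h2
      simpa using h2
    have h0 : 𝓕 (qcS (Units.mk0 (2:ℝ) (by norm_num)) 0 χ) = 0 := by ext x; simpa using hv x
    have h3 := FourierTransform.fourierInv_fourier_eq (F := SchwartzMap ℝ ℂ) (qcS (Units.mk0 (2:ℝ) (by norm_num)) 0 χ)
    rw [h0, FourierTransform.fourierInv_zero] at h3
    have h4 := DFunLike.congr_fun h3 0
    rw [qcS_apply, hχ1] at h4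
    · simp at h4
    · simp
  obtain ⟨M, hM, hd⟩ := qc_decay ((g 0)⁻¹ • g) K 1
  refine ⟨(g 0)⁻¹ • g, max 1 M, le_max_left _ _, qcBL_smul hg1 _, by simp [hg0], ?_⟩
  intro j hj y
  refine le_trans ?_ ((hd j hj y).trans (le_max_right _ _))
  rw [pow_one]; gcongr; linarith [abs_nonneg y]


/-- geometric derivative bounds at a point -/
def qcGB (K : ℕ) (x : ℝ) (u : ℝ → ℂ) (A a : ℝ) : Prop :=
  0 ≤ A ∧ 0 ≤ a ∧ ContDiff ℝ K u ∧ ∀ j ≤ K, ‖iteratedDeriv j u x‖ ≤ A * a ^ j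

lemma qcGB_mul {K : ℕ} {x : ℝ} {u v : ℝ → ℂ} {A a B b : ℝ} (hu : qcGB K x u A a) (hv : qcGB K x v B b) :
    qcGB K x (fun y => u y * v y) (A * B) (a + b) := by
  obtain ⟨hA, ha, hcu, hu⟩ := hu
  obtain ⟨hB, hb, hcv, hv⟩ := hv
  refine ⟨by positivity, by positivity, hcu.mul hcv, fun j hj => ?_⟩
  have hjK : (j : WithTop ℕ∞) ≤ K := by exact_mod_cast hj
  rw [iteratedDeriv_fun_mul (hcu.of_le hjK).contDiffAt (hcv.of_le hjK).contDiffAt]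
  refine (norm_sum_le _ _).trans ?_
  rw [add_pow, Finset.mul_sum]
  refine Finset.sum_le_sum fun i hi => ?_
  have hi' : i ≤ j := by simpa [Nat.lt_succ_iff] using hi
  rw [norm_mul, norm_mul, Complex.norm_natCast]
  have h1 := hu i (by omega)
  have h2 := hv (j - i) (by omega)
  calc _ ≤ (j.choose i : ℝ) * (A * a ^ i) * (B * b ^ (j - i)) := by gcongr
    _ = _ := by ring

lemma qcGB_one (K : ℕ) (x : ℝ) : qcGB K x (fun _ => 1) 1 0 := by
  refine ⟨by norm_num, le_rfl, contDiff_const, fun j _ => ?_⟩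
  rcases j with _ | j
  · simp
  · rw [iteratedDeriv_const]; simp

lemma qcGB_pow {K : ℕ} {x : ℝ} {u : ℝ → ℂ} {A a : ℝ} (hu : qcGB K x u A a) (k : ℕ) :
    qcGB K x (fun y => u y ^ k) (A ^ k) (k * a) := by
  induction k with
  | zero => simpa using qcGB_one K x
  | succ k ih =>
    have := qcGB_mul ih hu
    simp only [← pow_succ] at this
    convert this using 1
    push_cast; ring

lemma qcGB_prod {K : ℕ} {x : ℝ} {u : ℝ → ℝ → ℂ} {A a : ℝ} (S : Finset ℝ) (hu : ∀ s ∈ S, qcGB K x (u s) A a) :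
    qcGB K x (fun y => ∏ s ∈ S, u s y) (A ^ S.card) (S.card * a) := by
  classical
  induction S using Finset.induction_on with
  | empty => simpa using qcGB_one K x
  | insert s S hs ih =>
    have := qcGB_mul (hu s (by simp)) (ih fun t ht => hu t (by simp [ht]))
    simp only [Finset.prod_insert hs, Finset.card_insert_of_notMem hs]
    convert this using 1
    · rw [pow_succ]; ring
    · push_cast; ring

lemma qcGB_lin (K : ℕ) {x s T : ℝ} (hT : 1 ≤ T) (hx : T < |x|) (hs : |s| ≤ T) :
    qcGB K x (fun y : ℝ => (y:ℂ) - s) (2 * |x|) 1 := by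
  have hc : ContDiff ℝ K (fun y : ℝ => (y:ℂ) - s) := by simpa using qc_powcd s 1 K
  refine ⟨by positivity, by norm_num, hc, fun j _ => ?_⟩
  have h := congrFun (qc_iter_pow s 1 j) x
  simp only [pow_one] at h
  rw [h, one_pow, mul_one]
  rcases j with _ | _ | j
  · simp only [Nat.descFactorial_zero, Nat.cast_one, one_mul, Nat.sub_zero, pow_one]
    rw [← Complex.ofReal_sub, Complex.norm_real, Real.norm_eq_abs]
    have := abs_sub x s; linarith
  · simp; linarith
  · simp; 

lemma qcGB_e (K : ℕ) (x w : ℝ) : qcGB K x (fun y => e2piR y w) 1 (2 * Real.pi * |w|) := by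
  refine ⟨by norm_num, by positivity, qe_cd w _, fun j _ => ?_⟩
  rw [qe_iter, norm_mul, qe_norm, norm_pow]
  simp only [norm_mul, Complex.norm_real, Complex.norm_I, mul_one, one_mul]
  rw [Real.norm_of_nonneg Real.pi_pos.le, Real.norm_eq_abs]; simp

lemma qcGB_g {K : ℕ} {g : SchwartzMap ℝ ℂ} {C : ℝ} (hC : 1 ≤ C)
    (hg : ∀ j ≤ K, ∀ y : ℝ, |y| * ‖iteratedDeriv j g y‖ ≤ C) (a : ℝˣ) (ha : 0 < (a:ℝ)) (s x : ℝ) (hx : x ≠ s) :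
    qcGB K x (qcS a s g) (C / (a * |x - s|)) a := by
  have hxs : 0 < |x - s| := abs_pos.2 (sub_ne_zero.2 hx)
  refine ⟨by positivity, ha.le, qc_cd _ _, fun j hj => ?_⟩
  rw [qcS_deriv, norm_mul, norm_pow, Complex.norm_real, Real.norm_of_nonneg ha.le, mul_comm]
  gcongr
  rw [le_div_iff₀ (by positivity), mul_comm]
  have := hg j hj (a * (x - s))
  rwa [abs_mul, abs_of_pos ha] at this

lemma qc_mulpow {c r : ℝ} {ψ : SchwartzMap ℝ ℂ} (h : qcBL c r ψ) (s : ℝ) (k : ℕ) :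
    ∃ φ, qcBL c r φ ∧ ∀ x, φ x = ((x:ℂ) - s) ^ k * ψ x := by
  induction k with
  | zero => exact ⟨ψ, h, by simp⟩
  | succ k ih =>
    obtain ⟨φ, h1, h2⟩ := ih
    exact ⟨qcX s φ, qcBL_X h1 s, fun x => by rw [qcX_apply, h2]; ring⟩

lemma qc_mulprod {c r : ℝ} {ψ : SchwartzMap ℝ ℂ} (h : qcBL c r ψ) (S : Finset ℝ) (k : ℕ) :
    ∃ φ, qcBL c r φ ∧ ∀ x : ℝ, φ x = (∏ s ∈ S, ((x:ℂ) - s) ^ k) * ψ x := by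
  classical
  induction S using Finset.induction_on with
  | empty => exact ⟨ψ, h, by simp⟩
  | insert s S hs ih =>
    obtain ⟨φ, h1, h2⟩ := ih
    obtain ⟨φ', h3, h4⟩ := qc_mulpow h1 s k
    exact ⟨φ', h3, fun x => by rw [h4, h2, Finset.prod_insert hs]; ring⟩

lemma qcBL_pow {r : ℝ} {g : SchwartzMap ℝ ℂ} (h : qcBL 0 r g) (J : ℕ) :
    ∃ φ, qcBL 0 ((J + 1) * r) φ ∧ ∀ x, φ x = g x ^ (J + 1) := by
  induction J with
  | zero => exact ⟨g, by simpa using h, by simp⟩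
  | succ k ih =>
    obtain ⟨φ, h1, h2⟩ := ih
    refine ⟨qcP φ g, ?_, fun x => by rw [qcP_apply, h2]; ring⟩
    have := qcBL_P h1 h
    rw [add_zero] at this
    convert this using 1; push_cast; ring

lemma qc_iter_zero_pow {h : ℝ → ℂ} (s : ℝ) (k n : ℕ) (hh : ContDiff ℝ n h) (hn : n ≤ k) :
    iteratedDeriv n (fun x : ℝ => ((x:ℂ) - s) ^ k * h x) s = if n = k then (k.factorial : ℂ) * h s else 0 := by
  rw [iteratedDeriv_fun_mul (qc_powcd s k n).contDiffAt hh.contDiffAt]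
  split_ifs with hk
  · subst hk
    rw [Finset.sum_eq_single_of_mem n (by simp)]
    · rw [qc_iter_pow]; simp [Nat.descFactorial_self]
    · intro i hi hne
      have : i < n := by simp at hi; omega
      rw [qc_iter_pow]
      simp [Nat.sub_ne_zero_of_lt this]
  · refine Finset.sum_eq_zero fun i hi => ?_
    have : i < k := by simp at hi; omega
    rw [qc_iter_pow]
    simp [Nat.sub_ne_zero_of_lt this]

/-- the test function -/
lemma qc_test {K : ℕ} {g : SchwartzMap ℝ ℂ} {C : ℝ} (hC : 1 ≤ C) (hgb : qcBL 0 1 g) (hg1 : g 0 = 1)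
    (hg : ∀ j ≤ K, ∀ y : ℝ, |y| * ‖iteratedDeriv j g y‖ ≤ C)
    (c0 r : ℝ) (hr : 0 < r) (S : Finset ℝ) (s0 : ℝ) (n0 J : ℕ) (hn0 : n0 ≤ K) (hs0 : s0 ∉ S) :
    ∃ φ, qcBL c0 r φ ∧ (∀ s ∈ S, ∀ n ≤ K, iteratedDeriv n φ s = 0) ∧
      (∀ n < n0, iteratedDeriv n φ s0 = 0) ∧
      ‖iteratedDeriv n0 φ s0‖ = n0.factorial * ∏ s ∈ S, |s0 - s| ^ (K + 1) ∧
      ∀ T x : ℝ, 1 ≤ T → T < |x| → |s0| ≤ T → (∀ s ∈ S, |s| ≤ T) →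
        ∀ n ≤ K, ‖iteratedDeriv n φ x‖ ≤ (2 * |x|) ^ (n0 + (K + 1) * S.card) *
          (C * (J + 1) / (r * |x - s0|)) ^ (J + 1) *
          (((n0 + (K + 1) * S.card : ℕ) : ℝ) + r + 2 * Real.pi * |c0|) ^ n := by
  classical
  have hJ : (0:ℝ) < (J:ℝ) + 1 := by positivity
  let ρ : ℝˣ := Units.mk0 (r / (J + 1)) (by positivity)
  have hρv : (ρ:ℝ) = r / (J + 1) := rfl
  have hρ : 0 < (ρ:ℝ) := by rw [hρv]; positivity
  obtain ⟨h, hh1, hh2⟩ := qcBL_pow (qcBL_S hgb ρ hρ s0) J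
  have hh1 : qcBL 0 r h := by
    convert hh1 using 1; rw [hρv]; field_simp
  obtain ⟨φ1, h11, h12⟩ := qc_mulprod (qcBL_E hh1 (-c0)) S (K + 1)
  obtain ⟨φ, hφ1, hφ2⟩ := qc_mulpow h11 s0 n0
  have hfun1 : ⇑φ = fun x : ℝ => ((x:ℂ) - s0) ^ n0 * φ1 x := funext hφ2
  refine ⟨φ, by simpa using hφ1, ?_, ?_, ?_, ?_⟩
  · intro s hs n hn
    have : ⇑φ = fun x : ℝ => ((x:ℂ) - s) ^ (K+1) * (((x:ℂ) - s0) ^ n0 * ((∏ t ∈ S.erase s, ((x:ℂ) - t) ^ (K+1)) * qcE (-c0) h x)) := by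
      ext x
      rw [hφ2, h12, ← Finset.mul_prod_erase S _ hs]; ring
    rw [this, qc_iter_zero_pow _ _ _ _ (by omega), if_neg (by omega)]
    refine (qc_powcd s0 n0 n).mul (ContDiff.mul ?_ (qc_cd _ _))
    exact contDiff_prod fun t _ => qc_powcd t (K+1) n
  · intro n hn
    rw [hfun1, qc_iter_zero_pow _ _ _ (qc_cd _ _) hn.le, if_neg hn.ne]
  · rw [hfun1, qc_iter_zero_pow _ _ _ (qc_cd _ _) le_rfl, if_pos rfl, h12, qcE_apply, hh2, qcS_apply]
    simp only [sub_self, mul_zero, hg1, one_pow, mul_one, norm_mul, Complex.norm_natCast, qe_norm, norm_prod, norm_pow]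
    congr 1
    refine Finset.prod_congr rfl fun s _ => ?_
    rw [← Complex.ofReal_sub, Complex.norm_real, Real.norm_eq_abs]
  · intro T x hT hx hs0T hST n hn
    have hne : x ≠ s0 := by rintro rfl; linarith
    have g1 := qcGB_pow (qcGB_lin K hT hx hs0T) n0
    have g2 := qcGB_prod S (fun s hs => qcGB_pow (qcGB_lin K hT hx (hST s hs)) (K+1))
    have g3 := qcGB_pow (qcGB_g hC hg ρ hρ s0 x hne) (J+1)
    have g4 := qcGB_e K x (-c0)
    have g5 := qcGB_mul g1 (qcGB_mul g2 (qcGB_mul g4 g3))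
    have hfun : ⇑φ = fun y : ℝ => ((y:ℂ) - s0) ^ n0 * ((∏ s ∈ S, ((y:ℂ) - s) ^ (K+1)) * (e2piR y (-c0) * (qcS ρ s0 g y) ^ (J+1))) := by
      ext y; rw [hφ2, h12, qcE_apply, hh2]
    rw [hfun]
    refine (g5.2.2.2 n hn).trans (le_of_eq ?_)
    congr 1
    · rw [one_mul, ← pow_mul, ← mul_assoc, ← pow_add, hρv]
      congr 2
      field_simp
    · congr 1
      rw [hρv, abs_neg]; push_cast; field_simp; ring


/-- annihilation of band limited functions -/
structure qcAnn (K : ℕ) (a : ℕ → ℝ → ℂ) (Λ : Set ℝ) (c r : ℝ) : Prop where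
  supp : ∀ n x, a n x ≠ 0 → x ∈ Λ
  growth : ∃ C ≥ (0:ℝ), ∃ A : ℕ, ∀ n x, ‖a n x‖ ≤ C * (1 + |x|) ^ A
  sum : ∀ φ : SchwartzMap ℝ ℂ, qcBL c r φ → HasSum (fun x : ℝ => ∑ n ∈ Finset.range (K + 1),
    a n x * iteratedDeriv n φ x) 0

lemma qc_count {η : ℝ} {S : Finset ℝ} (h : qcSep η S) (a b : ℝ) (hab : a ≤ b) (hS : ∀ s ∈ S, a ≤ s ∧ s ≤ b) :
    (S.card : ℝ) ≤ (b - a) / η + 1 := by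
  have hη := h.1
  have hm : ∀ s ∈ S, ⌊(s - a) / η⌋₊ ∈ Finset.range (⌊(b - a) / η⌋₊ + 1) := by
    intro s hs
    rw [Finset.mem_range, Nat.lt_succ_iff]
    apply Nat.floor_le_floor
    gcongr; exact (hS s hs).2
  have hinj : Set.InjOn (fun s : ℝ => ⌊(s - a) / η⌋₊) S := by
    intro x hx y hy hxy
    by_contra hne
    have h1 := h.2 x hx y hy hne
    simp only at hxy
    have a1 := Nat.floor_le (div_nonneg (sub_nonneg.2 (hS x hx).1) hη.le)
    have a2 := Nat.lt_floor_add_one ((x - a)/η)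
    have b1 := Nat.floor_le (div_nonneg (sub_nonneg.2 (hS y hy).1) hη.le)
    have b2 := Nat.lt_floor_add_one ((y - a)/η)
    rw [hxy] at a1 a2
    have h2 : |(x - a) / η - (y - a) / η| < 1 := by rw [abs_lt]; constructor <;> linarith
    rw [← sub_div, abs_div, abs_of_pos hη, div_lt_one hη] at h2
    have : x - a - (y - a) = x - y := by ring
    rw [this] at h2; linarith
  have := Finset.card_le_card_of_injOn _ hm hinj
  rw [Finset.card_range] at this
  have h3 : (S.card : ℝ) ≤ (⌊(b - a) / η⌋₊ : ℝ) + 1 := by exact_mod_cast this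
  have := Nat.floor_le (div_nonneg (sub_nonneg.2 hab) hη.le)
  linarith

lemma qc_sep_mono {η : ℝ} {A B : Set ℝ} (h : qcSep η B) (hAB : A ⊆ B) : qcSep η A :=
  ⟨h.1, fun x hx y hy => h.2 x (hAB hx) y (hAB hy)⟩

lemma qc_prod_lower {η : ℝ} (s0 : ℝ) : ∀ (m : ℕ) (S : Finset ℝ), S.card = m → s0 ∉ S → qcSep η (insert s0 S : Finset ℝ) →
    (η / 2) ^ m * m.factorial ≤ ∏ s ∈ S, |s0 - s| := by
  classical
  intro m
  induction m with
  | zero => intro S hS; rw [Finset.card_eq_zero] at hS; subst hS; simp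
  | succ m ih =>
    intro S hS hs0 hsep
    have hη := hsep.1
    have hne : S.Nonempty := by rw [← Finset.card_pos]; omega
    obtain ⟨t, htS, ht⟩ := Finset.exists_max_image S (fun s => |s0 - s|) hne
    have hcard : (S.erase t).card = m := by rw [Finset.card_erase_of_mem htS, hS]; rfl
    have h1 := ih (S.erase t) hcard (fun h => hs0 (Finset.mem_of_mem_erase h))
      (qc_sep_mono hsep (by exact_mod_cast Finset.insert_subset_insert _ (Finset.erase_subset _ _)))
    rw [← Finset.mul_prod_erase S _ htS]
    have h2 : η / 2 * (m + 1) ≤ |s0 - t| := by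
      have := qc_count hsep (s0 - |s0 - t|) (s0 + |s0 - t|) (by linarith [abs_nonneg (s0 - t)]) (by
        intro s hs
        rcases Finset.mem_insert.1 hs with rfl | hs
        · have := abs_nonneg (s - t); constructor <;> linarith
        · have := abs_le.1 (ht s hs)
          constructor <;> linarith [this.1, this.2])
      rw [Finset.card_insert_of_notMem hs0, hS] at this
      push_cast at this
      have h3 : (m:ℝ) + 1 ≤ (s0 + |s0 - t| - (s0 - |s0 - t|)) / η := by linarith
      rw [le_div_iff₀ hη] at h3
      linarith
    calc (η / 2) ^ (m + 1) * ((m + 1).factorial : ℝ) = (η / 2 * (m + 1)) * ((η / 2) ^ m * m.factorial) := by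
          rw [Nat.factorial_succ]; push_cast; ring
      _ ≤ _ := by gcongr

lemma qc_single_bound {F : ℝ → ℂ} (hF : HasSum F 0) (s0 : ℝ) {b : ℝ → ℝ} {B : ℝ} (hb : HasSum b B)
    (hb0 : ∀ x, 0 ≤ b x) (h : ∀ x, x ≠ s0 → ‖F x‖ ≤ b x) : ‖F s0‖ ≤ B := by
  classical
  have h1 := hF.update s0 0
  have h2 := tsum_of_norm_bounded hb (f := Function.update F s0 0) (fun x => by
    by_cases hx : x = s0
    · subst hx; simpa using hb0 x
    · rw [Function.update_of_ne hx]; exact h x hx)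
  rw [h1.tsum_eq] at h2
  simpa using h2

lemma qc_dens_ineq {K : ℕ} {g : SchwartzMap ℝ ℂ} {C : ℝ} (hC : 1 ≤ C) (hgb : qcBL 0 1 g) (hg1 : g 0 = 1)
    (hg : ∀ j ≤ K, ∀ y : ℝ, |y| * ‖iteratedDeriv j g y‖ ≤ C)
    {a : ℕ → ℝ → ℂ} {Λ : Set ℝ} {c0 r η : ℝ} (hr : 0 < r) (hs : qcSep η Λ) (hann : qcAnn K a Λ c0 r)
    (s0 : ℝ) (n0 : ℕ) (hn0 : n0 ≤ K) (hs0 : s0 ∈ Λ) (htop : ∀ n, n0 < n → n ≤ K → a n s0 = 0) :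
    ∃ D ≥ (0:ℝ), ∃ A : ℕ, ∀ (T : ℝ) (J : ℕ), 1 ≤ T → 2 * |s0| ≤ T →
      ((J:ℝ) + 1) ≤ r / (2 * Real.exp 1 * C) * T →
      ∀ m, m + 1 = (Λ ∩ Icc (-T) T).ncard →
      n0 + (K + 1) * m + (A + 2) ≤ J + 1 →
      ‖a n0 s0‖ ≤ D * (1 + ((n0 + (K + 1) * m : ℕ) : ℝ) + r + 2 * Real.pi * |c0|) ^ K *
        (2 * T) ^ (n0 + A + 2) * Real.exp (-((J:ℝ) + 1)) * ((4 * T / η) ^ m / m.factorial) ^ (K + 1) := by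
  classical
  obtain ⟨Ca, hCa, A, hgr⟩ := hann.growth
  have hη := hs.1
  have hσ := (qc_summable_sep hs).hasSum
  set σ := ∑' x, (Λ.indicator fun x : ℝ => ((1 + |x|) ^ 2)⁻¹) x with hσd
  have hind : ∀ x, 0 ≤ (Λ.indicator fun x : ℝ => ((1 + |x|) ^ 2)⁻¹) x := fun x =>
    Set.indicator_nonneg (fun _ _ => by positivity) x
  have hσ0 : 0 ≤ σ := tsum_nonneg hind
  refine ⟨(K + 1) * Ca * σ, by positivity, A, ?_⟩
  intro T J hT1 hT2 hJ m hm hN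
  have hT0 : 0 < T := by linarith
  have hfin := qc_fin_of_sep hs (-T) T
  set S := hfin.toFinset.erase s0 with hSd
  have hs0T : |s0| ≤ T := by have := abs_nonneg s0; linarith
  have hs0m : s0 ∈ hfin.toFinset := by
    rw [Set.Finite.mem_toFinset]; exact ⟨hs0, abs_le.1 hs0T⟩
  have hScard : S.card = m := by
    rw [hSd, Finset.card_erase_of_mem hs0m, ← Set.ncard_eq_toFinset_card _ hfin, ← hm]; rfl
  have hSm : ∀ s ∈ S, s ∈ Λ ∧ |s| ≤ T := by
    intro s hsS
    have := Finset.mem_of_mem_erase hsS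
    rw [Set.Finite.mem_toFinset] at this
    exact ⟨this.1, abs_le.2 this.2⟩
  have hs0S : s0 ∉ S := Finset.notMem_erase _ _
  obtain ⟨φ, hφ, hφ1, hφ2, hφ3, hφ4⟩ := qc_test hC hgb hg1 hg c0 r hr S s0 n0 J hn0 hs0S
  rw [hScard] at hφ4
  set N := n0 + (K + 1) * m with hNd
  set L : ℝ := (N:ℝ) + r + 2 * Real.pi * |c0| with hLd
  have hL : 0 ≤ L := by positivity
  have hsum := hann.sum φ hφ
  set E : ℝ := (K + 1) * Ca * (1 + L) ^ K * (2 * T) ^ N * Real.exp (-((J:ℝ) + 1)) * (2 * T) ^ (A + 2) with hE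
  have hE0 : 0 ≤ E := by positivity
  have hb := hσ.mul_left E
  have key := qc_single_bound hsum s0 hb (fun x => mul_nonneg hE0 (hind x)) ?_
  · have hF : ∑ n ∈ Finset.range (K + 1), a n s0 * iteratedDeriv n φ s0 = a n0 s0 * iteratedDeriv n0 φ s0 := by
      refine Finset.sum_eq_single_of_mem n0 (by simp; omega) ?_
      intro n hn hne
      rcases lt_or_gt_of_ne hne with h | h
      · rw [hφ2 n h, mul_zero]
      · rw [htop n h (by simp at hn; omega), zero_mul]
    rw [hF, norm_mul, hφ3] at key
    have hlow := qc_prod_lower (η := η) s0 m S hScard hs0S (qc_sep_mono hs (by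
      intro x hx
      rcases Finset.mem_insert.1 (Finset.mem_coe.1 hx) with rfl | h
      · exact hs0
      · exact (hSm x h).1))
    have hfac : (1:ℝ) ≤ n0.factorial := by exact_mod_cast Nat.one_le_iff_ne_zero.2 (Nat.factorial_ne_zero n0)
    have hmf : (0:ℝ) < m.factorial := by exact_mod_cast Nat.factorial_pos m
    have h5 : ‖a n0 s0‖ * ((η / 2) ^ m * m.factorial) ^ (K+1) ≤ E * σ := by
      refine le_trans ?_ key
      rw [Finset.prod_pow]
      gcongr
      calc ((η / 2) ^ m * m.factorial) ^ (K+1) = 1 * ((η / 2) ^ m * m.factorial) ^ (K+1) := (one_mul _).symm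
        _ ≤ _ := by gcongr
    have hpos : 0 < ((η / 2) ^ m * (m.factorial:ℝ)) ^ (K+1) := by positivity
    rw [← le_div_iff₀ hpos] at h5
    refine h5.trans (le_of_eq ?_)
    have e1 : (4 * T / η) ^ m = (2 * T) ^ m / (η / 2) ^ m := by
      rw [← div_pow]; congr 1; field_simp; ring
    rw [e1, hE]
    have e2 : (2 * T) ^ N = (2 * T) ^ n0 * ((2 * T) ^ m) ^ (K+1) := by
      rw [hNd, pow_add, mul_comm (K+1) m, pow_mul]
    have e3 : (1 + (N:ℝ) + r + 2 * Real.pi * |c0|) = 1 + L := by rw [hLd]; ring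
    rw [e2, e3, div_div, div_pow]
    ring
  · intro x hxs
    have hzero : (∀ n, n ≤ K → a n x * iteratedDeriv n φ x = 0) →
        ‖∑ n ∈ Finset.range (K + 1), a n x * iteratedDeriv n φ x‖ ≤ E * Λ.indicator (fun x : ℝ => ((1 + |x|) ^ 2)⁻¹) x := by
      intro h
      rw [Finset.sum_eq_zero fun n hn => h n (by simp at hn; omega), norm_zero]
      exact mul_nonneg hE0 (hind x)
    by_cases hxΛ : x ∈ Λ
    swap
    · apply hzero
      intro n _
      have : a n x = 0 := by by_contra h; exact hxΛ (hann.supp n x h)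
      rw [this, zero_mul]
    by_cases hxT : |x| ≤ T
    · apply hzero
      intro n hn
      rw [hφ1 x _ n hn, mul_zero]
      rw [hSd, Finset.mem_erase, Set.Finite.mem_toFinset]
      exact ⟨hxs, hxΛ, abs_le.1 hxT⟩
    push Not at hxT
    have hx0 : 0 < |x| := by linarith
    rw [Set.indicator_of_mem hxΛ]
    -- main estimate
    have hd : |x| / 2 ≤ |x - s0| := by
      have := abs_sub_abs_le_abs_sub x s0; linarith
    have hq : C * (J + 1) / (r * |x - s0|) ≤ T / (Real.exp 1 * |x|) := by
      have he := Real.exp_pos 1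
      rw [div_le_div_iff₀ (by nlinarith) (by positivity)]
      have h1 : C * (J + 1) * (2 * Real.exp 1) ≤ r * T := by
        have : r / (2 * Real.exp 1 * C) * T = r * T / (2 * Real.exp 1 * C) := by ring
        rw [this, le_div_iff₀ (by positivity)] at hJ
        linarith
      calc C * (J + 1) * (Real.exp 1 * |x|) = C * (J + 1) * (2 * Real.exp 1) * (|x| / 2) := by ring
        _ ≤ (r * T) * |x - s0| := by gcongr
        _ = _ := by ring
    have hmain : (2 * |x|) ^ N * (T / (Real.exp 1 * |x|)) ^ (J + 1) ≤
        (2 * T) ^ N * Real.exp (-((J:ℝ) + 1)) * ((2 * T) ^ (A + 2) / (1 + |x|) ^ (A + 2)) := by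
      have e1 : (T / (Real.exp 1 * |x|)) ^ (J+1) = Real.exp (-((J:ℝ) + 1)) * (T / |x|) ^ (J+1) := by
        have : T / (Real.exp 1 * |x|) = Real.exp (-1) * (T / |x|) := by
          rw [Real.exp_neg]; field_simp
        rw [this, mul_pow, ← Real.exp_nat_mul]; congr 2; push_cast; ring
      have e2 : (2 * |x|) ^ N = (2 * T) ^ N * (|x| / T) ^ N := by
        rw [← mul_pow]; congr 1; field_simp
      have hle1 : T / |x| ≤ 1 := (div_le_one hx0).2 hxT.le
      have e3 : (|x| / T) ^ N * (T / |x|) ^ (J + 1) ≤ (T / |x|) ^ (A + 2) := by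
        obtain ⟨k, hk⟩ := Nat.exists_eq_add_of_le hN
        have : (|x| / T) ^ N * (T / |x|) ^ N = 1 := by
          rw [← mul_pow]; rw [show |x| / T * (T / |x|) = 1 by field_simp]; simp
        rw [hk, pow_add (T / |x|), pow_add (T / |x|), ← mul_assoc, ← mul_assoc, this, one_mul]
        exact mul_le_of_le_one_right (by positivity) (pow_le_one₀ (by positivity) hle1)
      have e4 : T / |x| ≤ 2 * T / (1 + |x|) := by
        rw [div_le_div_iff₀ hx0 (by positivity)]; nlinarith
      rw [e1, e2]
      calc _ = (2 * T) ^ N * Real.exp (-((J:ℝ) + 1)) * ((|x| / T) ^ N * (T / |x|) ^ (J + 1)) := by ring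
        _ ≤ (2 * T) ^ N * Real.exp (-((J:ℝ) + 1)) * (2 * T / (1 + |x|)) ^ (A + 2) := by
            gcongr; exact e3.trans (by gcongr)
        _ = _ := by rw [div_pow]
    have hterm : ∀ n ∈ Finset.range (K+1), ‖a n x * iteratedDeriv n φ x‖ ≤ (Ca * (1 + |x|) ^ A) *
        ((2 * T) ^ N * Real.exp (-((J:ℝ) + 1)) * ((2 * T) ^ (A + 2) / (1 + |x|) ^ (A + 2)) * (1 + L) ^ K) := by
      intro n hn
      have hnK : n ≤ K := by simp at hn; omega
      rw [norm_mul]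
      have h1 := hφ4 T x hT1 hxT hs0T (fun s hs => (hSm s hs).2) n hnK
      gcongr
      · exact hgr n x
      · refine h1.trans ?_
        refine mul_le_mul ?_ ?_ (by positivity) (by positivity)
        · refine le_trans ?_ hmain
          gcongr
        · calc L ^ n ≤ (1 + L) ^ n := by gcongr; linarith
            _ ≤ (1 + L) ^ K := pow_le_pow_right₀ (by linarith) hnK
    refine (norm_sum_le _ _).trans ((Finset.sum_le_sum hterm).trans (le_of_eq ?_))
    rw [Finset.sum_const, Finset.card_range, nsmul_eq_mul, hE, pow_add (1 + |x|)]
    push_cast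
    field_simp


lemma qc_decay_lim (b G : ℝ) (hb : 0 < b) (n : ℕ) : Tendsto (fun T : ℝ => G * (T ^ n * Real.exp (-(b * T)))) atTop (𝓝 0) := by
  have h1 := (Real.tendsto_pow_mul_exp_neg_atTop_nhds_zero n).comp (tendsto_id.const_mul_atTop hb)
  have h2 := h1.const_mul (G * (b⁻¹) ^ n)
  rw [mul_zero] at h2
  refine h2.congr fun T => ?_
  simp only [Function.comp, id, mul_pow]
  have : b⁻¹ ^ n * b ^ n = 1 := by rw [← mul_pow, inv_mul_cancel₀ hb.ne', one_pow]
  calc _ = G * (b⁻¹ ^ n * b ^ n) * (T ^ n * Real.exp (-(b * T))) := by ring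
    _ = _ := by rw [this]; ring

theorem qc_density (K : ℕ) : ∃ κ > (0:ℝ), ∀ (η : ℝ) (Λ : Set ℝ) (a : ℕ → ℝ → ℂ) (c0 r : ℝ), qcSep η Λ → 0 < r →
    qcAnn K a Λ c0 r → ∀ δ c : ℝ, 0 < δ → δ ≤ Real.exp (-1) → 0 ≤ c →
    (K + 1) * (4 * δ / η + c * Real.log (1 / δ)) ≤ κ * r / 2 → (∃ n ≤ K, ∃ x, a n x ≠ 0) →
    ∃ T0 : ℝ, ∀ T ≥ T0, c * T < ((Λ ∩ Icc (-T) T).ncard : ℝ) := by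
  classical
  obtain ⟨g, C, hC, hgb, hg1, hg⟩ := qc_g0 K
  have he := Real.exp_pos 1
  refine ⟨1 / (2 * Real.exp 1 * C), by positivity, ?_⟩
  intro η Λ a c0 r hs hr hann δ c hδ hδ1 hc hcond ⟨n1, hn1, s0, hne⟩
  set θ : ℝ := r / (2 * Real.exp 1 * C) with hθ
  have hθ' : 1 / (2 * Real.exp 1 * C) * r = θ := by rw [hθ]; ring
  rw [hθ'] at hcond
  have hθ0 : 0 < θ := by positivity
  have hη := hs.1
  have hlog : 1 ≤ Real.log (1 / δ) := by
    rw [Real.le_log_iff_exp_le (by positivity), le_div_iff₀ hδ]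
    calc Real.exp 1 * δ ≤ Real.exp 1 * Real.exp (-1) := by gcongr
      _ = 1 := by rw [← Real.exp_add]; simp
  -- top degree
  obtain ⟨n0, hn0m, hn0max⟩ := Finset.exists_max_image ((Finset.range (K+1)).filter fun n => a n s0 ≠ 0) id
    ⟨n1, by simp [hne]; omega⟩
  simp only [Finset.mem_filter, Finset.mem_range, id] at hn0m hn0max
  obtain ⟨D, hD, A, hineq⟩ := qc_dens_ineq hC hgb hg1 hg hr hs hann s0 n0 (by omega) (hann.supp _ _ hne)
    (fun n hn hnK => by by_contra h; have := hn0max n ⟨by omega, h⟩; omega)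
  set G : ℝ := 1 + n0 + (K + 1) * c + r + 2 * Real.pi * |c0| with hG
  have hG0 : 0 ≤ G := by positivity
  have hlim := qc_decay_lim (θ / 2) (D * G ^ K * 2 ^ (n0 + A + 2) * Real.exp 1) (by positivity) (K + (n0 + A + 2))
  have hapos : 0 < ‖a n0 s0‖ := norm_pos_iff.2 hn0m.2
  have hev := hlim.eventually (gt_mem_nhds hapos)
  have hall := (hev.and (eventually_ge_atTop (max 1 (max (2 * |s0|) ((n0 + A + 4) * (2 / θ))))))
  obtain ⟨T0, hT0⟩ := eventually_atTop.1 hall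
  refine ⟨T0, fun T hT => ?_⟩
  obtain ⟨h1, h2⟩ := hT0 T hT
  by_contra hcon
  push Not at hcon
  have hT1 : 1 ≤ T := (le_max_left _ _).trans h2
  have hTs : 2 * |s0| ≤ T := (le_max_left _ _).trans ((le_max_right _ _).trans h2)
  have hTb : (n0 + A + 4) * (2 / θ) ≤ T := (le_max_right _ _).trans ((le_max_right _ _).trans h2)
  have hTb' : (n0 + A + 4 : ℝ) ≤ θ * T / 2 := by
    rw [← mul_div_assoc, div_le_iff₀ hθ0] at hTb; linarith
  have hfl := Nat.floor_le (show 0 ≤ θ * T by positivity)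
  have hfl2 := Nat.lt_floor_add_one (θ * T)
  have hn0n : (0:ℝ) ≤ n0 := by positivity
  have hAn : (0:ℝ) ≤ A := by positivity
  have hflpos : 1 ≤ ⌊θ * T⌋₊ := by
    rw [Nat.one_le_floor_iff]; linarith
  obtain ⟨J, hJ⟩ := Nat.exists_eq_add_of_le' hflpos
  have hJr : ((J:ℝ) + 1) = (⌊θ * T⌋₊ : ℝ) := by rw [hJ]; push_cast; ring
  have hfin := qc_fin_of_sep hs (-T) T
  have hncpos : 1 ≤ (Λ ∩ Icc (-T) T).ncard := by
    rw [Nat.one_le_iff_ne_zero, ← Nat.pos_iff_ne_zero, Set.ncard_pos hfin]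
    refine ⟨s0, hann.supp _ _ hne, abs_le.1 ?_⟩
    have := abs_nonneg s0; linarith
  obtain ⟨m, hm⟩ := Nat.exists_eq_add_of_le' hncpos
  have hmc : (m:ℝ) ≤ c * T := by
    rw [hm] at hcon; push_cast at hcon; linarith
  have hKc : (K + 1) * c ≤ θ / 2 := by
    refine le_trans ?_ hcond
    have h4 : c ≤ c * Real.log (1 / δ) := le_mul_of_one_le_right hc hlog
    have h5 : 0 ≤ 4 * δ / η := by positivity
    gcongr; linarith
  have hN : n0 + (K + 1) * m + (A + 2) ≤ J + 1 := by
    have : ((n0 + (K + 1) * m + (A + 2) : ℕ) : ℝ) ≤ ((J + 1 : ℕ) : ℝ) := by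
      push_cast
      rw [hJr]
      have : ((K:ℝ) + 1) * m ≤ θ / 2 * T := by
        calc ((K:ℝ) + 1) * m ≤ (K + 1) * (c * T) := by gcongr
          _ = ((K + 1) * c) * T := by ring
          _ ≤ _ := by gcongr
      linarith
    exact_mod_cast this
  have key := hineq T J hT1 hTs (by rw [hJr]; exact hfl) m hm.symm hN
  have hpow : ((4 * T / η) ^ m / m.factorial) ^ (K + 1) ≤ Real.exp (θ * T / 2) := by
    have e1 : (4 * T / η) ^ m / m.factorial ≤ Real.exp (m * Real.log (1 / δ) + 4 * δ * T / η) := by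
      have h3 := Real.pow_div_factorial_le_exp (4 * δ * T / η) (by positivity) m
      have h4 : Real.exp (m * Real.log (1 / δ)) = (1 / δ) ^ m := by
        rw [Real.exp_nat_mul, Real.exp_log (by positivity)]
      rw [Real.exp_add, h4]
      calc (4 * T / η) ^ m / m.factorial = (1 / δ) ^ m * ((4 * δ * T / η) ^ m / m.factorial) := by
            rw [← mul_div_assoc, ← mul_pow]; congr 2; field_simp
        _ ≤ _ := by gcongr
    calc _ ≤ (Real.exp (m * Real.log (1 / δ) + 4 * δ * T / η)) ^ (K+1) := by gcongr
      _ = Real.exp (((K + 1 : ℕ):ℝ) * (m * Real.log (1 / δ) + 4 * δ * T / η)) := by rw [← Real.exp_nat_mul]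
      _ ≤ _ := by
        apply Real.exp_le_exp.2
        push_cast
        calc ((K:ℝ) + 1) * (m * Real.log (1 / δ) + 4 * δ * T / η)
            ≤ (K + 1) * ((c * T) * Real.log (1 / δ) + 4 * δ * T / η) := by gcongr
          _ = ((K + 1) * (4 * δ / η + c * Real.log (1 / δ))) * T := by ring
          _ ≤ θ / 2 * T := by gcongr
          _ = _ := by ring
  have hexp : Real.exp (-((J:ℝ) + 1)) ≤ Real.exp 1 * Real.exp (-(θ * T)) := by
    rw [← Real.exp_add]; apply Real.exp_le_exp.2; rw [hJr]; linarith
  have hpoly : (1 + ((n0 + (K + 1) * m : ℕ) : ℝ) + r + 2 * Real.pi * |c0|) ≤ G * T := by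
    push_cast
    have : ((K:ℝ) + 1) * m ≤ (K + 1) * (c * T) := by gcongr
    have hp : 0 ≤ 2 * Real.pi * |c0| := by positivity
    rw [hG]
    nlinarith [mul_nonneg hn0n (sub_nonneg.2 hT1), mul_nonneg hr.le (sub_nonneg.2 hT1), mul_nonneg hp (sub_nonneg.2 hT1)]
  have : ‖a n0 s0‖ ≤ D * (G * T) ^ K * (2 * T) ^ (n0 + A + 2) * (Real.exp 1 * Real.exp (-(θ * T))) * Real.exp (θ * T / 2) := by
    refine key.trans ?_
    gcongr
  have h7 : Real.exp (-(θ * T)) * Real.exp (θ * T / 2) = Real.exp (-(θ / 2 * T)) := by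
    rw [← Real.exp_add]; congr 1; ring
  have h8 : D * (G * T) ^ K * (2 * T) ^ (n0 + A + 2) * (Real.exp 1 * Real.exp (-(θ * T))) * Real.exp (θ * T / 2)
     = D * G ^ K * 2 ^ (n0 + A + 2) * Real.exp 1 * (T ^ (K + (n0 + A + 2)) * Real.exp (-(θ / 2 * T))) := by
    rw [← h7, mul_pow, mul_pow, pow_add T]; ring
  rw [h8] at this
  linarith

lemma qc_ncard_le {η : ℝ} {Λ : Set ℝ} (h : qcSep η Λ) (a b : ℝ) (hab : a ≤ b) :
    ((Λ ∩ Icc a b).ncard : ℝ) ≤ (b - a) / η + 1 := by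
  have hfin := qc_fin_of_sep h a b
  rw [Set.ncard_eq_toFinset_card _ hfin]
  apply qc_count _ a b hab
  · intro s hs
    rw [Set.Finite.mem_toFinset] at hs
    exact hs.2
  · refine qc_sep_mono h ?_
    intro x hx
    rw [Set.Finite.coe_toFinset] at hx
    exact hx.1

theorem qc_uniq (K : ℕ) (η : ℝ) (hη : 0 < η) : ∃ r0 > (0:ℝ), ∀ (Λ : Set ℝ) (a : ℕ → ℝ → ℂ) (c0 r : ℝ), qcSep η Λ →
    r0 ≤ r → qcAnn K a Λ c0 r → ∀ n ≤ K, ∀ x, a n x = 0 := by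
  obtain ⟨κ, hκ, hd⟩ := qc_density K
  refine ⟨2 * ((K + 1) * (4 * Real.exp (-1) / η + 3 / η)) / κ, by positivity, ?_⟩
  intro Λ a c0 r hs hr hann
  by_contra hcon
  push Not at hcon
  rw [div_le_iff₀ hκ] at hr
  have hr0 : 0 < r := by
    have : 0 < 2 * ((K + 1) * (4 * Real.exp (-1) / η + 3 / η)) := by positivity
    by_contra h
    push Not at h
    nlinarith
  obtain ⟨T0, hT⟩ := hd η Λ a c0 r hs hr0 hann (Real.exp (-1)) (3 / η) (by positivity) le_rfl (by positivity) (by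
    rw [one_div, ← Real.exp_neg, Real.log_exp]
    simp only [neg_neg, mul_one]; linarith) hcon
  have h1 := hT (max T0 (max η 1)) (le_max_left _ _)
  set T := max T0 (max η 1)
  have hTη : η ≤ T := (le_max_left _ _).trans (le_max_right _ _)
  have h2 := qc_ncard_le hs (-T) T (by linarith)
  have h3 : 1 ≤ T / η := by rwa [one_le_div hη]
  have h4 : (T - -T) / η = 2 * (T / η) := by ring
  have h5 : 3 / η * T = 3 * (T / η) := by ring
  rw [h4] at h2; rw [h5] at h1; linarith

theorem qc_dens (K : ℕ) (η r : ℝ) (hη : 0 < η) (hr : 0 < r) : ∃ c > (0:ℝ), ∀ (Λ : Set ℝ) (a : ℕ → ℝ → ℂ) (c0 : ℝ),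
    qcSep η Λ → qcAnn K a Λ c0 r → (∃ n ≤ K, ∃ x, a n x ≠ 0) →
    ∃ T0 : ℝ, ∀ T ≥ T0, c * T < ((Λ ∩ Icc (-T) T).ncard : ℝ) := by
  obtain ⟨κ, hκ, hd⟩ := qc_density K
  set δ := min (Real.exp (-1)) (κ * r * η / (16 * (K + 1))) with hδ
  have hδ0 : 0 < δ := lt_min (Real.exp_pos _) (by positivity)
  have hδ1 : δ ≤ Real.exp (-1) := min_le_left _ _
  have hδ2 : δ ≤ κ * r * η / (16 * (K + 1)) := min_le_right _ _
  have hlog : 0 < Real.log (1 / δ) := by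
    apply Real.log_pos
    rw [one_lt_div hδ0]
    exact hδ1.trans_lt (by rw [Real.exp_lt_one_iff]; norm_num)
  refine ⟨κ * r / (4 * (K + 1) * Real.log (1 / δ)), by positivity, ?_⟩
  intro Λ a c0 hs hann hne
  refine hd η Λ a c0 r hs hr hann δ _ hδ0 hδ1 (by positivity) ?_ hne
  have h1 : ((K:ℝ) + 1) * (4 * δ / η) ≤ κ * r / 4 := by
    calc ((K:ℝ) + 1) * (4 * δ / η) ≤ (K + 1) * (4 * (κ * r * η / (16 * (K + 1))) / η) := by gcongr
      _ = _ := by field_simp; norm_num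
  have h2 : ((K:ℝ) + 1) * (κ * r / (4 * (K + 1) * Real.log (1 / δ)) * Real.log (1 / δ)) = κ * r / 4 := by
    field_simp
  rw [mul_add, h2]; linarith


lemma qc_gN (N : ℕ) : ∃ g : SchwartzMap ℝ ℂ, qcBL 0 1 g ∧ iteratedDeriv N g 0 = 1 := by
  obtain ⟨g, C, -, hb, h1, -⟩ := qc_g0 0
  obtain ⟨φ, h2, h3⟩ := qc_mulpow hb 0 N
  refine ⟨(N.factorial : ℂ)⁻¹ • φ, qcBL_smul h2 _, ?_⟩
  have hf : ⇑φ = fun x : ℝ => ((x:ℂ) - (0:ℝ)) ^ N * g x := funext h3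
  have e : ⇑((N.factorial : ℂ)⁻¹ • φ) = fun x => (N.factorial : ℂ)⁻¹ * φ x := by ext x; simp
  rw [e, iteratedDeriv_const_mul_field, hf, qc_iter_zero_pow _ _ _ (qc_cd _ _) le_rfl, if_pos rfl, h1, mul_one]
  exact inv_mul_cancel₀ (by exact_mod_cast Nat.factorial_ne_zero N)

lemma qc_wt (x y : ℝ) : 1 + |x| ≤ (1 + |x - y|) * (1 + |y|) := by
  have : |x| ≤ |x - y| + |y| := by simpa using abs_add_le (x - y) y
  nlinarith [abs_nonneg (x-y), abs_nonneg y]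

lemma qc_X_top (N B : ℕ) (b : ℕ → ℝ → ℂ) (hb : ∀ k, Summable fun s : ℝ => ‖b k s‖ * ((1 + |s|) ^ B)⁻¹)
    (h : ∀ ψ : SchwartzMap ℝ ℂ, (∃ R, qcBL 0 R ψ) → ∑ k ∈ Finset.range (N + 1), ∑' s, b k s * iteratedDeriv k ψ s = 0) (s : ℝ) :
    b N s = 0 := by
  obtain ⟨g, hg, hgN⟩ := qc_gN N
  obtain ⟨M, hM, hdec⟩ := qc_decay g N (B + 1)
  let u : ℕ → ℝˣ := fun m => Units.mk0 ((m:ℝ) + 1) (by positivity)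
  have hu : ∀ m, ((u m : ℝˣ) : ℝ) = (m:ℝ) + 1 := fun m => rfl
  let ψ : ℕ → SchwartzMap ℝ ℂ := fun m => (((m:ℂ) + 1)⁻¹ ^ N) • qcS (u m) s g
  have hψ : ∀ m, ∑ k ∈ Finset.range (N + 1), ∑' x, b k x * iteratedDeriv k (ψ m) x = 0 := fun m =>
    h _ ⟨(u m : ℝ) * 1, qcBL_smul (qcBL_S hg (u m) (by rw [hu]; positivity) s) _⟩
  have hd : ∀ m k, k ≤ N → ∀ x, iteratedDeriv k (ψ m) x = ((m:ℂ) + 1)⁻¹ ^ (N - k) * iteratedDeriv k g (((m:ℝ) + 1) * (x - s)) := by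
    intro m k hk x
    have e : ⇑(ψ m) = fun x => (((m:ℂ) + 1)⁻¹ ^ N) * qcS (u m) s g x := by ext x; simp [ψ]
    rw [e, iteratedDeriv_const_mul_field, qcS_deriv, hu, ← mul_assoc]
    congr 1
    have hne : ((m:ℂ) + 1) ≠ 0 := by exact_mod_cast Nat.succ_ne_zero m
    have : N = (N - k) + k := by omega
    conv_lhs => rw [this]
    push_cast
    rw [pow_add, mul_assoc, ← mul_pow, inv_mul_cancel₀ hne, one_pow, mul_one]
  have hinv : ∀ m : ℕ, ‖((m:ℂ) + 1)⁻¹‖ = ((m:ℝ) + 1)⁻¹ := by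
    intro m
    rw [norm_inv]
    have : ((m:ℂ) + 1) = (((m:ℝ) + 1 : ℝ) : ℂ) := by push_cast; ring
    rw [this, Complex.norm_real, Real.norm_of_nonneg (by positivity)]
  have hinv1 : ∀ m : ℕ, ((m:ℝ) + 1)⁻¹ ≤ 1 := fun m =>
    inv_le_one_of_one_le₀ (by have : (0:ℝ) ≤ m := by positivity
                              linarith)
  -- bound
  have hbd : ∀ m k, k ≤ N → ∀ x, ‖b k x * iteratedDeriv k (ψ m) x‖ ≤ (M * (1 + |s|) ^ B) * (‖b k x‖ * ((1 + |x|) ^ B)⁻¹) := by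
    intro m k hk x
    rw [norm_mul, hd m k hk x, norm_mul, norm_pow, hinv]
    have h1 := hdec k hk (((m:ℝ) + 1) * (x - s))
    have h2 : (1 + |x|) ^ B ≤ (1 + |((m:ℝ) + 1) * (x - s)|) ^ (B + 1) * (1 + |s|) ^ B := by
      calc (1 + |x|) ^ B ≤ ((1 + |x - s|) * (1 + |s|)) ^ B := by gcongr; exact qc_wt x s
        _ = (1 + |x - s|) ^ B * (1 + |s|) ^ B := mul_pow _ _ _
        _ ≤ (1 + |((m:ℝ) + 1) * (x - s)|) ^ B * (1 + |s|) ^ B := by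
            have hh : |x - s| ≤ |((m:ℝ) + 1) * (x - s)| := by
              rw [abs_mul]
              refine le_mul_of_one_le_left (abs_nonneg _) ?_
              rw [abs_of_nonneg (by positivity)]
              have : (0:ℝ) ≤ m := by positivity
              linarith
            exact mul_le_mul_of_nonneg_right (pow_le_pow_left₀ (by positivity) (by linarith) B) (by positivity)
        _ ≤ _ := by
            gcongr
            · linarith [abs_nonneg (((m:ℝ) + 1) * (x - s))]
            · omega
    have h3 : ‖iteratedDeriv k g (((m:ℝ) + 1) * (x - s))‖ ≤ M * (1 + |s|) ^ B * ((1 + |x|) ^ B)⁻¹ := by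
      rw [← div_eq_mul_inv, le_div_iff₀ (by positivity)]
      calc _ ≤ ‖iteratedDeriv k g (((m:ℝ) + 1) * (x - s))‖ * ((1 + |((m:ℝ) + 1) * (x - s)|) ^ (B + 1) * (1 + |s|) ^ B) := by gcongr
        _ = ((1 + |((m:ℝ) + 1) * (x - s)|) ^ (B + 1) * ‖iteratedDeriv k g (((m:ℝ) + 1) * (x - s))‖) * (1 + |s|) ^ B := by ring
        _ ≤ _ := by gcongr
    calc _ ≤ ‖b k x‖ * (1 * (M * (1 + |s|) ^ B * ((1 + |x|) ^ B)⁻¹)) := by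
          gcongr
          exact pow_le_one₀ (by positivity) (hinv1 m)
      _ = _ := by ring
  have hlim0 : Tendsto (fun m : ℕ => ((m:ℝ) + 1)⁻¹) atTop (𝓝 0) := by
    simpa using tendsto_one_div_add_atTop_nhds_zero_nat (𝕜 := ℝ)
  have hpt : ∀ k, k ≤ N → ∀ x, Tendsto (fun m => b k x * iteratedDeriv k (ψ m) x) atTop
      (𝓝 (if k = N ∧ x = s then b N s else 0)) := by
    intro k hk x
    by_cases hx : x = s
    · subst hx
      by_cases hkN : k = N
      · subst hkN
        simp only [and_self, if_true]
        refine tendsto_const_nhds.congr fun m => ?_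
        rw [hd m k le_rfl]; simp [hgN]
      · simp only [hkN, false_and, if_false]
        rw [tendsto_zero_iff_norm_tendsto_zero]
        have h5 := (hlim0.pow (N - k)).const_mul (‖b k x‖ * ‖iteratedDeriv k g 0‖)
        rw [zero_pow (by omega), mul_zero] at h5
        refine h5.congr fun m => ?_
        rw [hd m k hk, norm_mul, norm_mul, norm_pow, hinv, sub_self, mul_zero]; ring
    · simp only [hx, and_false, if_false]
      have hxs : 0 < |x - s| := abs_pos.2 (sub_ne_zero.2 hx)
      refine squeeze_zero_norm (a := fun m : ℕ => ‖b k x‖ * (M / |x - s|) * ((m:ℝ) + 1)⁻¹) (fun m => ?_) ?_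
      · rw [hd m k hk, norm_mul, norm_mul, norm_pow, hinv]
        have h1 := hdec k hk (((m:ℝ) + 1) * (x - s))
        have h3 : ‖iteratedDeriv k g (((m:ℝ) + 1) * (x - s))‖ ≤ (M / |x - s|) * ((m:ℝ) + 1)⁻¹ := by
          rw [← div_eq_mul_inv, div_div, le_div_iff₀ (by positivity)]
          refine le_trans ?_ h1
          rw [mul_comm]
          gcongr
          have e1 : |((m:ℝ) + 1) * (x - s)| = |x - s| * (m + 1) := by
            rw [abs_mul, abs_of_nonneg (by positivity), mul_comm]
          rw [e1]
          have h0 : 0 ≤ |x - s| * ((m:ℝ) + 1) := by positivity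
          calc |x - s| * ((m:ℝ) + 1) ≤ 1 + |x - s| * ((m:ℝ) + 1) := by linarith
            _ ≤ _ := le_self_pow₀ (by linarith) (by omega)
        calc _ ≤ ‖b k x‖ * (1 * ((M / |x - s|) * ((m:ℝ) + 1)⁻¹)) := by
              gcongr
              exact pow_le_one₀ (by positivity) (hinv1 m)
          _ = _ := by ring
      · simpa using hlim0.const_mul (‖b k x‖ * (M / |x - s|))
  have hfin : Tendsto (fun m => ∑ k ∈ Finset.range (N + 1), ∑' x, b k x * iteratedDeriv k (ψ m) x) atTop
      (𝓝 (∑ k ∈ Finset.range (N + 1), ∑' x, if k = N ∧ x = s then b N s else 0)) := by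
    refine tendsto_finsetSum _ fun k hk => ?_
    have hkN : k ≤ N := by simp at hk; omega
    exact tendsto_tsum_of_dominated_convergence ((hb k).mul_left _) (hpt k hkN)
      (Eventually.of_forall fun m => hbd m k hkN)
  simp only [hψ] at hfin
  have := tendsto_nhds_unique hfin tendsto_const_nhds
  rw [Finset.sum_eq_single_of_mem N (by simp)] at this
  · simpa using this
  · intro k _ hk
    simp [hk]

lemma qc_X (B : ℕ) (b : ℕ → ℝ → ℂ) (hb : ∀ k, Summable fun s : ℝ => ‖b k s‖ * ((1 + |s|) ^ B)⁻¹) : ∀ (N : ℕ),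
    (∀ ψ : SchwartzMap ℝ ℂ, (∃ R, qcBL 0 R ψ) → ∑ k ∈ Finset.range N, ∑' s, b k s * iteratedDeriv k ψ s = 0) →
    ∀ k < N, ∀ s, b k s = 0 := by
  intro N
  induction N with
  | zero => intro _ k hk; omega
  | succ N ih =>
    intro h
    have htop := qc_X_top N B b hb h
    intro k hk s
    rcases Nat.lt_succ_iff_lt_or_eq.1 hk with hk | rfl
    · refine ih (fun ψ hψ => ?_) k hk s
      have := h ψ hψ
      rw [Finset.sum_range_succ] at this
      simpa [htop] using this
    · exact htop s


lemma qc_fhat (f : TemperedDistR) (φ : SchwartzMap ℝ ℂ) : f φ = fourierTDR f (𝓕⁻ φ) := by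
  simp [fourierTDR, fourierTransformCLM_apply]

lemma qc_dbl (Bd : ℕ) (w : ℝ → ℝ) (hw0 : ∀ x, 0 ≤ w x) (hw1 : ∀ x, w x ≤ 1) (hw : Summable w) (c : ℕ → ℝ → ℝ → ℂ) (M : ℝ)
    (hM : 0 ≤ M) (hc : ∀ k x y, ‖c k x y‖ ≤ M * (w x * w y) * (1 + |x + y|) ^ Bd) (N : ℕ)
    (h : ∀ ψ : SchwartzMap ℝ ℂ, (∃ R, qcBL 0 R ψ) →
      ∑' x, ∑' y, ∑ k ∈ Finset.range N, c k x y * iteratedDeriv k ψ (x + y) = 0) :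
    ∀ k < N, ∀ s, HasSum (fun x => c k x (s - x)) 0 := by
  have hww : Summable fun q : ℝ × ℝ => w q.1 * w q.2 := hw.mul_of_nonneg hw hw0 hw0
  let e : ℝ × ℝ ≃ ℝ × ℝ :=
    { toFun := fun q => (q.2, q.1 - q.2)
      invFun := fun q => (q.1 + q.2, q.1)
      left_inv := fun q => by ext <;> simp
      right_inv := fun q => by ext <;> simp }
  have he : ∀ q, e q = (q.2, q.1 - q.2) := fun q => rfl
  have hwe : Summable fun q : ℝ × ℝ => w q.2 * w (q.1 - q.2) := e.summable_iff.2 hww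
  have hs1 : ∀ k s, Summable fun x => c k x (s - x) := by
    intro k s
    refine Summable.of_norm_bounded (g := fun x => M * (1 + |s|) ^ Bd * w x) (hw.mul_left _) fun x => ?_
    refine (hc k x (s - x)).trans ?_
    rw [add_sub_cancel]
    calc _ ≤ M * (w x * 1) * (1 + |s|) ^ Bd := by
          gcongr
          · exact hw0 x
          · exact hw1 _
      _ = _ := by ring
  let b : ℕ → ℝ → ℂ := fun k s => ∑' x, c k x (s - x)
  have hb : ∀ k, Summable fun s : ℝ => ‖b k s‖ * ((1 + |s|) ^ Bd)⁻¹ := by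
    intro k
    refine Summable.of_nonneg_of_le (fun s => by positivity) (fun s => ?_) ((hwe.prod).mul_left M)
    rw [← div_eq_mul_inv, div_le_iff₀ (by positivity)]
    have h3 : Summable fun x => w x * w (s - x) := hwe.prod_factor s
    refine tsum_of_norm_bounded (g := fun x => M * (w x * w (s - x)) * (1 + |s|) ^ Bd) ?_ fun x => ?_
    · exact (h3.hasSum.mul_left M).mul_right _
    · have := hc k x (s - x)
      rwa [add_sub_cancel] at this
  have hz := qc_X Bd b hb N (fun ψ hψ => ?_)
  · intro k hk s
    have := (hs1 k s).hasSum
    rwa [show ∑' x, c k x (s - x) = 0 from hz k hk s] at this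
  · rw [← h ψ hψ]
    have hF : ∀ k, Summable fun q : ℝ × ℝ => c k q.1 q.2 * iteratedDeriv k ψ (q.1 + q.2) := by
      intro k
      obtain ⟨M', hM', hd⟩ := qc_decay ψ k Bd
      refine Summable.of_norm_bounded (g := fun q : ℝ × ℝ => M * M' * (w q.1 * w q.2)) (hww.mul_left _) fun q => ?_
      rw [norm_mul]
      have h0 := mul_nonneg (hw0 q.1) (hw0 q.2)
      calc _ ≤ M * (w q.1 * w q.2) * (1 + |q.1 + q.2|) ^ Bd * ‖iteratedDeriv k ψ (q.1 + q.2)‖ := by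
            gcongr; exact hc _ _ _
        _ = M * (w q.1 * w q.2) * ((1 + |q.1 + q.2|) ^ Bd * ‖iteratedDeriv k ψ (q.1 + q.2)‖) := by ring
        _ ≤ M * (w q.1 * w q.2) * M' := by gcongr; exact hd k le_rfl _
        _ = _ := by ring
    have h1 : ∑' x, ∑' y, ∑ k ∈ Finset.range N, c k x y * iteratedDeriv k ψ (x + y) =
        ∑' q : ℝ × ℝ, ∑ k ∈ Finset.range N, c k q.1 q.2 * iteratedDeriv k ψ (q.1 + q.2) :=
      ((summable_sum (f := fun k (q : ℝ × ℝ) => c k q.1 q.2 * iteratedDeriv k ψ (q.1 + q.2)) fun k _ => hF k).tsum_prod).symm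
    rw [h1, Summable.tsum_finsetSum fun k _ => hF k]
    refine Finset.sum_congr rfl fun k _ => ?_
    have hee := e.tsum_eq (fun q : ℝ × ℝ => c k q.1 q.2 * iteratedDeriv k ψ (q.1 + q.2))
    have hss : Summable fun q : ℝ × ℝ => c k (e q).1 (e q).2 * iteratedDeriv k ψ ((e q).1 + (e q).2) :=
      (hF k).comp_injective e.injective
    rw [← hee, hss.tsum_prod]
    refine tsum_congr fun s => ?_
    simp only [he, add_sub_cancel]
    rw [tsum_mul_right]

/-- `x ↦ f(ψ(· + x))` -/
def qcG (f : TemperedDistR) (ψ : SchwartzMap ℝ ℂ) (x : ℝ) : ℂ := f (qcS 1 (-x) ψ)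

lemma qcG_hasSum {f : TemperedDistR} {K : ℕ} {p : ℕ → ℝ → ℂ} {Λ : Set ℝ} (h : qcRep f K p Λ) (ψ : SchwartzMap ℝ ℂ) (x : ℝ) :
    HasSum (fun y : ℝ => ∑ n ∈ Finset.range (K + 1), p n y * iteratedDeriv n ψ (x + y)) (qcG f ψ x) := by
  have := h.sum (qcS 1 (-x) ψ)
  simpa [qc_S_tr, qcG, add_comm] using this

lemma qcG_hasDerivAt {f : TemperedDistR} {K : ℕ} {p : ℕ → ℝ → ℂ} {Λ : Set ℝ} {η : ℝ} (hs : qcSep η Λ) (h : qcRep f K p Λ) (ψ : SchwartzMap ℝ ℂ) (x : ℝ) :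
    HasDerivAt (qcG f ψ) (qcG f (qcD 1 ψ) x) x := by
  obtain ⟨C, hC, A, hgr⟩ := h.growth
  obtain ⟨M, hM, hd⟩ := qc_decay ψ (K + 1) (A + 2)
  have e1 : qcG f ψ = fun x => ∑' y : ℝ, ∑ n ∈ Finset.range (K + 1), p n y * iteratedDeriv n ψ (x + y) :=
    funext fun x => (qcG_hasSum h ψ x).tsum_eq.symm
  have e2 : qcG f (qcD 1 ψ) x = ∑' y : ℝ, ∑ n ∈ Finset.range (K + 1), p n y * iteratedDeriv (n + 1) ψ (x + y) := by
    rw [← (qcG_hasSum h (qcD 1 ψ) x).tsum_eq]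
    refine tsum_congr fun y => Finset.sum_congr rfl fun n _ => ?_
    rw [qcD_coe, iteratedDeriv_one, ← iteratedDeriv_succ']
  rw [e1, e2]
  have hu : Summable fun y : ℝ => ((K + 1 : ℕ) : ℝ) * (C * M * (2 + |x|) ^ (A + 2)) * Λ.indicator (fun x : ℝ => ((1 + |x|) ^ 2)⁻¹) y :=
    (qc_summable_sep hs).mul_left _
  refine hasDerivAt_tsum_of_isPreconnected (t := Metric.ball x 1) (y₀ := x) hu Metric.isOpen_ball (convex_ball x 1).isPreconnected
    (g := fun y x => ∑ n ∈ Finset.range (K + 1), p n y * iteratedDeriv n ψ (x + y))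
    (g' := fun y x => ∑ n ∈ Finset.range (K + 1), p n y * iteratedDeriv (n + 1) ψ (x + y)) ?_ ?_ (by simp) (qcG_hasSum h ψ x).summable (by simp)
  · intro y z _
    refine HasDerivAt.fun_sum fun n _ => HasDerivAt.const_mul _ ?_
    have := (qc_hasDeriv ψ n (z + y)).comp_add_const z y
    exact this
  · intro y z hz
    refine (norm_sum_le _ _).trans ?_
    rw [mul_assoc]
    have : ∀ n ∈ Finset.range (K + 1), ‖p n y * iteratedDeriv (n + 1) ψ (z + y)‖ ≤ C * M * (2 + |x|) ^ (A + 2) * Λ.indicator (fun x : ℝ => ((1 + |x|) ^ 2)⁻¹) y := by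
      intro n hn
      by_cases hp : p n y = 0
      · rw [hp, zero_mul, norm_zero]
        refine mul_nonneg (by positivity) (Set.indicator_nonneg (fun _ _ => by positivity) _)
      rw [Set.indicator_of_mem (h.supp n y hp), norm_mul, ← div_eq_mul_inv, le_div_iff₀ (by positivity)]
      have hz1 : |z| ≤ 1 + |x| := by
        have h1 : |z - x| < 1 := by simpa [Real.dist_eq] using hz
        have := abs_add_le (z - x) x
        rw [sub_add_cancel] at this
        linarith
      have h1 : 1 + |y| ≤ (1 + |z + y|) * (2 + |x|) := by
        have := qc_wt y (-z)
        rw [sub_neg_eq_add, abs_neg, add_comm y z] at this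
        refine this.trans ?_
        exact mul_le_mul_of_nonneg_left (by linarith) (by positivity)
      calc _ ≤ C * (1 + |y|) ^ A * ‖iteratedDeriv (n + 1) ψ (z + y)‖ * (1 + |y|) ^ 2 := by gcongr; exact hgr n y
        _ = C * (1 + |y|) ^ (A + 2) * ‖iteratedDeriv (n + 1) ψ (z + y)‖ := by ring
        _ ≤ C * ((1 + |z + y|) * (2 + |x|)) ^ (A + 2) * ‖iteratedDeriv (n + 1) ψ (z + y)‖ := by gcongr
        _ = C * (2 + |x|) ^ (A + 2) * ((1 + |z + y|) ^ (A + 2) * ‖iteratedDeriv (n + 1) ψ (z + y)‖) := by rw [mul_pow]; ring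
        _ ≤ C * (2 + |x|) ^ (A + 2) * M := by
            gcongr; exact hd _ (by simp at hn; omega) _
        _ = _ := by ring
    refine (Finset.sum_le_sum this).trans ?_
    rw [Finset.sum_const, Finset.card_range, nsmul_eq_mul]

lemma qcG_iter {f : TemperedDistR} {K : ℕ} {p : ℕ → ℝ → ℂ} {Λ : Set ℝ} {η : ℝ} (hs : qcSep η Λ) (h : qcRep f K p Λ) (ψ : SchwartzMap ℝ ℂ) (j : ℕ) :
    iteratedDeriv j (qcG f ψ) = qcG f (qcD j ψ) := by
  induction j with
  | zero => simp [qcD]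
  | succ j ih =>
    rw [iteratedDeriv_succ, ih]
    ext x
    rw [(qcG_hasDerivAt hs h (qcD j ψ) x).deriv]
    congr 1
    have : qcD 1 (qcD j ψ) = qcD (j + 1) ψ := by
      simp only [qcD, Function.iterate_succ_apply', Function.iterate_one, Function.iterate_zero, id]
    rw [this]

lemma qcG_cd {f : TemperedDistR} {K : ℕ} {p : ℕ → ℝ → ℂ} {Λ : Set ℝ} {η : ℝ} (hs : qcSep η Λ) (h : qcRep f K p Λ) (ψ : SchwartzMap ℝ ℂ) (n : ℕ) :
    ContDiff ℝ n (qcG f ψ) := by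
  refine contDiff_of_differentiable_iteratedDeriv fun m _ => ?_
  rw [qcG_iter hs h]
  exact fun x => (qcG_hasDerivAt hs h (qcD m ψ) x).differentiableAt

/-- vanishing when spectrum avoids Γ -/
lemma qc_avoid {f : TemperedDistR} {M : ℕ} {q : ℕ → ℝ → ℂ} {Γ : Set ℝ} (h : qcRep (fourierTDR f) M q Γ) {c r : ℝ}
    {φ : SchwartzMap ℝ ℂ} (hφ : qcBL c r φ) (hav : ∀ γ ∈ Γ, r < |γ - c|) : f φ = 0 := by
  rw [qc_fhat]
  refine (h.sum (𝓕⁻ φ)).unique ?_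
  have : (fun x => ∑ n ∈ Finset.range (M + 1), q n x * iteratedDeriv n (𝓕⁻ φ : SchwartzMap ℝ ℂ) x) = fun _ => 0 := by
    ext x
    refine Finset.sum_eq_zero fun n _ => ?_
    by_cases hq : q n x = 0
    · rw [hq, zero_mul]
    have hx := hav x (h.supp n x hq)
    rw [qc_iter_zero_of_ev _ _ _ n, mul_zero]
    have : ∀ᶠ t in 𝓝 x, r < |t - c| := by
      have hc : Continuous fun t : ℝ => |t - c| := by fun_prop
      exact hc.continuousAt.eventually (lt_mem_nhds hx)
    exact this.mono fun t ht => hφ t ht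
  rw [this]; exact hasSum_zero

def qcQ (f : TemperedDistR) (η : ℝ) (G : ℝ → ℂ) : Prop := ∀ φ, qcBL (η/2) (η/4) φ → 
  ∃ Ψ : SchwartzMap ℝ ℂ, (∀ x, Ψ x = φ x * G x) ∧ f Ψ = 0

lemma qcQ_sum {f : TemperedDistR} {η : ℝ} {ι : Type*} (s : Finset ι) (G : ι → ℝ → ℂ) (h : ∀ i ∈ s, qcQ f η (G i)) :
    qcQ f η (fun x => ∑ i ∈ s, G i x) := by
  classical
  induction s using Finset.induction_on with
  | empty => intro φ _; exact ⟨0, by simp, by simp⟩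
  | insert a s ha ih =>
    intro φ hφ
    obtain ⟨Ψ, h1, h2⟩ := ih (fun i hi => h i (by simp [hi])) φ hφ
    obtain ⟨Ψ', h3, h4⟩ := h a (by simp) φ hφ
    refine ⟨Ψ' + Ψ, fun x => ?_, by rw [map_add, h2, h4, add_zero]⟩
    rw [add_apply, h1, h3]; simp only [Finset.sum_insert ha, mul_add]

lemma qcQ_smul {f : TemperedDistR} {η : ℝ} {G : ℝ → ℂ} (h : qcQ f η G) (a : ℂ) :
    qcQ f η (fun x => a * G x) := by
  intro φ hφ
  obtain ⟨Ψ, h1, h2⟩ := h φ hφ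
  refine ⟨a • Ψ, fun x => ?_, by rw [map_smul, h2, smul_zero]⟩
  rw [smul_apply, h1, smul_eq_mul]; ring

lemma qcQ_mon {f : TemperedDistR} {M : ℕ} {q : ℕ → ℝ → ℂ} {Γ : Set ℝ} {η : ℝ} (hs : qcSep η Γ) (h : qcRep (fourierTDR f) M q Γ)
    (γ : ℝ) (hγ : γ ∈ Γ) (i : ℕ) : qcQ f η (fun x => (x:ℂ) ^ i * e2piR x (-γ)) := by
  intro φ hφ
  obtain ⟨Ψ, h1, h2⟩ := qc_mulpow (qcBL_E hφ (-γ)) 0 i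
  refine ⟨Ψ, fun x => ?_, ?_⟩
  · rw [h2, qcE_apply]; push_cast; ring
  · refine qc_avoid h h1 fun γ' hγ' => ?_
    have hη := hs.1
    by_cases hg : γ' = γ
    · subst hg
      rw [abs_sub_comm, show η / 2 - -γ' - γ' = η / 2 by ring, abs_of_pos (by positivity)]; linarith
    · have h3 := hs.2 _ hγ' _ hγ hg
      have h4 := abs_sub_abs_le_abs_sub (γ' - γ) (η/2)
      rw [abs_of_pos (show 0 < η / 2 by positivity)] at h4
      rw [show γ' - (η / 2 - -γ) = γ' - γ - η / 2 by ring]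
      linarith

lemma qcQ_G {f : TemperedDistR} {M : ℕ} {q : ℕ → ℝ → ℂ} {Γ : Set ℝ} {η : ℝ} (hs : qcSep η Γ) (h : qcRep (fourierTDR f) M q Γ)
    {R : ℝ} {ψ : SchwartzMap ℝ ℂ} (hψ : qcBL 0 R ψ) : qcQ f η (qcG f ψ) := by
  have hfin := qc_fin_of_sep hs (-R) R
  have hE : ∀ x : ℝ, qcG f ψ x = ∑ γ ∈ hfin.toFinset, ∑ m ∈ Finset.range (M + 1), ∑ i ∈ Finset.range (m + 1),
      (q m γ * (m.choose i : ℂ) * (2 * Real.pi * (-1) * Complex.I) ^ i * iteratedDeriv (m - i) (𝓕⁻ ψ : SchwartzMap ℝ ℂ) γ) * 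
        ((x:ℂ) ^ i * e2piR x (-γ)) := by
    intro x
    rw [qcG, qc_fhat]
    have e0 : ⇑(𝓕⁻ (qcS 1 (-x) ψ) : SchwartzMap ℝ ℂ) = fun t => e2piR t (-x) * (𝓕⁻ ψ : SchwartzMap ℝ ℂ) t := by
      ext t; rw [qc_finv_S]; simp [qe_comm]
    refine (h.sum _).unique ?_
    have h0 : ∀ y ∉ hfin.toFinset, ∑ n ∈ Finset.range (M + 1), q n y * iteratedDeriv n (𝓕⁻ (qcS 1 (-x) ψ) : SchwartzMap ℝ ℂ) y = 0 := by
      intro y hy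
      refine Finset.sum_eq_zero fun n _ => ?_
      by_cases hq : q n y = 0
      · rw [hq, zero_mul]
      have hy2 : R < |y - 0| := by
        by_contra hc
        apply hy
        rw [Set.Finite.mem_toFinset]
        refine ⟨h.supp n y hq, ?_⟩
        rw [sub_zero] at hc
        exact abs_le.1 (not_lt.1 hc)
      rw [qc_iter_zero_of_ev _ _ _ n, mul_zero]
      have : ∀ᶠ t in 𝓝 y, R < |t - 0| := by
        have hc : Continuous fun t : ℝ => |t - 0| := by fun_prop
        exact hc.continuousAt.eventually (lt_mem_nhds hy2)
      refine this.mono fun t ht => ?_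
      rw [e0]; simp [hψ t ht]
    have := hasSum_sum_of_ne_finset_zero (L := SummationFilter.unconditional ℝ) h0
    convert this using 1
    refine Finset.sum_congr rfl fun γ _ => Finset.sum_congr rfl fun m _ => ?_
    rw [e0, iteratedDeriv_fun_mul (qe_cd _ _).contDiffAt (qc_cd _ _).contDiffAt, Finset.mul_sum]
    refine Finset.sum_congr rfl fun i _ => ?_
    rw [qe_iter, qe_comm x (-γ)]
    have e3 : e2piR (-γ) x = e2piR γ (-x) := by simp [e2piR]
    rw [e3]
    push_cast
    rw [show (2 * (Real.pi:ℂ) * -(x:ℂ) * Complex.I) ^ i = (2 * Real.pi * (-1) * Complex.I) ^ i * (x:ℂ) ^ i by rw [← mul_pow]; congr 1; ring]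
    ring
  rw [show qcG f ψ = _ from funext hE]
  refine qcQ_sum _ _ fun γ hγ => qcQ_sum _ _ fun m _ => qcQ_sum _ _ fun i _ => qcQ_smul (qcQ_mon hs h γ ?_ i) _
  exact ((Set.Finite.mem_toFinset _).1 hγ).1


/-- coefficients of the double sum -/
def qcA (K : ℕ) (p : ℕ → ℝ → ℂ) (k i : ℕ) (x y : ℝ) : ℂ :=
  ∑ n ∈ Finset.range (K + 1), ∑ n' ∈ Finset.range (K + 1),
    if i ≤ n ∧ n - i + n' = k then (n.choose i : ℂ) * p n x * p n' y else 0

lemma qcA_bound (K : ℕ) (p : ℕ → ℝ → ℂ) (k i : ℕ) (x y : ℝ) (D : ℝ) (hD : ∀ n n', ‖p n x‖ * ‖p n' y‖ ≤ D) :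
    ‖qcA K p k i x y‖ ≤ ((K + 1 : ℕ) : ℝ) * (((K + 1 : ℕ) : ℝ) * (2 ^ K * D)) := by
  have hD0 : 0 ≤ D := le_trans (by positivity) (hD 0 0)
  rw [qcA]
  refine (norm_sum_le _ _).trans ?_
  refine (Finset.sum_le_card_nsmul _ _ (((K + 1 : ℕ) : ℝ) * (2 ^ K * D)) fun n hn => ?_).trans (by simp)
  refine (norm_sum_le _ _).trans ?_
  refine (Finset.sum_le_card_nsmul _ _ (2 ^ K * D) fun n' hn' => ?_).trans (by simp)
  split_ifs
  · rw [norm_mul, norm_mul, mul_assoc]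
    refine mul_le_mul ?_ (hD n n') (by positivity) (by positivity)
    rw [Complex.norm_natCast]
    have h1 : n.choose i ≤ 2 ^ n := Nat.choose_le_two_pow n i
    have h2 : 2 ^ n ≤ 2 ^ K := Nat.pow_le_pow_right (by norm_num) (by simp at hn; omega)
    exact_mod_cast h1.trans h2
  · simp; positivity

lemma qcA_supp (K : ℕ) (p : ℕ → ℝ → ℂ) (k i : ℕ) (x y : ℝ) (h : qcA K p k i x y ≠ 0) : (∃ n, p n x ≠ 0) ∧ ∃ n, p n y ≠ 0 := by
  constructor
  · by_contra hc
    push Not at hc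
    exact h (by simp [qcA, hc])
  · by_contra hc
    push Not at hc
    exact h (by simp [qcA, hc])

lemma qcA_id (K : ℕ) (p : ℕ → ℝ → ℂ) (x y : ℝ) (u v : ℕ → ℂ) :
    ∑ k ∈ Finset.range (2 * K + 1), (∑ i ∈ Finset.range (K + 1), qcA K p k i x y * u i) * v k =
    ∑ n ∈ Finset.range (K + 1), p n x * ∑ i ∈ Finset.range (n + 1), (n.choose i : ℂ) * u i * 
      ∑ n' ∈ Finset.range (K + 1), p n' y * v (n - i + n') := by
  have h1 : ∀ n ∈ Finset.range (K + 1), (p n x * ∑ i ∈ Finset.range (n + 1), (n.choose i : ℂ) * u i * 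
      ∑ n' ∈ Finset.range (K + 1), p n' y * v (n - i + n')) = 
      ∑ i ∈ Finset.range (K + 1), ∑ n' ∈ Finset.range (K + 1), if i ≤ n then (n.choose i : ℂ) * p n x * p n' y * u i * v (n - i + n') else 0 := by
    intro n hn
    have hn' : n ≤ K := by simp at hn; omega
    have : Finset.range (n + 1) = (Finset.range (K + 1)).filter (fun i => i ≤ n) := by
      ext i; simp; omega
    rw [this, Finset.sum_filter, Finset.mul_sum]
    refine Finset.sum_congr rfl fun i _ => ?_
    split_ifs with hi
    · rw [Finset.mul_sum, Finset.mul_sum]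
      exact Finset.sum_congr rfl fun _ _ => by ring
    · simp
  rw [Finset.sum_congr rfl h1]
  have h2 : ∀ n ∈ Finset.range (K + 1), ∀ i ∈ Finset.range (K + 1), ∀ n' ∈ Finset.range (K + 1),
     (if i ≤ n then (n.choose i : ℂ) * p n x * p n' y * u i * v (n - i + n') else 0) =
     ∑ k ∈ Finset.range (2 * K + 1), (if i ≤ n ∧ n - i + n' = k then (n.choose i : ℂ) * p n x * p n' y else 0) * u i * v k := by
    intro n hn i hi n' hn'
    simp only [Finset.mem_range] at hn hi hn'
    by_cases hin : i ≤ n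
    · rw [Finset.sum_eq_single_of_mem (n - i + n') (by simp; omega)]
      · simp [hin]
      · intro k _ hk
        rw [if_neg (by tauto)]; simp
    · simp [hin]
  rw [Finset.sum_congr rfl fun n hn => Finset.sum_congr rfl fun i hi => Finset.sum_congr rfl fun n' hn' => h2 n hn i hi n' hn']
  simp only [qcA, Finset.sum_mul]
  rw [Finset.sum_comm]
  refine (Finset.sum_congr rfl fun i _ => Finset.sum_comm).trans ?_
  rw [Finset.sum_comm]
  refine Finset.sum_congr rfl fun n _ => Finset.sum_congr rfl fun i _ => ?_
  rw [Finset.sum_comm]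

lemma qc_main {f : TemperedDistR} {K M : ℕ} {p q : ℕ → ℝ → ℂ} {Λ Γ : Set ℝ} {η η' : ℝ} (hs : qcSep η Λ) (h : qcRep f K p Λ)
    (hs' : qcSep η' Γ) (h' : qcRep (fourierTDR f) M q Γ) {φ : SchwartzMap ℝ ℂ} (hφ : qcBL (η'/2) (η'/4) φ) :
    ∀ k < 2 * K + 1, ∀ s, HasSum (fun x => ∑ i ∈ Finset.range (K + 1), qcA K p k i x (s - x) * iteratedDeriv i φ x) 0 := by
  obtain ⟨C, hC, A, hgr⟩ := h.growth
  obtain ⟨D, hD, hd⟩ := qc_decay φ K (2 * (A + 2))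
  let w := Λ.indicator fun x : ℝ => ((1 + |x|) ^ 2)⁻¹
  have hw0 : ∀ x, 0 ≤ w x := fun x => Set.indicator_nonneg (fun _ _ => by positivity) _
  have hw1 : ∀ x, w x ≤ 1 := fun x => by
    refine Set.indicator_apply_le' (fun _ => ?_) (fun _ => zero_le_one)
    refine inv_le_one_of_one_le₀ (one_le_pow₀ ?_)
    linarith [abs_nonneg x]
  refine qc_dbl (A + 2) w hw0 hw1 (qc_summable_sep hs) (fun k x y => ∑ i ∈ Finset.range (K + 1), qcA K p k i x y * iteratedDeriv i φ x)
    (((K + 1 : ℕ) : ℝ) * (((K + 1 : ℕ) : ℝ) * (((K + 1 : ℕ) : ℝ) * (2 ^ K * (C * C * D))))) (by positivity) ?_ (2 * K + 1) ?_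
  · intro k x y
    refine (norm_sum_le _ _).trans ?_
    refine (Finset.sum_le_card_nsmul _ _ ((((K + 1 : ℕ) : ℝ) * (((K + 1 : ℕ) : ℝ) * (2 ^ K * (C * C * D)))) * (w x * w y) * (1 + |x + y|) ^ (A + 2)) fun i hi => ?_).trans 
      (le_of_eq (by rw [Finset.card_range, nsmul_eq_mul]; ring))
    have hi' : i ≤ K := by simp at hi; omega
    by_cases hA : qcA K p k i x y = 0
    · rw [hA, zero_mul, norm_zero]
      have := hw0 x; have := hw0 y
      positivity
    obtain ⟨⟨n, hn⟩, n', hn'⟩ := qcA_supp _ _ _ _ _ _ hA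
    have hwx : w x = ((1 + |x|) ^ 2)⁻¹ := Set.indicator_of_mem (h.supp _ _ hn) _
    have hwy : w y = ((1 + |y|) ^ 2)⁻¹ := Set.indicator_of_mem (h.supp _ _ hn') _
    have hb := qcA_bound K p k i x y (C * (1 + |x|) ^ A * (C * (1 + |y|) ^ A)) fun n n' => 
      mul_le_mul (hgr n x) (hgr n' y) (by positivity) (by positivity)
    have hkey : (1 + |x|) ^ A * (1 + |y|) ^ A * ‖iteratedDeriv i φ x‖ ≤ D * (w x * w y) * (1 + |x + y|) ^ (A + 2) := by
      rw [hwx, hwy, ← mul_inv, mul_right_comm D, ← div_eq_mul_inv, le_div_iff₀ (by positivity)]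
      have h1 : 1 + |y| ≤ (1 + |x + y|) * (1 + |x|) := by
        have := qc_wt y (-x)
        rwa [sub_neg_eq_add, abs_neg, add_comm y x] at this
      calc _ = (1 + |x|) ^ (A + 2) * (1 + |y|) ^ (A + 2) * ‖iteratedDeriv i φ x‖ := by ring
        _ ≤ (1 + |x|) ^ (A + 2) * ((1 + |x + y|) * (1 + |x|)) ^ (A + 2) * ‖iteratedDeriv i φ x‖ := by gcongr
        _ = ((1 + |x|) ^ (2 * (A + 2)) * ‖iteratedDeriv i φ x‖) * (1 + |x + y|) ^ (A + 2) := by rw [mul_pow]; ring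
        _ ≤ _ := by gcongr; exact hd i hi' x
    rw [norm_mul]
    calc _ ≤ ((K + 1 : ℕ) : ℝ) * (((K + 1 : ℕ) : ℝ) * (2 ^ K * (C * (1 + |x|) ^ A * (C * (1 + |y|) ^ A)))) * ‖iteratedDeriv i φ x‖ := by gcongr
      _ = (((K + 1 : ℕ) : ℝ) * (((K + 1 : ℕ) : ℝ) * (2 ^ K * (C * C)))) * ((1 + |x|) ^ A * (1 + |y|) ^ A * ‖iteratedDeriv i φ x‖) := by ring
      _ ≤ (((K + 1 : ℕ) : ℝ) * (((K + 1 : ℕ) : ℝ) * (2 ^ K * (C * C)))) * (D * (w x * w y) * (1 + |x + y|) ^ (A + 2)) := by gcongr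
      _ = _ := by ring
  · rintro ψ ⟨R, hψ⟩
    obtain ⟨Ψ, h1, h2⟩ := qcQ_G hs' h' hψ φ hφ
    have h3 := (h.sum Ψ).tsum_eq
    rw [h2] at h3
    rw [← h3]
    refine tsum_congr fun x => ?_
    simp only [qcA_id K p x]
    refine HasSum.tsum_eq ?_
    refine hasSum_sum fun n _ => HasSum.mul_left _ ?_
    have e1 : iteratedDeriv n Ψ x = ∑ i ∈ Finset.range (n + 1), (n.choose i : ℂ) * iteratedDeriv i φ x * qcG f (qcD (n - i) ψ) x := by
      rw [show ⇑Ψ = fun x => φ x * qcG f ψ x from funext h1, iteratedDeriv_fun_mul (qc_cd _ _).contDiffAt (qcG_cd hs h ψ n).contDiffAt]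
      simp only [qcG_iter hs h]
    rw [e1]
    refine hasSum_sum fun i _ => HasSum.mul_left _ ?_
    have := qcG_hasSum h (qcD (n - i) ψ) x
    have e2 : ∀ n', iteratedDeriv n' (qcD (n - i) ψ) = iteratedDeriv (n - i + n') ψ := fun n' => by
      rw [qcD_coe, iteratedDeriv_eq_iterate, iteratedDeriv_eq_iterate, iteratedDeriv_eq_iterate, ← Function.iterate_add_apply, add_comm]
    simpa only [e2] using this

lemma qc_ann {f : TemperedDistR} {K M : ℕ} {p q : ℕ → ℝ → ℂ} {Λ Γ : Set ℝ} {η η' : ℝ} (hs : qcSep η Λ) (h : qcRep f K p Λ)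
    (hs' : qcSep η' Γ) (h' : qcRep (fourierTDR f) M q Γ) (k : ℕ) (hk : k < 2 * K + 1) (s : ℝ) :
    qcAnn K (fun i x => qcA K p k i x (s - x)) {x | x ∈ Λ ∧ s - x ∈ Λ} (η'/2) (η'/4) := by
  refine ⟨fun n x hx => ?_, ?_, fun φ hφ => qc_main hs h hs' h' hφ k hk s⟩
  · obtain ⟨⟨n, hn⟩, n', hn'⟩ := qcA_supp _ _ _ _ _ _ hx
    exact ⟨h.supp _ _ hn, h.supp _ _ hn'⟩
  · obtain ⟨C, hC, A, hgr⟩ := h.growth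
    refine ⟨((K + 1 : ℕ) : ℝ) * (((K + 1 : ℕ) : ℝ) * (2 ^ K * (C * C * (1 + |s|) ^ A))), by positivity, 2 * A, fun n x => ?_⟩
    refine (qcA_bound K p k n x (s - x) (C * C * (1 + |s|) ^ A * (1 + |x|) ^ (2 * A)) fun n n' => ?_).trans (le_of_eq (by ring))
    have h1 : 1 + |s - x| ≤ (1 + |s|) * (1 + |x|) := by
      have := qc_wt (s - x) (-x)
      rwa [sub_neg_eq_add, abs_neg, sub_add_cancel] at this
    calc _ ≤ (C * (1 + |x|) ^ A) * (C * (1 + |s - x|) ^ A) := mul_le_mul (hgr n x) (hgr n' _) (by positivity) (by positivity)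
      _ ≤ (C * (1 + |x|) ^ A) * (C * ((1 + |s|) * (1 + |x|)) ^ A) := by gcongr
      _ = _ := by rw [mul_pow]; ring

lemma qc_topdeg {f : TemperedDistR} {K : ℕ} {p : ℕ → ℝ → ℂ} {Λ : Set ℝ} (h : qcRep f K p Λ) (x : ℝ) (hx : ∃ n, p n x ≠ 0) :
    ∃ n ≤ K, p n x ≠ 0 ∧ ∀ m, n < m → p m x = 0 := by
  classical
  obtain ⟨n0, hn0⟩ := hx
  have hb : ∀ n, p n x ≠ 0 → n ≤ K := fun n hn => by
    by_contra hc
    exact hn (h.top n x (by omega))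
  refine ⟨Nat.findGreatest (fun n => p n x ≠ 0) K, Nat.findGreatest_le K, ?_, fun m hm => ?_⟩
  · exact Nat.findGreatest_spec (P := fun n => p n x ≠ 0) (hb n0 hn0) hn0
  · by_contra hc
    exact absurd (Nat.le_findGreatest (P := fun n => p n x ≠ 0) (hb m hc) hc) (by omega)

lemma qc_sumdens {f : TemperedDistR} {K M : ℕ} {p q : ℕ → ℝ → ℂ} {Λ Γ : Set ℝ} {η η' : ℝ} (hs : qcSep η Λ) (h : qcRep f K p Λ)
    (hs' : qcSep η' Γ) (h' : qcRep (fourierTDR f) M q Γ) : ∃ c > (0:ℝ), ∀ x y, (∃ n, p n x ≠ 0) → (∃ n, p n y ≠ 0) →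
    ∃ T0 : ℝ, ∀ T : ℝ, T ≥ T0 → c * T < (({z | z ∈ Λ ∧ x + y - z ∈ Λ} ∩ Icc (-T) T).ncard : ℝ) := by
  obtain ⟨c, hc, hd⟩ := qc_dens K η (η'/4) hs.1 (by have := hs'.1; positivity)
  refine ⟨c, hc, fun x y hx hy => ?_⟩
  obtain ⟨n, hn, hn1, hn2⟩ := qc_topdeg h x hx
  obtain ⟨m, hm, hm1, hm2⟩ := qc_topdeg h y hy
  refine hd _ _ _ (qc_sep_mono hs fun z hz => hz.1) (qc_ann hs h hs' h' (n + m) (by omega) (x + y)) ⟨0, by omega, x, ?_⟩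
  rw [add_sub_cancel_left]
  have : qcA K p (n + m) 0 x y = p n x * p m y := by
    rw [qcA, Finset.sum_eq_single_of_mem n (by simp; omega), Finset.sum_eq_single_of_mem m (by simp; omega)]
    · simp
    · intro b _ hb
      rw [if_neg (by omega)]
    · intro b _ hb
      refine Finset.sum_eq_zero fun b' _ => ?_
      split_ifs with h1
      · rcases lt_or_gt_of_ne hb with hb | hb
        · rw [hm2 b' (by omega), mul_zero]
        · rw [hn2 b hb, mul_zero, zero_mul]
      · rfl
  rw [this]
  exact mul_ne_zero hn1 hm1

lemma qc_flc {f : TemperedDistR} {K M : ℕ} {p q : ℕ → ℝ → ℂ} {Λ Γ : Set ℝ} {η η' : ℝ} (hs : qcSep η Λ) (h : qcRep f K p Λ)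
    (hs' : qcSep η' Γ) (h' : qcRep (fourierTDR f) M q Γ) (R : ℝ) (hR : 0 ≤ R) :
    {s : ℝ | s ∈ Icc (-R) R ∧ ∃ x y, (∃ n, p n x ≠ 0) ∧ (∃ n, p n y ≠ 0) ∧ s = x + y}.Finite := by
  classical
  obtain ⟨c, hc, hd⟩ := qc_sumdens hs h hs' h'
  have hη := hs.1
  by_contra hinf
  obtain ⟨m, hm⟩ := exists_nat_gt (3 * (2 * R / η + 1) / (c * η))
  obtain ⟨S, hS, hcard⟩ := Set.Infinite.exists_subset_card_eq hinf m
  have hT : ∀ s ∈ S, ∃ T0 : ℝ, ∀ T : ℝ, T ≥ T0 → c * T < (({z | z ∈ Λ ∧ s - z ∈ Λ} ∩ Icc (-T) T).ncard : ℝ) := by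
    intro s hsS
    obtain ⟨-, x, y, hx, hy, rfl⟩ := hS hsS
    exact hd x y hx hy
  choose! T0 hT0 using hT
  obtain ⟨T1, hT1⟩ := (S.image T0).exists_le
  let T := max T1 η
  have hTη : η ≤ T := le_max_right _ _
  have hTpos : 0 < T := by linarith
  have hTT : ∀ s ∈ S, T ≥ T0 s := fun s hs => (hT1 _ (Finset.mem_image_of_mem _ hs)).trans (le_max_left _ _)
  have hF := qc_fin_of_sep hs (-T) T
  let F := hF.toFinset
  have h1 : ∀ s ∈ S, ({z | z ∈ Λ ∧ s - z ∈ Λ} ∩ Icc (-T) T).ncard = (F.filter fun z => s - z ∈ Λ).card := by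
    intro s _
    rw [← Set.ncard_coe_finset]
    congr 1
    ext z
    simp [F]; tauto
  have h2 : (m:ℝ) * (c * T) ≤ ∑ s ∈ S, ((F.filter fun z => s - z ∈ Λ).card : ℝ) := by
    rw [← hcard, ← nsmul_eq_mul]
    refine Finset.card_nsmul_le_sum _ _ _ fun s hsS => ?_
    have := hT0 s hsS T (hTT s hsS)
    rw [h1 s hsS] at this
    exact this.le
  have h3 : ∑ s ∈ S, (F.filter fun z => s - z ∈ Λ).card = ∑ z ∈ F, (S.filter fun s => s - z ∈ Λ).card := 
    Finset.sum_card_bipartiteAbove_eq_sum_card_bipartiteBelow (fun s z => s - z ∈ Λ)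
  have h4 : ∀ z ∈ F, ((S.filter fun s => s - z ∈ Λ).card : ℝ) ≤ 2 * R / η + 1 := by
    intro z _
    have h5 := qc_ncard_le hs (-R - z) (R - z) (by linarith)
    refine le_trans ?_ (h5.trans (le_of_eq (by ring)))
    rw [← Set.ncard_coe_finset]
    have : (Set.ncard (↑(S.filter fun s => s - z ∈ Λ) : Set ℝ)) ≤ (Λ ∩ Icc (-R - z) (R - z)).ncard := by
      refine Set.ncard_le_ncard_of_injOn (fun s => s - z) ?_ ?_ (qc_fin_of_sep hs _ _)
      · intro s hsz
        simp only [Finset.coe_filter, Set.mem_ofPred_eq] at hsz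
        have := (hS hsz.1).1
        exact ⟨hsz.2, by linarith [this.1], by linarith [this.2]⟩
      · intro a _ b _ hab
        simpa using hab
    exact_mod_cast this
  have h5 : (F.card : ℝ) ≤ 2 * T / η + 1 := by
    have := qc_ncard_le hs (-T) T (by linarith)
    rw [Set.ncard_eq_toFinset_card _ hF] at this
    exact this.trans (le_of_eq (by ring))
  have h6 : (m:ℝ) * (c * T) ≤ (2 * T / η + 1) * (2 * R / η + 1) := by
    refine h2.trans ?_
    have h7 : ∑ s ∈ S, ((F.filter fun z => s - z ∈ Λ).card : ℝ) = ∑ z ∈ F, ((S.filter fun s => s - z ∈ Λ).card : ℝ) := by exact_mod_cast h3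
    rw [h7]
    refine (Finset.sum_le_card_nsmul _ _ _ h4).trans ?_
    rw [nsmul_eq_mul]
    gcongr
  have h8 : 2 * T / η + 1 ≤ 3 * T / η := by
    rw [div_add_one hη.ne']; gcongr; linarith
  have h9 : (m:ℝ) * (c * T) ≤ 3 * T / η * (2 * R / η + 1) := h6.trans (by gcongr)
  rw [div_lt_iff₀ (by positivity)] at hm
  have h10 : 3 * T / η * (2 * R / η + 1) = T / η * (3 * (2 * R / η + 1)) := by ring
  rw [h10] at h9
  have h11 : T / η * (3 * (2 * R / η + 1)) < T / η * (m * (c * η)) := by gcongr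
  have h12 : T / η * (m * (c * η)) = m * (c * T) := by field_simp
  linarith


lemma qc_psum {f : TemperedDistR} {K : ℕ} {p : ℕ → ℝ → ℂ} {Λ : Set ℝ} {η : ℝ} (hs : qcSep η Λ) (h : qcRep f K p Λ) :
    ∃ B : ℕ, ∀ y k, Summable fun s : ℝ => ‖p k (s - y)‖ * ((1 + |s|) ^ B)⁻¹ := by
  obtain ⟨C, hC, A, hgr⟩ := h.growth
  refine ⟨A + 2, fun y k => ?_⟩
  have h1 : Summable fun s : ℝ => C * (Λ.indicator (fun x : ℝ => ((1 + |x|) ^ 2)⁻¹) s) := (qc_summable_sep hs).mul_left _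
  have h2 : Summable fun s : ℝ => C * (Λ.indicator (fun x : ℝ => ((1 + |x|) ^ 2)⁻¹) (s - y)) :=
    h1.comp_injective (i := fun s => s - y) (fun a b hab => by simpa using hab)
  refine Summable.of_nonneg_of_le (fun s => by positivity) (fun s => ?_) (h2.mul_left ((1 + |y|) ^ (A + 2)))
  by_cases hp : p k (s - y) = 0
  · rw [hp, norm_zero, zero_mul]
    have := Set.indicator_nonneg (s := Λ) (f := fun x : ℝ => ((1 + |x|) ^ 2)⁻¹) (fun _ _ => by positivity) (s - y)
    positivity
  · rw [Set.indicator_of_mem (h.supp _ _ hp)]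
    have h3 : 1 + |s - y| ≤ (1 + |s|) * (1 + |y|) := by
      have := qc_wt (s - y) (-y)
      rwa [sub_neg_eq_add, abs_neg, sub_add_cancel] at this
    have h4 := hgr k (s - y)
    rw [← div_eq_mul_inv, div_le_iff₀ (by positivity)]
    have h5 : (1 + |s - y|) ^ (A + 2) ≤ (1 + |s|) ^ (A + 2) * (1 + |y|) ^ (A + 2) := by
      rw [← mul_pow]; gcongr
    calc _ ≤ C * (1 + |s - y|) ^ A := h4
      _ = C * ((1 + |s - y|) ^ 2)⁻¹ * (1 + |s - y|) ^ (A + 2) := by rw [pow_add]; field_simp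
      _ ≤ C * ((1 + |s - y|) ^ 2)⁻¹ * ((1 + |s|) ^ (A + 2) * (1 + |y|) ^ (A + 2)) := by gcongr
      _ = _ := by ring

/-- uniqueness of shifted coefficients -/
lemma qc_shift_coef {f : TemperedDistR} {K : ℕ} {p : ℕ → ℝ → ℂ} {Λ : Set ℝ} {η : ℝ} (hs : qcSep η Λ) (h : qcRep f K p Λ)
    {ι : Type*} [Fintype ι] (c : ι → ℂ) (y : ι → ℝ) (hz : ∀ φ, ∑ i, c i * f (qcS 1 (-y i) φ) = 0) :
    ∀ n z, ∑ i, c i * p n (z - y i) = 0 := by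
  obtain ⟨B, hB⟩ := qc_psum hs h
  have hb : ∀ k, Summable fun s : ℝ => ‖∑ i, c i * p k (s - y i)‖ * ((1 + |s|) ^ B)⁻¹ := by
    intro k
    refine Summable.of_nonneg_of_le (fun s => by positivity) (fun s => ?_)
      (summable_sum (s := Finset.univ) fun i _ => (hB (y i) k).mul_left ‖c i‖)
    simp only [← mul_assoc, ← norm_mul]
    rw [← Finset.sum_mul]
    gcongr
    exact norm_sum_le _ _
  have key := qc_X B (fun k s => ∑ i, c i * p k (s - y i)) hb (K + 1) (fun ψ _ => ?_)
  · intro n z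
    by_cases hn : n < K + 1
    · exact key n hn z
    · simp [h.top n _ (show K < n by omega)]
  · have hsm : ∀ k i, Summable fun s => p k (s - y i) * iteratedDeriv k ψ s := by
      intro k i
      obtain ⟨M, hM, hd⟩ := qc_decay ψ k B
      refine Summable.of_norm_bounded ((hB (y i) k).mul_left M) fun s => ?_
      rw [norm_mul]
      have := hd k le_rfl s
      have h3 : ‖iteratedDeriv k ψ s‖ ≤ M * ((1 + |s|) ^ B)⁻¹ := by
        rw [← div_eq_mul_inv, le_div_iff₀ (by positivity), mul_comm]; exact this
      calc _ ≤ ‖p k (s - y i)‖ * (M * ((1 + |s|) ^ B)⁻¹) := by gcongr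
        _ = _ := by ring
    have e1 : ∀ k ∈ Finset.range (K + 1), ∑' s, (∑ i, c i * p k (s - y i)) * iteratedDeriv k ψ s = ∑ i, c i * ∑' s, p k (s - y i) * iteratedDeriv k ψ s := by
      intro k _
      simp only [Finset.sum_mul, mul_assoc]
      rw [Summable.tsum_finsetSum fun i _ => (hsm k i).mul_left _]
      exact Finset.sum_congr rfl fun i _ => tsum_mul_left
    rw [Finset.sum_congr rfl e1, Finset.sum_comm, ← hz ψ]
    refine Finset.sum_congr rfl fun i _ => ?_
    rw [← Finset.mul_sum]
    congr 1
    have e2 := (h.sum (qcS 1 (-y i) ψ)).tsum_eq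
    rw [← e2, ← Summable.tsum_finsetSum fun k _ => hsm k i]
    rw [← (Equiv.addRight (y i)).tsum_eq]
    refine tsum_congr fun s => Finset.sum_congr rfl fun k _ => ?_
    rw [qc_S_tr]; simp

lemma qc_F_neg (Φ : SchwartzMap ℝ ℂ) (t : ℝ) : (𝓕 Φ : SchwartzMap ℝ ℂ) t = (𝓕⁻ Φ : SchwartzMap ℝ ℂ) (-t) := by
  rw [fourierInv_coe, fourier_coe, Real.fourierInv_eq_fourier_neg, neg_neg]

def qcB (M : ℕ) (q : ℕ → ℝ → ℂ) {ι : Type*} [Fintype ι] (c : ι → ℂ) (y : ι → ℝ) (j : ℕ) (x : ℝ) : ℂ :=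
  ∑ m ∈ Finset.range (M + 1), q m x * (m.choose j : ℂ) * ∑ i, c i * ((2 * Real.pi * ((-y i : ℝ):ℂ) * Complex.I) ^ (m - j) * e2piR x (-y i))

lemma qcB_sum {f : TemperedDistR} {M : ℕ} {q : ℕ → ℝ → ℂ} {Γ : Set ℝ} (h : qcRep (fourierTDR f) M q Γ)
    {ι : Type*} [Fintype ι] (c : ι → ℂ) (y : ι → ℝ) (φ : SchwartzMap ℝ ℂ) :
    HasSum (fun x => ∑ j ∈ Finset.range (M + 1), qcB M q c y j x * iteratedDeriv j (𝓕⁻ φ : SchwartzMap ℝ ℂ) x) (∑ i, c i * f (qcS 1 (-y i) φ)) := by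
  have h1 : ∀ i, HasSum (fun x => c i * ∑ m ∈ Finset.range (M + 1), q m x * iteratedDeriv m (𝓕⁻ (qcS 1 (-y i) φ) : SchwartzMap ℝ ℂ) x)
      (c i * f (qcS 1 (-y i) φ)) := fun i => by
    rw [qc_fhat f]
    exact (h.sum _).mul_left _
  have h2 := hasSum_sum (s := Finset.univ) fun i _ => h1 i
  convert h2 using 1
  ext x
  have e0 : ∀ i, ⇑(𝓕⁻ (qcS 1 (-y i) φ) : SchwartzMap ℝ ℂ) = fun t => (𝓕⁻ φ : SchwartzMap ℝ ℂ) t * e2piR t (-y i) := by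
    intro i; ext t; rw [qc_finv_S]; simp [qe_comm, mul_comm]
  have e1 : ∀ i, ∀ m ∈ Finset.range (M + 1), iteratedDeriv m (𝓕⁻ (qcS 1 (-y i) φ) : SchwartzMap ℝ ℂ) x = 
      ∑ j ∈ Finset.range (M + 1), (m.choose j : ℂ) * iteratedDeriv j (𝓕⁻ φ : SchwartzMap ℝ ℂ) x * ((2 * Real.pi * ((-y i : ℝ):ℂ) * Complex.I) ^ (m - j) * e2piR x (-y i)) := by
    intro i m hm
    rw [e0, iteratedDeriv_fun_mul (qc_cd _ _).contDiffAt (qe_cd _ _).contDiffAt]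
    simp only [qe_iter]
    refine Finset.sum_subset (fun j hj => ?_) fun j _ hj => ?_
    · simp only [Finset.mem_range] at *; omega
    · rw [Nat.choose_eq_zero_of_lt (by simpa using hj)]; simp
  rw [Finset.sum_congr rfl fun i _ => congrArg (c i * ·) (Finset.sum_congr rfl fun m hm => congrArg (q m x * ·) (e1 i m hm))]
  simp only [qcB, Finset.sum_mul, Finset.mul_sum]
  rw [Finset.sum_comm]
  refine (Finset.sum_congr rfl fun m _ => Finset.sum_comm).trans ?_
  rw [Finset.sum_comm]
  refine Finset.sum_congr rfl fun i _ => Finset.sum_congr rfl fun m _ => Finset.sum_congr rfl fun j _ => ?_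
  ring

lemma qcB_growth {f : TemperedDistR} {M : ℕ} {q : ℕ → ℝ → ℂ} {Γ : Set ℝ} (h : qcRep (fourierTDR f) M q Γ)
    {ι : Type*} [Fintype ι] (c : ι → ℂ) (y : ι → ℝ) :
    ∃ C ≥ (0:ℝ), ∃ A : ℕ, ∀ j x, ‖qcB M q c y j x‖ ≤ C * (1 + |x|) ^ A := by
  obtain ⟨C, hC, A, hgr⟩ := h.growth
  let H : ℕ → ℝ := fun j => ∑ m ∈ Finset.range (M + 1), (m.choose j : ℝ) * ∑ i, ‖c i‖ * ‖(2 * Real.pi * ((-y i : ℝ):ℂ) * Complex.I) ^ (m - j)‖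
  have hH : ∀ j, 0 ≤ H j := fun j => by positivity
  refine ⟨C * ∑ j ∈ Finset.range (M + 1), H j, by positivity, A, fun j x => ?_⟩
  have h1 : ‖qcB M q c y j x‖ ≤ C * (1 + |x|) ^ A * H j := by
    rw [qcB, Finset.mul_sum]
    refine (norm_sum_le _ _).trans (Finset.sum_le_sum fun m _ => ?_)
    rw [norm_mul, norm_mul, Complex.norm_natCast, mul_assoc]
    gcongr
    · exact hgr m x
    · refine (norm_sum_le _ _).trans (Finset.sum_le_sum fun i _ => ?_)
      rw [norm_mul, norm_mul, qe_norm, mul_one]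
  by_cases hj : j ∈ Finset.range (M + 1)
  · refine h1.trans ?_
    have := Finset.single_le_sum (f := H) (fun j _ => hH j) hj
    rw [mul_right_comm]
    gcongr
  · have : qcB M q c y j x = 0 := by
      refine Finset.sum_eq_zero fun m hm => ?_
      rw [Nat.choose_eq_zero_of_lt (by simp at hj hm; omega)]; simp
    rw [this, norm_zero]
    have : 0 ≤ ∑ j ∈ Finset.range (M + 1), H j := Finset.sum_nonneg fun j _ => hH j
    positivity

/-- the window lemma -/
lemma qc_window {f : TemperedDistR} {K M : ℕ} {p q : ℕ → ℝ → ℂ} {Λ Γ : Set ℝ} {η η' : ℝ} (hs : qcSep η Λ) (h : qcRep f K p Λ)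
    (hs' : qcSep η' Γ) (h' : qcRep (fourierTDR f) M q Γ) : ∃ R > (0:ℝ), ∀ (N : ℕ) (c : Fin N → ℂ) (y : Fin N → ℝ),
    (∀ n, ∀ z : ℝ, |z| ≤ R → ∑ i, c i * p n (z - y i) = 0) → 
    (∀ n z, ∑ i, c i * p n (z - y i) = 0) ∧ ∀ γ, (∃ m, q m γ ≠ 0) → ∑ i, c i * e2piR γ (-y i) = 0 := by
  obtain ⟨R, hR, hu⟩ := qc_uniq M η' hs'.1
  refine ⟨R, hR, fun N c y hz => ?_⟩
  have hann : qcAnn M (qcB M q c y) Γ 0 R := by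
    refine ⟨fun n x hx => ?_, qcB_growth h' c y, fun Φ hΦ => ?_⟩
    · by_contra hc
      apply hx
      have : ∀ m, q m x = 0 := fun m => by
        by_contra h0
        exact hc (h'.supp m x h0)
      simp [qcB, this]
    · have h1 := qcB_sum h' c y (𝓕 Φ)
      rw [FourierTransform.fourierInv_fourier_eq] at h1
      convert h1 using 1
      symm
      have h2 : ∀ i, HasSum (fun z => c i * ∑ n ∈ Finset.range (K + 1), p n (z - y i) * iteratedDeriv n (𝓕 Φ : SchwartzMap ℝ ℂ) z) (c i * f (qcS 1 (-y i) (𝓕 Φ))) := by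
        intro i
        refine HasSum.mul_left _ ?_
        have := h.sum (qcS 1 (-y i) (𝓕 Φ))
        rw [← (Equiv.subRight (y i)).hasSum_iff] at this
        simpa [qc_S_tr, Function.comp_def] using this
      have h3 := hasSum_sum (s := Finset.univ) fun i _ => h2 i
      refine h3.unique ?_
      have : (fun z => ∑ i, c i * ∑ n ∈ Finset.range (K + 1), p n (z - y i) * iteratedDeriv n (𝓕 Φ : SchwartzMap ℝ ℂ) z) = fun _ => 0 := by
        ext z
        have e : ∑ i, c i * ∑ n ∈ Finset.range (K + 1), p n (z - y i) * iteratedDeriv n (𝓕 Φ : SchwartzMap ℝ ℂ) z = 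
            ∑ n ∈ Finset.range (K + 1), (∑ i, c i * p n (z - y i)) * iteratedDeriv n (𝓕 Φ : SchwartzMap ℝ ℂ) z := by
          simp only [Finset.mul_sum, Finset.sum_mul, ← mul_assoc]
          rw [Finset.sum_comm]
        rw [e]
        refine Finset.sum_eq_zero fun n _ => ?_
        by_cases hzR : |z| ≤ R
        · rw [hz n z hzR, zero_mul]
        · rw [qc_iter_zero_of_ev, mul_zero]
          have : ∀ᶠ t in 𝓝 z, R < |t| := continuous_abs.continuousAt.eventually (lt_mem_nhds (not_le.1 hzR))
          refine this.mono fun t ht => ?_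
          rw [qc_F_neg]
          refine hΦ _ ?_
          rwa [sub_zero, abs_neg]
      rw [this]; exact hasSum_zero
  have hB := hu Γ _ 0 R hs' le_rfl hann
  constructor
  · refine qc_shift_coef hs h c y fun φ => ?_
    refine (qcB_sum h' c y φ).unique ?_
    have : (fun x => ∑ j ∈ Finset.range (M + 1), qcB M q c y j x * iteratedDeriv j (𝓕⁻ φ : SchwartzMap ℝ ℂ) x) = fun _ => 0 := by
      ext x
      refine Finset.sum_eq_zero fun j hj => ?_
      rw [hB j (by simp at hj; omega), zero_mul]
    rw [this]; exact hasSum_zero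
  · intro γ hγ
    obtain ⟨m, hm, hm1, hm2⟩ := qc_topdeg h' γ hγ
    have h1 := hB m hm γ
    rw [qcB, Finset.sum_eq_single_of_mem m (by simp; omega)] at h1
    · simpa [hm1] using h1
    · intro b _ hb
      rcases lt_or_gt_of_ne hb with hb | hb
      · rw [Nat.choose_eq_zero_of_lt hb]; simp
      · rw [hm2 b hb]; simp

lemma qc_fd {K : ℕ} {p : ℕ → ℝ → ℂ} (htop : ∀ n x, K < n → p n x = 0) (R : ℝ) (N : ℕ) (y : Fin N → ℝ) (Z : Finset ℝ)
    (hZ : ∀ z : ℝ, |z| ≤ R → ∀ i n, p n (z - y i) ≠ 0 → z ∈ Z) (hcard : (K + 1) * Z.card < N) :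
    ∃ c : Fin N → ℂ, c ≠ 0 ∧ ∀ n, ∀ z : ℝ, |z| ≤ R → ∑ i, c i * p n (z - y i) = 0 := by
  let A : Matrix (Fin (K + 1) × Z) (Fin N) ℂ := fun nz i => p nz.1 (nz.2 - y i)
  have hker : LinearMap.ker A.mulVecLin ≠ ⊥ := by
    refine LinearMap.ker_ne_bot_of_finrank_lt ?_
    simpa using hcard
  obtain ⟨c, hc, hc0⟩ := (Submodule.ne_bot_iff _).1 hker
  refine ⟨c, hc0, fun n z hz => ?_⟩
  by_cases hn : K < n
  · simp [htop n _ hn]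
  by_cases hzZ : z ∈ Z
  · have := congrFun (LinearMap.mem_ker.1 hc) (⟨n, by omega⟩, ⟨z, hzZ⟩)
    simp only [Matrix.mulVecLin_apply, Matrix.mulVec, dotProduct, A, Pi.zero_apply] at this
    rw [← this]
    exact Finset.sum_congr rfl fun i _ => mul_comm _ _
  · refine Finset.sum_eq_zero fun i _ => ?_
    by_contra hne
    exact hzZ (hZ z hz i n (right_ne_zero_of_mul hne))


def qcGe (Γ : Set ℝ) (ε : ℝ) : Set ℝ := {y | ∀ γ ∈ Γ, ‖e2piR y γ - 1‖ ≤ ε}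

lemma qe_neg (x w : ℝ) : e2piR (-x) w * e2piR x w = 1 := by rw [← qe_add]; simp [qe_zero]

lemma qe_sub_norm (x y w : ℝ) : ‖e2piR (x - y) w - 1‖ = ‖e2piR x w - e2piR y w‖ := by
  have : e2piR x w - e2piR y w = (e2piR (x - y) w - 1) * e2piR y w := by
    rw [sub_mul, ← qe_add, sub_add_cancel, one_mul]
  rw [this, norm_mul, qe_norm, mul_one]

lemma qcGe_sub {Γ : Set ℝ} {a b x y : ℝ} (hx : x ∈ qcGe Γ a) (hy : y ∈ qcGe Γ b) : x - y ∈ qcGe Γ (a + b) := by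
  intro γ hγ
  rw [qe_sub_norm]
  have h1 := hx γ hγ
  have h2 := hy γ hγ
  calc _ = ‖(e2piR x γ - 1) - (e2piR y γ - 1)‖ := by congr 1; ring
    _ ≤ _ := (norm_sub_le _ _).trans (add_le_add h1 h2)

lemma qcGe_neg {Γ : Set ℝ} {a x : ℝ} (hx : x ∈ qcGe Γ a) : -x ∈ qcGe Γ a := by
  have h0 : (0:ℝ) ∈ qcGe Γ 0 := fun γ _ => by simp [qe_zero]
  simpa using qcGe_sub h0 hx

lemma qcGe_add {Γ : Set ℝ} {a b x y : ℝ} (hx : x ∈ qcGe Γ a) (hy : y ∈ qcGe Γ b) : x + y ∈ qcGe Γ (a + b) := by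
  simpa using qcGe_sub hx (qcGe_neg hy)

lemma qcGe_mono {Γ : Set ℝ} {a b x : ℝ} (hx : x ∈ qcGe Γ a) (h : a ≤ b) : x ∈ qcGe Γ b := fun γ hγ => (hx γ hγ).trans h

lemma qcGe_mul {Γ : Set ℝ} {a x : ℝ} (hx : x ∈ qcGe Γ a) (k : ℕ) : (k:ℝ) * x ∈ qcGe Γ (k * a) := by
  induction k with
  | zero => intro γ _; simp [qe_zero]
  | succ k ih =>
    have := qcGe_add ih hx
    push_cast
    rwa [add_mul, add_mul, one_mul, one_mul]

lemma qc_reldense {f : TemperedDistR} {K M : ℕ} {p q : ℕ → ℝ → ℂ} {Λ Γ : Set ℝ} {η : ℝ} (hs : qcSep η Λ) (h : qcRep f K p Λ)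
    (h' : qcRep (fourierTDR f) M q Γ) (hne : ∃ n x, p n x ≠ 0) : ∃ L > (0:ℝ), ∀ c0, ∃ γ ∈ Γ, |γ - c0| ≤ L := by
  obtain ⟨L, hL, hu⟩ := qc_uniq K η hs.1
  refine ⟨L, hL, fun c0 => ?_⟩
  by_contra hc
  push Not at hc
  obtain ⟨n, x, hnx⟩ := hne
  have hann : qcAnn K p Λ c0 L := ⟨h.supp, h.growth, fun φ hφ => by
    have := h.sum φ
    rwa [qc_avoid h' hφ hc] at this⟩
  have hn : n ≤ K := by
    by_contra hK
    exact hnx (h.top n x (by omega))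
  exact hnx (hu Λ p c0 L hs le_rfl hann n hn x)

lemma qc_Gsmall {Γ : Set ℝ} {L : ℝ} (hL : 0 < L) (h : ∀ c0, ∃ γ ∈ Γ, |γ - c0| ≤ L) :
    ∃ δ > (0:ℝ), ∀ y ∈ qcGe Γ 1, |y| < δ → y = 0 := by
  refine ⟨1 / (8 * L), by positivity, fun y hy hyd => ?_⟩
  by_contra hy0
  obtain ⟨γ, hγ, hc⟩ := h (1 / (2 * y))
  have h1 : |y * γ - 1 / 2| < 1 / 8 := by
    have e : y * γ - 1 / 2 = y * (γ - 1 / (2 * y)) := by field_simp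
    rw [e, abs_mul]
    calc |y| * |γ - 1 / (2 * y)| ≤ |y| * L := by gcongr
      _ < 1 / (8 * L) * L := by gcongr
      _ = 1 / 8 := by field_simp
  have h2 := hy γ hγ
  have h3 : Real.cos (2 * Real.pi * (y * γ)) < 0 := by
    rw [abs_lt] at h1
    have hp := Real.pi_pos
    apply Real.cos_neg_of_pi_div_two_lt_of_lt
    · nlinarith
    · nlinarith
  have h4 : (e2piR y γ).re = Real.cos (2 * Real.pi * (y * γ)) := by
    simp only [e2piR]
    rw [Complex.exp_ofReal_mul_I_re]
  have h5 := Complex.abs_re_le_norm (e2piR y γ - 1)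
  rw [Complex.sub_re, h4, Complex.one_re, abs_sub_comm] at h5
  have h6 := le_abs_self (1 - Real.cos (2 * Real.pi * (y * γ)))
  linarith

/-- total boundedness -/
lemma qc_tb {Λ Γ : Set ℝ} (D : ℕ) (h : ∀ y : Fin D → ℝ, (∀ i, y i ∈ Λ) → ∃ c : Fin D → ℂ, c ≠ 0 ∧ ∀ γ ∈ Γ, ∑ i, c i * e2piR γ (-y i) = 0)
    (ε : ℝ) (hε : 0 < ε) : ∃ t : Finset ℝ, ∀ x ∈ Λ, ∃ y ∈ t, x - y ∈ qcGe Γ ε := by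
  classical
  have hcont : ∀ y : ℝ, Continuous fun γ : Γ => e2piR γ (-y) := fun y => by
    simp only [e2piR]; fun_prop
  let v : ℝ → BoundedContinuousFunction Γ ℂ := fun y => BoundedContinuousFunction.ofNormedAddCommGroup (fun γ : Γ => e2piR γ (-y)) (hcont y) 1 
    (fun γ => by rw [qe_norm])
  have hv : ∀ y γ, v y γ = e2piR γ (-y) := fun y γ => rfl
  have hvn : ∀ y, ‖v y‖ ≤ 1 := fun y => BoundedContinuousFunction.norm_ofNormedAddCommGroup_le _ zero_le_one _
  obtain ⟨b, hb, hbs, hli⟩ := exists_linearIndependent ℂ (v '' Λ)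
  have hbfin : b.Finite := by
    by_contra hinf
    obtain ⟨S, hS, hcard⟩ := Set.Infinite.exists_subset_card_eq hinf D
    let e : Fin D ≃ S := (S.equivFinOfCardEq hcard).symm
    have hy : ∀ i, ∃ y ∈ Λ, v y = (e i : BoundedContinuousFunction Γ ℂ) := fun i => hb (hS (e i).2)
    choose y hyΛ hyv using hy
    obtain ⟨c, hc0, hc⟩ := h y hyΛ
    have hli2 : LinearIndependent ℂ (fun i : Fin D => (e i : BoundedContinuousFunction Γ ℂ)) := 
      hli.comp (fun i => (⟨(e i : BoundedContinuousFunction Γ ℂ), hS (e i).2⟩ : b)) (fun i j hij => by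
        have := congrArg Subtype.val hij
        exact e.injective (Subtype.ext this))
    rw [Fintype.linearIndependent_iff] at hli2
    apply hc0
    ext i
    refine hli2 c ?_ i
    ext γ
    have := hc γ γ.2
    simp only [← hyv]
    simpa [hv] using this
  have hfd : FiniteDimensional ℂ (Submodule.span ℂ (v '' Λ)) := by
    rw [← hbs]
    exact FiniteDimensional.span_of_finite ℂ hbfin
  let V := Submodule.span ℂ (v '' Λ)
  haveI : ProperSpace V := FiniteDimensional.proper ℂ V
  let S : Set V := {u | (u : BoundedContinuousFunction Γ ℂ) ∈ v '' Λ}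
  have hSb : Bornology.IsBounded S := by
    refine (Metric.isBounded_closedBall (x := (0:V)) (r := 1)).subset ?_
    rintro u ⟨y, _, hy⟩
    rw [mem_closedBall_zero_iff, Submodule.coe_norm, ← hy]
    exact hvn y
  have htb : TotallyBounded S := hSb.isCompact_closure.totallyBounded.subset subset_closure
  obtain ⟨t, hts, htf, hcov⟩ := Metric.finite_approx_of_totallyBounded htb ε hε
  have hch : ∀ u ∈ t, ∃ y, v y = (u : BoundedContinuousFunction Γ ℂ) := fun u hu => by
    obtain ⟨y, _, hy⟩ := hts hu
    exact ⟨y, hy⟩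
  choose! g hg using hch
  refine ⟨htf.toFinset.image g, fun x hx => ?_⟩
  have hxS : (⟨v x, Submodule.subset_span ⟨x, hx, rfl⟩⟩ : V) ∈ S := ⟨x, hx, rfl⟩
  obtain ⟨u, hu, hxu⟩ := Set.mem_iUnion₂.1 (hcov hxS)
  refine ⟨g u, Finset.mem_image_of_mem _ (htf.mem_toFinset.2 hu), ?_⟩
  have h1 : dist (v x) (v (g u)) < ε := by
    rw [hg u hu]
    exact hxu
  rw [show x - g u = -(g u - x) by ring]
  apply qcGe_neg
  intro γ hγ
  have h2 := (BoundedContinuousFunction.dist_coe_le_dist (f := v x) (g := v (g u)) (⟨γ, hγ⟩ : Γ)).trans h1.le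
  rw [hv, hv, dist_eq_norm] at h2
  calc _ = ‖e2piR (-x - -(g u)) γ - 1‖ := by congr 3; ring
    _ ≤ _ := by rw [qe_sub_norm, qe_comm, qe_comm _ γ]; exact h2

/-- the main relation -/
lemma qc_relation {f : TemperedDistR} {K M : ℕ} {p q : ℕ → ℝ → ℂ} {Λ Γ : Set ℝ} {η η' : ℝ} (hs : qcSep η Λ) (h : qcRep f K p Λ)
    (hs' : qcSep η' Γ) (h' : qcRep (fourierTDR f) M q Γ) (hΛ : ∀ x ∈ Λ, ∃ n, p n x ≠ 0) (hΓ : ∀ x ∈ Γ, ∃ n, q n x ≠ 0)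
    (hne : Λ.Nonempty) : ∃ x : ℝ, 0 < x ∧ ∃ N, ∃ c : Fin N → ℂ, c ≠ 0 ∧ ∀ n z, ∑ i : Fin N, c i * p n (z - (i:ℕ) * x) = 0 := by
  classical
  obtain ⟨R, hR, hwin⟩ := qc_window hs h hs' h'
  obtain ⟨x0, hx0⟩ := hne
  -- finite dimensionality
  have hfl := qc_flc hs h hs' h' R hR.le
  let Z0 := hfl.toFinset
  have hTB := qc_tb (Λ := Λ) (Γ := Γ) ((K + 1) * Z0.card + 1) (fun y hy => by
    obtain ⟨c, hc0, hc⟩ := qc_fd h.top R _ y Z0 (fun z hz i n hn => by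
      rw [Set.Finite.mem_toFinset]
      exact ⟨abs_le.1 hz, z - y i, y i, ⟨n, hn⟩, hΛ _ (hy i), by ring⟩) (Nat.lt_succ_self _)
    exact ⟨c, hc0, fun γ hγ => (hwin _ c y hc).2 γ (hΓ γ hγ)⟩)
  obtain ⟨L, hL, hrel⟩ := qc_reldense hs h h' (by
    obtain ⟨n, hn⟩ := hΛ x0 hx0
    exact ⟨n, x0, hn⟩)
  obtain ⟨δ, hδ, hsm⟩ := qc_Gsmall hL hrel
  obtain ⟨t, ht⟩ := hTB (1/8) (by norm_num)
  -- uniform count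
  have hsep : ∀ y : ℝ, qcSep δ {z | z - y ∈ qcGe Γ (1/4)} := by
    refine fun y => ⟨hδ, fun a ha b hb hab => ?_⟩
    by_contra hlt
    have h1 := qcGe_sub ha hb
    have h2 := hsm (a - b) (qcGe_mono (by simpa using h1) (by norm_num)) (not_le.1 hlt)
    exact hab (sub_eq_zero.1 h2)
  let Z : Finset ℝ := t.biUnion fun y => (qc_fin_of_sep (hsep y) (-R) R).toFinset
  let N := (K + 1) * Z.card + 1
  -- Λ infinite
  have hinf : Λ.Infinite := by
    intro hfin
    obtain ⟨c, hc, hd⟩ := qc_sumdens hs h hs' h'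
    obtain ⟨T0, hT0⟩ := hd x0 x0 (hΛ x0 hx0) (hΛ x0 hx0)
    have h1 := hT0 (max T0 (Λ.ncard / c)) (le_max_left _ _)
    have h2 : ({z | z ∈ Λ ∧ x0 + x0 - z ∈ Λ} ∩ Icc (-(max T0 (Λ.ncard / c))) (max T0 (Λ.ncard / c))).ncard ≤ Λ.ncard :=
      Set.ncard_le_ncard (fun z hz => hz.1.1) hfin
    have h3 : c * (Λ.ncard / c) ≤ c * max T0 (Λ.ncard / c) := by gcongr; exact le_max_right _ _
    have h4 : c * (Λ.ncard / c) = Λ.ncard := by field_simp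
    have h5 : (({z | z ∈ Λ ∧ x0 + x0 - z ∈ Λ} ∩ Icc (-(max T0 (Λ.ncard / c))) (max T0 (Λ.ncard / c))).ncard : ℝ) ≤ Λ.ncard := by exact_mod_cast h2
    linarith
  have hNpos : (0:ℝ) < N := by simp only [N]; positivity
  have hx : ∃ x : ℝ, 0 < x ∧ x ∈ qcGe Γ (1 / (8 * N)) := by
    obtain ⟨t', ht'⟩ := hTB (1 / (16 * N)) (by positivity)
    choose! g hg1 hg2 using ht'
    obtain ⟨a, ha, b, hb, hab, hgab⟩ := hinf.exists_ne_map_eq_of_mapsTo (f := g) (t := (t' : Set ℝ)) (fun x hx => hg1 x hx) t'.finite_toSet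
    have h1 := qcGe_sub (hg2 a ha) (hg2 b hb)
    rw [hgab, show a - g b - (b - g b) = a - b by ring, show 1 / (16 * (N:ℝ)) + 1 / (16 * N) = 1 / (8 * N) by field_simp; norm_num] at h1
    rcases lt_or_gt_of_ne hab with hlt | hlt
    · refine ⟨b - a, by linarith, ?_⟩
      have := qcGe_neg h1
      rwa [neg_sub] at this
    · exact ⟨a - b, by linarith, h1⟩
  obtain ⟨x, hxpos, hx⟩ := hx
  obtain ⟨c, hc0, hc⟩ := qc_fd h.top R N (fun i : Fin N => ((i:ℕ):ℝ) * x) Z (fun z hz i n hn => by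
      obtain ⟨y, hyt, hy⟩ := ht _ (h.supp _ _ hn)
      refine Finset.mem_biUnion.2 ⟨y, hyt, ?_⟩
      rw [Set.Finite.mem_toFinset]
      refine ⟨?_, abs_le.1 hz⟩
      have h1 : ((i:ℕ):ℝ) * x ∈ qcGe Γ (1/8) := by
        refine qcGe_mono (qcGe_mul hx i) ?_
        have : ((i:ℕ):ℝ) ≤ N := by exact_mod_cast i.2.le
        rw [mul_one_div, div_le_div_iff₀ (by positivity) (by norm_num)]
        linarith
      have h2 := qcGe_add hy h1
      rw [show z - ((i:ℕ):ℝ) * x - y + ((i:ℕ):ℝ) * x = z - y by ring] at h2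
      exact qcGe_mono h2 (by norm_num)) (Nat.lt_succ_self _)
  exact ⟨x, hxpos, N, c, hc0, (hwin _ c _ hc).1⟩


/-- shift -/
def qcT : (ℤ → ℂ) →ₗ[ℂ] (ℤ → ℂ) where
  toFun u := fun j => u (j - 1)
  map_add' _ _ := rfl
  map_smul' _ _ := rfl

lemma qcT_apply (u : ℤ → ℂ) (j : ℤ) : qcT u j = u (j - 1) := rfl

lemma qcT_pow (u : ℤ → ℂ) (k : ℕ) (j : ℤ) : (qcT ^ k) u j = u (j - k) := by
  induction k generalizing j with
  | zero => simp
  | succ k ih =>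
    rw [pow_succ', Module.End.mul_apply, qcT_apply, ih]
    push_cast
    congr 1
    ring

def qcEl (l : ℕ) (θ : ℝ) : ℤ → ℂ := fun j => (j:ℂ) ^ l * e2piR j θ

def qcEx : Submodule ℂ (ℤ → ℂ) := Submodule.span ℂ (Set.range fun a : ℕ × ℝ => qcEl a.1 a.2)

lemma qcEl_mem (l : ℕ) (θ : ℝ) : qcEl l θ ∈ qcEx := Submodule.subset_span ⟨(l, θ), rfl⟩

lemma qcEl_shift (l : ℕ) (θ : ℝ) : qcT (qcEl l θ) = ∑ i ∈ Finset.range (l + 1), ((l.choose i : ℂ) * (-1) ^ (l - i) * e2piR (-1) θ) • qcEl i θ := by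
  ext j
  rw [qcT_apply, Finset.sum_apply]
  simp only [qcEl, Pi.smul_apply, smul_eq_mul]
  have h1 : e2piR ((j - 1 : ℤ) : ℝ) θ = e2piR (-1) θ * e2piR j θ := by
    rw [← qe_add]; congr 1; push_cast; ring
  rw [h1]
  push_cast
  rw [sub_eq_add_neg, add_pow, Finset.sum_mul]
  refine Finset.sum_congr rfl fun i _ => ?_
  ring

def qcTr (r : ℂ) : (ℤ → ℂ) →ₗ[ℂ] (ℤ → ℂ) := qcT - r • LinearMap.id

lemma qcTr_apply (r : ℂ) (u : ℤ → ℂ) : qcTr r u = qcT u - r • u := rfl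

/-- surjectivity of `T - r` on Ex -/
lemma qcEx_surj (r : ℂ) : qcEx ≤ qcEx.map (qcTr r) := by
  have key : ∀ (θ : ℝ) (l : ℕ), qcEl l θ ∈ qcEx.map (qcTr r) := by
    intro θ l
    induction l using Nat.strong_induction_on with
    | _ l ih =>
      by_cases hr : e2piR (-1) θ = r
      · have h1 : (qcTr r) (qcEl (l + 1) θ) ∈ qcEx.map (qcTr r) := Submodule.mem_map_of_mem (qcEl_mem _ _)
        have h2 : (qcTr r) (qcEl (l + 1) θ) = 
            ∑ i ∈ Finset.range l, (((l + 1).choose i : ℂ) * (-1) ^ (l + 1 - i) * e2piR (-1) θ) • qcEl i θ + (-((l:ℂ) + 1) * r) • qcEl l θ := by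
          rw [qcTr_apply, qcEl_shift, Finset.sum_range_succ, Finset.sum_range_succ]
          rw [Nat.choose_self, Nat.sub_self, Nat.choose_succ_self_right, show l + 1 - l = 1 by omega, hr]
          push_cast
          simp only [pow_one, pow_zero, one_mul, mul_one]
          rw [add_sub_assoc, sub_self, add_zero]
          congr 2
          ring
        rw [h2] at h1
        have h3 : ∑ i ∈ Finset.range l, (((l + 1).choose i : ℂ) * (-1) ^ (l + 1 - i) * e2piR (-1) θ) • qcEl i θ ∈ qcEx.map (qcTr r) :=
          Submodule.sum_mem _ fun i hi => Submodule.smul_mem _ _ (ih i (by simpa using hi))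
        have h4 := (Submodule.add_mem_iff_right _ h3).1 h1
        refine (Submodule.smul_mem_iff _ ?_).1 h4
        refine mul_ne_zero (neg_ne_zero.2 ?_) ?_
        · exact_mod_cast Nat.succ_ne_zero l
        · rw [← hr]; exact qe_ne _ _
      · have h1 : (qcTr r) (qcEl l θ) ∈ qcEx.map (qcTr r) := Submodule.mem_map_of_mem (qcEl_mem _ _)
        have h2 : (qcTr r) (qcEl l θ) = 
            ∑ i ∈ Finset.range l, ((l.choose i : ℂ) * (-1) ^ (l - i) * e2piR (-1) θ) • qcEl i θ + (e2piR (-1) θ - r) • qcEl l θ := by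
          rw [qcTr_apply, qcEl_shift, Finset.sum_range_succ, sub_smul]
          rw [Nat.choose_self, Nat.sub_self]
          push_cast
          simp only [pow_zero, one_mul]
          rw [add_sub_assoc]
        rw [h2] at h1
        have h3 : ∑ i ∈ Finset.range l, ((l.choose i : ℂ) * (-1) ^ (l - i) * e2piR (-1) θ) • qcEl i θ ∈ qcEx.map (qcTr r) :=
          Submodule.sum_mem _ fun i hi => Submodule.smul_mem _ _ (ih i (by simpa using hi))
        have h4 := (Submodule.add_mem_iff_right _ h3).1 h1
        exact (Submodule.smul_mem_iff _ (sub_ne_zero.2 hr)).1 h4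
  refine Submodule.span_le.2 ?_
  rintro _ ⟨⟨l, θ⟩, rfl⟩
  exact key θ l

/-- polynomial growth -/
def qcPG : Submodule ℂ (ℤ → ℂ) where
  carrier := {u | ∃ C ≥ (0:ℝ), ∃ A : ℕ, ∀ j : ℤ, ‖u j‖ ≤ C * (1 + |(j:ℝ)|) ^ A}
  zero_mem' := ⟨0, le_rfl, 0, by simp⟩
  add_mem' := by
    rintro u v ⟨C, hC, A, h⟩ ⟨C', hC', A', h'⟩
    refine ⟨C + C', by positivity, A + A', fun j => (norm_add_le _ _).trans ?_⟩
    rw [add_mul]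
    have h1 : (1:ℝ) ≤ 1 + |(j:ℝ)| := by linarith [abs_nonneg (j:ℝ)]
    refine add_le_add ((h j).trans ?_) ((h' j).trans ?_)
    · gcongr
      omega
    · gcongr
      omega
  smul_mem' := by
    rintro a u ⟨C, hC, A, h⟩
    refine ⟨‖a‖ * C, by positivity, A, fun j => ?_⟩
    rw [Pi.smul_apply, norm_smul, mul_assoc]
    gcongr
    exact h j

lemma qcEx_PG : qcEx ≤ qcPG := by
  refine Submodule.span_le.2 ?_
  rintro _ ⟨⟨l, θ⟩, rfl⟩
  refine ⟨1, zero_le_one, l, fun j => ?_⟩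
  simp only [qcEl]
  rw [norm_mul, qe_norm, norm_pow, mul_one, one_mul, Complex.norm_intCast]
  gcongr
  linarith

lemma qcPG_T {u : ℤ → ℂ} (h : u ∈ qcPG) : qcT u ∈ qcPG := by
  obtain ⟨C, hC, A, h⟩ := h
  refine ⟨C * 2 ^ A, by positivity, A, fun j => ?_⟩
  rw [qcT_apply, mul_assoc, ← mul_pow]
  refine (h _).trans ?_
  gcongr
  push_cast
  have := abs_sub (j:ℝ) 1
  rw [abs_one] at this
  linarith [abs_nonneg (j:ℝ)]

lemma qc_expgrow (ρ a C : ℝ) (A : ℕ) (hρ : 1 < ρ) (ha : 0 < a) (h : ∀ m : ℕ, a * ρ ^ m ≤ C * (1 + (m:ℝ)) ^ A) : False := by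
  have h1 := tendsto_pow_const_div_const_pow_of_one_lt A hρ
  have h2 := (h1.comp (tendsto_add_atTop_nat 1)).const_mul (C * ρ)
  rw [mul_zero] at h2
  obtain ⟨m, hm⟩ := (h2.eventually (gt_mem_nhds ha)).exists
  have h3 := h m
  simp only [Function.comp] at hm
  have hp : 0 < ρ ^ m := by positivity
  have : C * ρ * (((m + 1 : ℕ):ℝ) ^ A / ρ ^ (m + 1)) = C * (1 + (m:ℝ)) ^ A / ρ ^ m := by
    push_cast
    rw [add_comm (m:ℝ) 1, pow_succ]
    field_simp
  rw [this, div_lt_iff₀ hp] at hm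
  linarith

lemma qc_ker (r : ℂ) (w : ℤ → ℂ) (hw : w ∈ qcPG) (h : (qcTr r) w = 0) : w ∈ qcEx := by
  have h1 : ∀ j, w (j - 1) = r * w j := fun j => by
    have := congrFun h j
    simpa [qcTr_apply, qcT_apply, sub_eq_zero] using this
  by_cases hr : r = 0
  · have : w = 0 := by
      ext j
      have := h1 (j + 1)
      simpa [hr] using this
    rw [this]; exact Submodule.zero_mem _
  have hneg : ∀ m : ℕ, w (-m) = r ^ m * w 0 := fun m => by
    induction m with
    | zero => simp
    | succ m ih =>
      push_cast
      rw [show (-((m:ℤ) + 1)) = -m - 1 by ring, h1, ih]; ring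
  have hpos : ∀ m : ℕ, w m = (r⁻¹) ^ m * w 0 := fun m => by
    induction m with
    | zero => simp
    | succ m ih =>
      push_cast
      have := h1 ((m:ℤ) + 1)
      rw [add_sub_cancel_right, ih] at this
      rw [pow_succ', mul_assoc, this, inv_mul_cancel_left₀ hr]
  by_cases h0 : w 0 = 0
  · have : w = 0 := by
      ext j
      obtain ⟨m, rfl | rfl⟩ := j.eq_nat_or_neg
      · simp [hpos, h0]
      · simp [hneg, h0]
    rw [this]; exact Submodule.zero_mem _
  obtain ⟨C, hC, A, hg⟩ := hw
  have hr1 : ‖r‖ = 1 := by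
    rcases lt_trichotomy ‖r‖ 1 with hlt | heq | hgt
    · exfalso
      refine qc_expgrow (‖r‖⁻¹) ‖w 0‖ C A ((one_lt_inv₀ (norm_pos_iff.2 hr)).2 hlt) (norm_pos_iff.2 h0) fun m => ?_
      have := hg m
      rw [hpos, norm_mul, norm_pow, norm_inv] at this
      simpa [mul_comm] using this
    · exact heq
    · exfalso
      refine qc_expgrow ‖r‖ ‖w 0‖ C A hgt (norm_pos_iff.2 h0) fun m => ?_
      have := hg (-m)
      rw [hneg, norm_mul, norm_pow] at this
      simpa [mul_comm] using this
  let θ : ℝ := -(r.arg / (2 * Real.pi))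
  have hθ : e2piR (-1) θ = r := by
    have h2 := Complex.norm_mul_exp_arg_mul_I r
    rw [hr1, Complex.ofReal_one, one_mul] at h2
    rw [← h2]
    simp only [e2piR, θ]
    congr 2
    rw [Complex.ofReal_inj]
    have := Real.pi_pos
    field_simp
  have hθ' : e2piR 1 θ = r⁻¹ := by
    rw [← hθ]
    refine eq_inv_of_mul_eq_one_left ?_
    rw [← qe_add]; simp [qe_zero]
  have hnat : ∀ (a : ℝ) (m : ℕ), e2piR (m * a) θ = e2piR a θ ^ m := fun a m => by
    induction m with
    | zero => simp [qe_zero]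
    | succ m ih => push_cast; rw [add_mul, one_mul, qe_add, ih, pow_succ]
  have : w = w 0 • qcEl 0 θ := by
    ext j
    simp only [Pi.smul_apply, qcEl, pow_zero, one_mul, smul_eq_mul]
    obtain ⟨m, rfl | rfl⟩ := j.eq_nat_or_neg
    · rw [hpos, ← hθ', ← hnat]; push_cast; rw [mul_one, mul_comm]
    · rw [hneg, ← hθ, ← hnat]; push_cast; rw [mul_neg, mul_one, mul_comm]
  rw [this]
  exact Submodule.smul_mem _ _ (qcEl_mem _ _)

lemma qc_recur (P : Polynomial ℂ) (hP : P ≠ 0) (u : ℤ → ℂ) (hu : u ∈ qcPG) (h : Polynomial.aeval qcT P u = 0) : u ∈ qcEx := by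
  have hsp := (IsAlgClosed.splits P).eq_prod_roots
  have key : ∀ (s : Multiset ℂ) (u : ℤ → ℂ), u ∈ qcPG → Polynomial.aeval qcT (s.map fun a => Polynomial.X - Polynomial.C a).prod u = 0 → u ∈ qcEx := by
    intro s
    induction s using Multiset.induction_on with
    | empty =>
      intro u _ h
      simp at h
      rw [h]; exact Submodule.zero_mem _
    | cons r s ih =>
      intro u hu h
      rw [Multiset.map_cons, Multiset.prod_cons, mul_comm, map_mul, Module.End.mul_apply] at h
      have e : Polynomial.aeval qcT (Polynomial.X - Polynomial.C r) = qcTr r := by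
        rw [map_sub, Polynomial.aeval_X, Polynomial.aeval_C]; rfl
      rw [e] at h
      have hv : (qcTr r) u ∈ qcPG := by
        rw [qcTr_apply]
        exact Submodule.sub_mem _ (qcPG_T hu) (Submodule.smul_mem _ _ hu)
      obtain ⟨g, hg, hgv⟩ := qcEx_surj r (ih _ hv h)
      have h2 := qc_ker r (u - g) (Submodule.sub_mem _ hu (qcEx_PG hg)) (by rw [map_sub, hgv, sub_self])
      have := Submodule.add_mem _ h2 hg
      rwa [sub_add_cancel] at this
  refine key P.roots u hu ?_
  rw [hsp, map_mul, Polynomial.aeval_C, Module.End.mul_apply] at h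
  have h3 : P.leadingCoeff • (Polynomial.aeval qcT (P.roots.map fun a => Polynomial.X - Polynomial.C a).prod u) = 0 := h
  exact (smul_eq_zero.1 h3).resolve_left (Polynomial.leadingCoeff_ne_zero.2 hP)

lemma qc_recur' {N : ℕ} (c : Fin N → ℂ) (hc : c ≠ 0) (u : ℤ → ℂ) (hu : u ∈ qcPG) (h : ∀ j : ℤ, ∑ i, c i * u (j - (i:ℕ)) = 0) : u ∈ qcEx := by
  let P : Polynomial ℂ := ∑ i : Fin N, Polynomial.monomial (i:ℕ) (c i)
  have hco : ∀ i : Fin N, P.coeff i = c i := by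
    intro i
    simp only [P, Polynomial.finsetSum_coeff, Polynomial.coeff_monomial]
    rw [Finset.sum_eq_single i]
    · simp
    · intro b _ hb
      rw [if_neg]
      exact fun hh => hb (Fin.ext hh)
    · simp
  have hP : P ≠ 0 := by
    intro h0
    apply hc
    ext i
    rw [← hco, h0]; simp
  refine qc_recur P hP u hu ?_
  ext j
  simp only [P, map_sum, Polynomial.aeval_monomial, LinearMap.sum_apply, Finset.sum_apply]
  rw [Pi.zero_apply, ← h j]
  refine Finset.sum_congr rfl fun i _ => ?_
  rw [Module.End.mul_apply, ← qcT_pow u]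
  rfl

lemma qc_propag {N : ℕ} (c : Fin N → ℂ) (hc : c ≠ 0) (u : ℤ → ℂ) (h : ∀ j : ℤ, ∑ i, c i * u (j - (i:ℕ)) = 0)
    (h0 : ∀ j : ℤ, 0 ≤ j → j < N → u j = 0) : u = 0 := by
  classical
  obtain ⟨i', hi'⟩ := Function.ne_iff.1 hc
  let S : Finset (Fin N) := Finset.univ.filter fun i => c i ≠ 0
  have hS : S.Nonempty := ⟨i', by simpa [S] using hi'⟩
  -- upward
  have up : ∀ m : ℕ, u m = 0 := by
    intro m
    induction m using Nat.strong_induction_on with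
    | _ m ih =>
      by_cases hm : m < N
      · exact h0 m (by positivity) (by exact_mod_cast hm)
      let a := S.min' hS
      have ha : c a ≠ 0 := by simpa [S] using S.min'_mem hS
      have h1 := h (m + (a:ℕ))
      rw [Finset.sum_eq_single a] at h1
      · rw [add_sub_cancel_right] at h1
        exact (mul_eq_zero.1 h1).resolve_left ha
      · intro b _ hb
        by_cases hcb : c b = 0
        · rw [hcb, zero_mul]
        have h2 : a ≤ b := S.min'_le b (by simpa [S] using hcb)
        have h3 : a < b := lt_of_le_of_ne h2 (Ne.symm hb)
        have h4 : (a:ℕ) < b := h3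
        have hbN := b.2
        have := ih (m + a - b) (by omega)
        rw [show ((m:ℤ) + (a:ℕ) - (b:ℕ)) = ((m + a - b : ℕ) : ℤ) by omega, this, mul_zero]
      · simp
  have down : ∀ m : ℕ, u (N - m) = 0 := by
    intro m
    induction m using Nat.strong_induction_on with
    | _ m ih =>
      by_cases hm : m ≤ N
      · have := up (N - m)
        rwa [Nat.cast_sub hm] at this
      let a := S.max' hS
      have ha : c a ≠ 0 := by simpa [S] using S.max'_mem hS
      have h1 := h (N - m + (a:ℕ))
      rw [Finset.sum_eq_single a] at h1
      · rw [add_sub_cancel_right] at h1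
        exact (mul_eq_zero.1 h1).resolve_left ha
      · intro b _ hb
        by_cases hcb : c b = 0
        · rw [hcb, zero_mul]
        have h2 : b ≤ a := S.le_max' b (by simpa [S] using hcb)
        have h3 : b < a := lt_of_le_of_ne h2 hb
        have h4 : (b:ℕ) < a := h3
        have haN := a.2
        have := ih (m + b - a) (by omega)
        rw [show ((N:ℤ) - m + (a:ℕ) - (b:ℕ)) = (N:ℤ) - ((m + b - a : ℕ) : ℤ) by omega, this, mul_zero]
      · simp
  ext j
  by_cases hj : 0 ≤ j
  · lift j to ℕ using hj
    exact up j
  · have := down (N - j).toNat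
    rwa [show (N:ℤ) - ((N - j).toNat : ℤ) = j by omega] at this


def qcCp : Type := {φ : SchwartzMap ℝ ℂ // HasCompactSupport (⇑φ)}

def qcGen (x τ w : ℝ) (l n : ℕ) : qcCp → ℂ := fun φ =>
  ∑' lam : {y : ℝ // ∃ m : ℤ, y = x * m}, (((lam : ℝ) ^ l : ℝ) : ℂ) * e2piR (lam : ℝ) w *
              ((-1 : ℂ) ^ n * iteratedDeriv n (⇑φ.1) ((lam : ℝ) + τ))

lemma qc_finj (φ : qcCp) {x : ℝ} (hx : 0 < x) (τ : ℝ) (n : ℕ) : {j : ℤ | iteratedDeriv n (⇑φ.1) (τ + j * x) ≠ 0}.Finite := by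
  obtain ⟨R, hR⟩ := φ.2.isCompact.isBounded.subset_closedBall (0:ℝ)
  refine (Set.finite_Icc ⌊(-R - τ) / x⌋ ⌈(R - τ) / x⌉).subset ?_
  intro j hj
  have h1 : τ + j * x ∈ tsupport (⇑φ.1) := by
    by_contra hc
    refine hj (qc_iter_zero_of_ev φ.1 _ ?_ n)
    exact notMem_tsupport_iff_eventuallyEq.1 hc
  have h2 := hR h1
  rw [mem_closedBall_zero_iff, Real.norm_eq_abs, abs_le] at h2
  constructor
  · have : (-R - τ) / x ≤ j := by rw [div_le_iff₀ hx]; linarith [h2.1]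
    exact_mod_cast (Int.floor_le _).trans this
  · have : (j:ℝ) ≤ (R - τ) / x := by rw [le_div_iff₀ hx]; linarith [h2.2]
    exact_mod_cast this.trans (Int.le_ceil _)

lemma qc_summ (φ : qcCp) {x : ℝ} (hx : 0 < x) (τ : ℝ) (n : ℕ) (u : ℤ → ℂ) :
    Summable fun j : ℤ => u j * iteratedDeriv n (⇑φ.1) (τ + j * x) := by
  refine summable_of_hasFiniteSupport ((qc_finj φ hx τ n).subset ?_)
  intro j hj h0
  apply hj
  simp only [h0, mul_zero]

def qcL {x : ℝ} (hx : 0 < x) (τ : ℝ) (n : ℕ) : (ℤ → ℂ) →ₗ[ℂ] (qcCp → ℂ) where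
  toFun u := fun φ => ∑' j : ℤ, u j * iteratedDeriv n (⇑φ.1) (τ + j * x)
  map_add' u v := by
    ext φ
    rw [Pi.add_apply, ← (qc_summ φ hx τ n u).tsum_add (qc_summ φ hx τ n v)]
    simp only [Pi.add_apply, add_mul]
  map_smul' a u := by
    ext φ
    simp only [Pi.smul_apply, smul_eq_mul, RingHom.id_apply, mul_assoc]
    rw [tsum_mul_left]

def qcGens (x : ℝ) : Set (qcCp → ℂ) := Set.range fun a : (ℝ × ℝ) × (ℕ × ℕ) => qcGen x a.1.1 a.1.2 a.2.1 a.2.2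

def qcEqv {x : ℝ} (hx : 0 < x) : ℤ ≃ {y : ℝ // ∃ m : ℤ, y = x * m} :=
  Equiv.ofBijective (fun j => ⟨x * j, j, rfl⟩) (by
    constructor
    · intro a b h
      have h1 : x * (a:ℝ) = x * b := congrArg Subtype.val h
      exact_mod_cast mul_left_cancel₀ hx.ne' h1
    · rintro ⟨y, m, rfl⟩
      exact ⟨m, rfl⟩)

lemma qcL_El {x : ℝ} (hx : 0 < x) (τ : ℝ) (n l : ℕ) (θ : ℝ) :
    qcL hx τ n (qcEl l θ) = (((x:ℂ) ^ l)⁻¹ * (-1) ^ n) • qcGen x τ (θ / x) l n := by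
  ext φ
  have hxc : (x:ℂ) ≠ 0 := by exact_mod_cast hx.ne'
  rw [Pi.smul_apply, smul_eq_mul, qcGen, ← tsum_mul_left, ← (qcEqv hx).tsum_eq]
  refine tsum_congr fun j => ?_
  have e : ((qcEqv hx j : {y : ℝ // ∃ m : ℤ, y = x * m}) : ℝ) = x * j := rfl
  rw [e, qcEl]
  have h1 : e2piR (x * j) (θ / x) = e2piR j θ := by
    simp only [e2piR]
    congr 4
    field_simp
  rw [h1, add_comm (x * (j:ℝ)) τ, mul_comm x (j:ℝ)]
  have h2 : ((-1:ℂ) ^ n) * (-1) ^ n = 1 := by rw [← mul_pow]; simp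
  push_cast
  rw [mul_pow]
  have h3 : ((x:ℂ) ^ l)⁻¹ * (x:ℂ) ^ l = 1 := inv_mul_cancel₀ (pow_ne_zero _ hxc)
  calc _ = (j:ℂ) ^ l * e2piR j θ * iteratedDeriv n (⇑φ.1) (τ + j * x) * (((x:ℂ) ^ l)⁻¹ * (x:ℂ) ^ l) * (((-1:ℂ) ^ n) * (-1) ^ n) := by
        rw [h2, h3, mul_one, mul_one]
    _ = _ := by ring

lemma qcL_mem {x : ℝ} (hx : 0 < x) (τ : ℝ) (n : ℕ) (u : ℤ → ℂ) (hu : u ∈ qcEx) :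
    qcL hx τ n u ∈ Submodule.span ℂ (qcGens x) := by
  have : qcEx ≤ (Submodule.span ℂ (qcGens x)).comap (qcL hx τ n) := by
    refine Submodule.span_le.2 ?_
    rintro _ ⟨⟨l, θ⟩, rfl⟩
    show qcL hx τ n (qcEl l θ) ∈ Submodule.span ℂ (qcGens x)
    rw [qcL_El]
    exact Submodule.smul_mem _ _ (Submodule.subset_span ⟨((τ, θ / x), (l, n)), rfl⟩)
  exact this hu

lemma qc_growth_u {f : TemperedDistR} {K : ℕ} {p : ℕ → ℝ → ℂ} {Λ : Set ℝ} (h : qcRep f K p Λ) {x : ℝ} (hx : 0 < x) (τ : ℝ) (n : ℕ) :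
    (fun j : ℤ => p n (τ + j * x)) ∈ qcPG := by
  obtain ⟨C, hC, A, hg⟩ := h.growth
  refine ⟨C * (1 + |τ| + x) ^ A, by positivity, A, fun j => ?_⟩
  rw [mul_assoc, ← mul_pow]
  refine (hg _ _).trans (mul_le_mul_of_nonneg_left ?_ hC)
  refine pow_le_pow_left₀ (by positivity) ?_ _
  have h1 := abs_add_le τ (j * x)
  rw [abs_mul, abs_of_pos hx] at h1
  nlinarith [abs_nonneg τ, abs_nonneg (j:ℝ), mul_nonneg (abs_nonneg τ) (abs_nonneg (j:ℝ))]

lemma qc_inspan {f : TemperedDistR} {K : ℕ} {p : ℕ → ℝ → ℂ} {Λ : Set ℝ} {η : ℝ} (hs : qcSep η Λ) (h : qcRep f K p Λ)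
    {x : ℝ} (hx : 0 < x) {N : ℕ} (c : Fin N → ℂ) (hc : c ≠ 0)
    (hrec : ∀ (n : ℕ) (z : ℝ), ∑ i, c i * p n (z - (i:ℕ) * x) = 0) :
    (fun φ : qcCp => f φ.1) ∈ Submodule.span ℂ (qcGens x) := by
  classical
  have hrec' : ∀ (τ : ℝ) (n : ℕ) (j : ℤ), ∑ i, c i * (fun j : ℤ => p n (τ + j * x)) (j - (i:ℕ)) = 0 := by
    intro τ n j
    rw [← hrec n (τ + j * x)]
    refine Finset.sum_congr rfl fun i _ => ?_
    congr 2
    push_cast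
    ring
  have hEx : ∀ τ n, (fun j : ℤ => p n (τ + j * x)) ∈ qcEx := fun τ n =>
    qc_recur' c hc _ (qc_growth_u h hx τ n) (hrec' τ n)
  let T : Set ℝ := {τ | τ ∈ Set.Ico 0 x ∧ ∃ n, ∃ j : ℤ, p n (τ + j * x) ≠ 0}
  have hT : T.Finite := by
    have hfin := ((qc_fin_of_sep hs 0 ((N + 1) * x)).prod (Set.finite_Icc (0:ℤ) N)).image (fun a : ℝ × ℤ => a.1 - a.2 * x)
    refine hfin.subset ?_
    rintro τ ⟨hτ, n, j, hj⟩
    have : ∃ j : ℤ, 0 ≤ j ∧ j < N ∧ p n (τ + j * x) ≠ 0 := by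
      by_contra hcon
      push Not at hcon
      have := qc_propag c hc _ (hrec' τ n) hcon
      exact hj (congrFun this j)
    obtain ⟨i, hi0, hiN, hi⟩ := this
    refine ⟨(τ + i * x, i), ⟨⟨h.supp _ _ hi, ?_, ?_⟩, hi0, hiN.le⟩, by simp⟩
    · have : (0:ℝ) ≤ i := by exact_mod_cast hi0
      have := hτ.1
      simp only
      positivity
    · have h1 : (i:ℝ) ≤ N := by exact_mod_cast hiN.le
      have := hτ.2
      simp only
      nlinarith
  have : Fintype T := hT.fintype
  let g : T × ℤ → ℝ := fun a => a.1 + a.2 * x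
  have hfl : ∀ a : T × ℤ, ⌊g a / x⌋ = a.2 := by
    rintro ⟨⟨τ, hτ, hτ'⟩, j⟩
    simp only [g]
    rw [add_div, mul_div_cancel_right₀ _ hx.ne', Int.floor_add_intCast]
    have : ⌊τ / x⌋ = 0 := by
      rw [Int.floor_eq_zero_iff]
      exact ⟨div_nonneg hτ.1 hx.le, (div_lt_one hx).2 hτ.2⟩
    rw [this, zero_add]
  have hg : Function.Injective g := by
    intro a b hab
    have h1 : a.2 = b.2 := by rw [← hfl a, ← hfl b, hab]
    have h2 : (a.1:ℝ) = b.1 := by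
      simp only [g, h1] at hab
      linarith
    exact Prod.ext (Subtype.ext h2) h1
  have heq : (fun φ : qcCp => f φ.1) = ∑ τ : T, ∑ n ∈ Finset.range (K + 1), qcL hx (τ:ℝ) n (fun j : ℤ => p n (τ + j * x)) := by
    ext φ
    have h1 := h.sum φ.1
    rw [← hg.hasSum_iff] at h1
    · have h2 : ∀ τ : T, HasSum (fun j : ℤ => ((fun x : ℝ => ∑ n ∈ Finset.range (K + 1), p n x * iteratedDeriv n (⇑φ.1) x) ∘ g) (τ, j))
          (∑ n ∈ Finset.range (K + 1), qcL hx (τ:ℝ) n (fun j : ℤ => p n (τ + j * x)) φ) := by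
        intro τ
        exact hasSum_sum fun n _ => (qc_summ φ hx (τ:ℝ) n (fun j : ℤ => p n (τ + j * x))).hasSum
      have h3 := h1.prod_fiberwise h2
      rw [h3.unique (hasSum_fintype _)]
      simp only [Finset.sum_apply]
    · intro y hy
      refine Finset.sum_eq_zero fun n _ => ?_
      by_cases hp : p n y = 0
      · rw [hp, zero_mul]
      exfalso
      apply hy
      have hfr := Int.floor_add_fract (y / x)
      have e1 : x * Int.fract (y / x) + (⌊y / x⌋ : ℝ) * x = y := by
        have : y = (y / x) * x := by field_simp
        conv_rhs => rw [this, ← hfr]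
        ring
      refine ⟨(⟨x * Int.fract (y / x), ⟨?_, ?_⟩, n, ⌊y / x⌋, ?_⟩, ⌊y / x⌋), ?_⟩
      · exact mul_nonneg hx.le (Int.fract_nonneg _)
      · have := Int.fract_lt_one (y / x)
        nlinarith
      · rw [e1]; exact hp
      · exact e1
  rw [heq]
  exact Submodule.sum_mem _ fun τ _ => Submodule.sum_mem _ fun n _ => qcL_mem hx _ _ _ (hEx _ _)

lemma qc_restrict {f : TemperedDistR} {K : ℕ} {p : ℕ → ℝ → ℂ} {Λ : Set ℝ} (h : qcRep f K p Λ) :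
    qcRep f K p {x | ∃ n, p n x ≠ 0} :=
  ⟨fun n x hx => ⟨n, hx⟩, h.top, h.growth, h.sum⟩

lemma qc_sepr {f : TemperedDistR} {K : ℕ} {p : ℕ → ℝ → ℂ} {Λ : Set ℝ} {η : ℝ} (hs : qcSep η Λ) (h : qcRep f K p Λ) :
    qcSep η {x | ∃ n, p n x ≠ 0} :=
  ⟨hs.1, fun _ ⟨n, hn⟩ _ ⟨m, hm⟩ => hs.2 _ (h.supp n _ hn) _ (h.supp m _ hm)⟩

lemma qc_ud {A : Set ℝ} (h : UniformlyDiscreteR A) : ∃ η, qcSep η A := by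
  obtain ⟨η, h0, h⟩ := h
  exact ⟨η, h0, fun x hx y hy hxy => by rw [← Real.dist_eq]; exact h x hx y hy hxy⟩

lemma qc_final (f : TemperedDistR) 
    (hΛ : UniformlyDiscreteR (tdSupportR f))
    (hΓ : UniformlyDiscreteR (tdSupportR (fourierTDR f))) :
    ∃ α : ℝ, 0 < α ∧ (fun φ : qcCp => f φ.1) ∈ Submodule.span ℂ (qcGens α) := by
  obtain ⟨η, hs⟩ := qc_ud hΛ
  obtain ⟨η', hs'⟩ := qc_ud hΓ
  obtain ⟨K, p, hp⟩ := qc_structure f hs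
  obtain ⟨M, q, hq⟩ := qc_structure _ hs'
  by_cases hne : {x | ∃ n, p n x ≠ 0}.Nonempty
  · obtain ⟨x, hx, N, c, hc, hrec⟩ := qc_relation (qc_sepr hs hp) (qc_restrict hp) (qc_sepr hs' hq) (qc_restrict hq)
      (fun _ h => h) (fun _ h => h) hne
    exact ⟨x, hx, qc_inspan hs hp hx c hc hrec⟩
  · refine ⟨1, one_pos, ?_⟩
    have hz : ∀ n x, p n x = 0 := fun n x => by
      by_contra h0
      exact hne ⟨x, n, h0⟩
    have : (fun φ : qcCp => f φ.1) = 0 := by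
      ext φ
      have h1 := hp.sum φ.1
      simp only [hz, zero_mul, Finset.sum_const_zero] at h1
      exact h1.unique hasSum_zero
    rw [this]
    exact Submodule.zero_mem _

lemma qc_concl (f : TemperedDistR) 
    (hΛ : UniformlyDiscreteR (tdSupportR f))
    (hΓ : UniformlyDiscreteR (tdSupportR (fourierTDR f))) :
    ∃ α : ℝ, 0 < α ∧
      ∃ (Q : ℕ) (τ w : Fin Q → ℝ) (l n : Fin Q → ℕ) (cc : Fin Q → ℂ),
        ∀ φ : SchwartzMap ℝ ℂ, HasCompactSupport (⇑φ) →
          f φ = ∑ i, cc i * ∑' lam : {y : ℝ // ∃ m : ℤ, y = α * m},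
            (((lam : ℝ) ^ (l i) : ℝ) : ℂ) * e2piR (lam : ℝ) (w i) *
              ((-1 : ℂ) ^ (n i) * iteratedDeriv (n i) (⇑φ) ((lam : ℝ) + τ i)) := by
  obtain ⟨α, hα, h⟩ := qc_final f hΛ hΓ
  obtain ⟨Q, cc, g, hg⟩ := Submodule.mem_span_set'.1 h
  choose a ha using fun i => (g i).2
  refine ⟨α, hα, Q, fun i => (a i).1.1, fun i => (a i).1.2, fun i => (a i).2.1, fun i => (a i).2.2, cc, fun φ hφ => ?_⟩
  let ψ : qcCp := ⟨φ, hφ⟩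
  have h1 : (∑ i, cc i • (g i : qcCp → ℂ)) ψ = f φ := congrFun hg ψ
  rw [Finset.sum_apply] at h1
  refine h1.symm.trans (Finset.sum_congr rfl fun i _ => ?_)
  rw [Pi.smul_apply, smul_eq_mul, ← ha i]
  rfl

end qcsec

/-- (Theorem 3, Lev–Reti.) Let
`f = Σ_{λ∈Λ} Σ_n p_n(λ) δ_λ^{(n)}` be a tempered distribution on `ℝ` whose
support `Λ` and spectrum `Γ` are uniformly discrete. Then there are a lattice
`L = αℤ`, a finite set of quadruples `(τ, ω, l, n)` and complex numbers
`c(τ,ω,l,n)` with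
`f = Σ_{(τ,ω,l,n)} c(τ,ω,l,n) Σ_{λ∈L} λ^l e^{2πiλω} δ_{λ+τ}^{(n)}`. -/
theorem statement16 (f : TemperedDistR) (K : ℕ) (p : ℕ → ℝ → ℂ)
    (hp0 : ∀ n > K, ∀ x, p n x = 0)
    (hsupp : ∀ n x, p n x ≠ 0 → x ∈ tdSupportR f)
    (hrep : ∀ φ : SchwartzMap ℝ ℂ, HasCompactSupport (⇑φ) →
      f φ = ∑' x : ℝ, ∑ n ∈ Finset.range (K + 1),
        p n x * ((-1 : ℂ) ^ n * iteratedDeriv n (⇑φ) x))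
    (hΛ : UniformlyDiscreteR (tdSupportR f))
    (hΓ : UniformlyDiscreteR (tdSupportR (fourierTDR f))) :
    ∃ α : ℝ, 0 < α ∧
      ∃ (Q : ℕ) (τ w : Fin Q → ℝ) (l n : Fin Q → ℕ) (cc : Fin Q → ℂ),
        ∀ φ : SchwartzMap ℝ ℂ, HasCompactSupport (⇑φ) →
          f φ = ∑ i, cc i * ∑' lam : {y : ℝ // ∃ m : ℤ, y = α * m},
            (((lam : ℝ) ^ (l i) : ℝ) : ℂ) * e2piR (lam : ℝ) (w i) *
              ((-1 : ℂ) ^ (n i) * iteratedDeriv (n i) (⇑φ) ((lam : ℝ) + τ i)) := by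
  exact qc_concl f hΛ hΓ
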